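/- Let Z be a Borel subset of B(2) ⊂ ℝ⁴ admitting a taming function I (defined for x ∈ Z, 0 < r ≤ 256) with upper bound Λ = sup I, and set β = 1/10. Then there exist constants K₁ > 1, β̄ ∈ (0, 1/100], and δ > 0 such that for every ball B_x(r) ⊆ B(2) and every s ∈ (0,r), there exists a countable family of balls S = {B_{x_i}(r_i)} covering Z ∩ B_x(r) such that: (1) r_i ≥ βs for every i; (2) for every i, either r_i ≤ s, or the set D_δ(r_i) ∩ B_{x_i}(r_i), where D_δ(t) = B(1) ∩ {z ∈ Z : I(z, βt/2) ≥ Λ − δ}, is contained in the 2β̄r_i-neighborhood of some 1-dimensional affine subspace of ℝ⁴; (3) Σ_i r_i² ≤ K₁ r². -/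

import Mathlib

open Metric MeasureTheory
open scoped RealInnerProductSpace

noncomputable section

abbrev E4 := EuclideanSpace ℝ (Fin 4)

/-- `D_μ²(x,r)`: the infimum over 2-dimensional affine subspaces `L ⊆ ℝ⁴` of
`r⁻⁴ ∫_{B_x(r)} dist(y,L)² dμ(y)`. -/
def Dmu2 (μ : Measure E4) (x : E4) (r : ℝ) : ℝ :=
  sInf { s : ℝ | ∃ L : AffineSubspace ℝ E4, (L : Set E4).Nonempty ∧
    Module.finrank ℝ L.direction = 2 ∧
    s = r ^ (-4 : ℤ) * ∫ y in ball x r, (Metric.infDist y (L : Set E4)) ^ 2 ∂μ }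

/-- `I` is a taming function for the Borel set `Z ⊆ B(R)`, with upper bound `Λ`,
pinching function `epsFn` and Reifenberg constant `C`. -/
def IsTamingFunctionWith (R : ℝ) (Z : Set E4) (I : E4 → ℝ → ℝ)
    (Λ : ℝ) (epsFn : ℝ → ℝ → ℝ → ℝ) (C : ℝ) : Prop :=
  -- (1) nonnegative, bounded (by Λ), continuous, nondecreasing in r
  (∀ x ∈ Z, ∀ r ∈ Set.Ioc (0:ℝ) (128 * R), 0 ≤ I x r ∧ I x r ≤ Λ) ∧
  ContinuousOn (fun p : E4 × ℝ => I p.1 p.2) (Z ×ˢ Set.Ioc (0:ℝ) (128 * R)) ∧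
  (∀ x ∈ Z, ∀ r₁ ∈ Set.Ioc (0:ℝ) (128 * R), ∀ r₂ ∈ Set.Ioc (0:ℝ) (128 * R),
    r₁ ≤ r₂ → I x r₁ ≤ I x r₂) ∧
  -- (2) the pinching property, with pinching function epsFn
  (∀ β ∈ Set.Ioo (0:ℝ) 1, ∀ β' ∈ Set.Ioo (0:ℝ) 1, ∀ τ > (0:ℝ),
    0 < epsFn β β' τ ∧
    ∀ x ∈ ball (0:E4) R, ∀ r ∈ Set.Ioc (0:ℝ) R, ∀ p : Fin 3 → E4,
      (∀ i, p i ∈ Z ∩ closedBall x r) →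
      (∀ j, β' * r ≤ Metric.infDist (p j)
        ((affineSpan ℝ (p '' ({j}ᶜ)) : AffineSubspace ℝ E4) : Set E4)) →
      (∀ i, I (p i) (2 * r) - I (p i) (β * r / 2) < epsFn β β' τ) →
      ∀ y ∈ Z ∩ closedBall x r, ∀ y' ∈ Z ∩ closedBall x r,
        |I y (β * r / 2) - I y' (β * r / 2)| < τ) ∧
  -- (3) the Reifenberg condition with constant C
  (0 < C ∧ ∀ μ : Measure E4, IsFiniteMeasure μ → μ Zᶜ = 0 →
    ∀ x ∈ closedBall (0:E4) (2 * R), ∀ r ∈ Set.Ioc (0:ℝ) (2 * R),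
      Dmu2 μ x r ≤ C / r ^ 2 * ∫ z in ball x r, (I z (32 * r) - I z (2 * r)) ∂μ)


/-! ### Planes and projections -/

/-- A 2-dimensional affine plane given by a base point and a direction. -/
structure Pl where
  c : E4
  V : Submodule ℝ E4
  dim : Module.finrank ℝ V = 2

def Pl.pr (L : Pl) : E4 →L[ℝ] E4 := L.V.starProjection

/-- displacement from `y` to its projection on the plane -/
def Pl.A (L : Pl) (y : E4) : E4 := L.pr (y - L.c) - (y - L.c)

lemma Pl.pr_mem (L : Pl) (v : E4) : L.pr v ∈ L.V := Submodule.starProjection_apply_mem _ _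

lemma Pl.pr_of_mem (L : Pl) {v : E4} (h : v ∈ L.V) : L.pr v = v :=
  Submodule.starProjection_eq_self_iff.2 h

lemma Pl.pr_pr (L : Pl) (v : E4) : L.pr (L.pr v) = L.pr v := L.pr_of_mem (L.pr_mem v)

lemma Pl.norm_pr_le (L : Pl) (v : E4) : ‖L.pr v‖ ≤ ‖v‖ :=
  Submodule.norm_starProjection_apply_le _ _

lemma Pl.symm (L : Pl) (u v : E4) : inner ℝ (L.pr u) v = inner ℝ u (L.pr v) :=
  Submodule.inner_starProjection_left_eq_right _ _ _

lemma Pl.pyth (L : Pl) (v : E4) : ‖v‖ ^ 2 = ‖L.pr v‖ ^ 2 + ‖v - L.pr v‖ ^ 2 := by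
  have h : inner ℝ (L.pr v) (v - L.pr v) = 0 := by
    rw [L.symm, map_sub, L.pr_pr, sub_self, inner_zero_right]
  have := norm_add_sq_real (L.pr v) (v - L.pr v)
  rw [h] at this
  simpa using this

lemma Pl.norm_sub_pr_le (L : Pl) (v : E4) : ‖v - L.pr v‖ ≤ ‖v‖ := by
  have := L.pyth v
  exact abs_le_of_sq_le_sq' (by nlinarith [sq_nonneg ‖L.pr v‖]) (norm_nonneg _) |>.2

lemma Pl.A_sub (L : Pl) (y z : E4) : L.A y - L.A z = -((y - z) - L.pr (y - z)) := by
  simp only [Pl.A, map_sub]; abel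

lemma Pl.pr_A (L : Pl) (y : E4) : L.pr (L.A y) = 0 := by
  simp only [Pl.A]; rw [map_sub, L.pr_pr, sub_self]

lemma Pl.norm_A_sub_le (L : Pl) (y z : E4) : ‖L.A y - L.A z‖ ≤ ‖y - z‖ := by
  rw [L.A_sub, norm_neg]; exact L.norm_sub_pr_le _

/-- A quantitative one sided comparison of directions. -/
lemma tilt_one (L L' : Pl) (w1 w2 : E4) (t ρ δ : ℝ) (ht : 0 < t) (hρ : 0 < ρ) (hρ1 : ρ ≤ 1)
    (hδ0 : 0 ≤ δ) (hδ : δ ≤ ρ ^ 2 / 16)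
    (h2 : ‖w2‖ ≤ 2 * t) (hw1 : ρ * t ≤ ‖w1‖)
    (hw2 : ∀ s : ℝ, ρ * t ≤ ‖w2 + s • w1‖)
    (hL1 : ‖w1 - L.pr w1‖ ≤ 2 * δ * t) (hL2 : ‖w2 - L.pr w2‖ ≤ 2 * δ * t)
    (hL1' : ‖w1 - L'.pr w1‖ ≤ 2 * δ * t) (hL2' : ‖w2 - L'.pr w2‖ ≤ 2 * δ * t) :
    ∀ v ∈ L.V, ‖v - L'.pr v‖ ≤ 32 * δ / ρ ^ 2 * ‖v‖ := by
  have key : ∀ α β : ℝ, (|α| + |β|) * (ρ ^ 2 * t) ≤ 8 * ‖α • L.pr w1 + β • L.pr w2‖ := by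
    intro α β
    set X := ‖α • w1 + β • w2‖ with hX
    have hb : |β| * (ρ * t) ≤ X := by
      by_cases hβ : β = 0
      · simp [hβ, hX]
      · have : α • w1 + β • w2 = β • (w2 + (α / β) • w1) := by
          rw [smul_add, smul_smul, mul_div_cancel₀ _ hβ]; abel
        rw [hX, this, norm_smul, Real.norm_eq_abs]
        exact mul_le_mul_of_nonneg_left (hw2 _) (abs_nonneg _)
    have ha : |α| * (ρ * t) ≤ X + |β| * (2 * t) := by
      have h1 : |α| * ‖w1‖ ≤ X + |β| * ‖w2‖ := by
        have : α • w1 = (α • w1 + β • w2) - β • w2 := by abel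
        calc |α| * ‖w1‖ = ‖α • w1‖ := by rw [norm_smul, Real.norm_eq_abs]
          _ ≤ X + ‖β • w2‖ := by rw [this]; exact norm_sub_le _ _
          _ = _ := by rw [norm_smul, Real.norm_eq_abs]
      have := mul_le_mul_of_nonneg_left hw1 (abs_nonneg α)
      have := mul_le_mul_of_nonneg_left h2 (abs_nonneg β)
      linarith
    have hab : (|α| + |β|) * (ρ ^ 2 * t) ≤ 4 * X := by
      have hX0 : 0 ≤ X := norm_nonneg _
      have e1 : |α| * (ρ ^ 2 * t) ≤ ρ * X + 2 * X := by
        have := mul_le_mul_of_nonneg_left ha hρ.le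
        nlinarith
      have e2 : |β| * (ρ ^ 2 * t) ≤ ρ * X := by
        have := mul_le_mul_of_nonneg_left hb hρ.le
        nlinarith
      nlinarith
    have hXv : X ≤ ‖α • L.pr w1 + β • L.pr w2‖ + (|α| + |β|) * (2 * δ * t) := by
      have : α • w1 + β • w2 = (α • L.pr w1 + β • L.pr w2) +
          (α • (w1 - L.pr w1) + β • (w2 - L.pr w2)) := by
        simp only [smul_sub]; abel
      rw [hX, this]
      refine (norm_add_le _ _).trans ?_
      gcongr
      refine (norm_add_le _ _).trans ?_
      rw [norm_smul, norm_smul, Real.norm_eq_abs, Real.norm_eq_abs, add_mul]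
      gcongr
    have : (|α| + |β|) * (2 * δ * t) ≤ (|α| + |β|) * (ρ ^ 2 * t) / 8 := by
      have h0 : 0 ≤ |α| + |β| := by positivity
      have : 2 * δ * t ≤ ρ ^ 2 * t / 8 := by nlinarith
      calc _ ≤ (|α| + |β|) * (ρ ^ 2 * t / 8) := mul_le_mul_of_nonneg_left this h0
        _ = _ := by ring
    linarith
  have hli : LinearIndependent ℝ ![(⟨L.pr w1, L.pr_mem w1⟩ : L.V), ⟨L.pr w2, L.pr_mem w2⟩] := by
    rw [LinearIndependent.pair_iff]
    intro α β h
    have h' : α • L.pr w1 + β • L.pr w2 = 0 := by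
      have := congrArg (Subtype.val) h
      simpa using this
    have := key α β
    rw [h', norm_zero, mul_zero] at this
    have hpos : 0 < ρ ^ 2 * t := by positivity
    have h0 : |α| + |β| ≤ 0 := by
      by_contra hc
      push Not at hc
      have := mul_pos hc hpos
      linarith
    have ha := abs_nonneg α
    have hb := abs_nonneg β
    exact ⟨abs_eq_zero.1 (by linarith), abs_eq_zero.1 (by linarith)⟩
  have hsp := hli.span_eq_top_of_card_eq_finrank (by simp [L.dim])
  intro v hv
  have hvm : (⟨v, hv⟩ : L.V) ∈ Submodule.span ℝ
      (Set.range ![(⟨L.pr w1, L.pr_mem w1⟩ : L.V), ⟨L.pr w2, L.pr_mem w2⟩]) := by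
    rw [hsp]; trivial
  rw [Matrix.range_cons, Matrix.range_cons, Matrix.range_empty, Set.union_empty,
    Set.singleton_union, Submodule.mem_span_pair] at hvm
  obtain ⟨α, β, hαβ⟩ := hvm
  have hv' : α • L.pr w1 + β • L.pr w2 = v := by
    have := congrArg (Subtype.val) hαβ
    simpa using this
  have hpi : ∀ w : E4, ‖w - L.pr w‖ ≤ 2 * δ * t → ‖w - L'.pr w‖ ≤ 2 * δ * t →
      ‖L.pr w - L'.pr (L.pr w)‖ ≤ 4 * δ * t := by
    intro w h1 h2
    have : L.pr w - L'.pr (L.pr w) = (w - L'.pr w) - ((w - L.pr w) - L'.pr (w - L.pr w)) := by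
      rw [map_sub]; abel
    rw [this]
    refine (norm_sub_le _ _).trans ?_
    have := L'.norm_sub_pr_le (w - L.pr w)
    linarith
  have hk := key α β
  rw [hv'] at hk
  have : v - L'.pr v = α • (L.pr w1 - L'.pr (L.pr w1)) + β • (L.pr w2 - L'.pr (L.pr w2)) := by
    rw [← hv']; simp only [map_add, map_smul, smul_sub]; abel
  have hfin : ‖v - L'.pr v‖ ≤ (|α| + |β|) * (4 * δ * t) := by
    rw [this]
    refine (norm_add_le _ _).trans ?_
    rw [norm_smul, norm_smul, Real.norm_eq_abs, Real.norm_eq_abs, add_mul]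
    gcongr
    · exact hpi _ hL1 hL1'
    · exact hpi _ hL2 hL2'
  refine hfin.trans ?_
  rw [div_mul_eq_mul_div, le_div_iff₀ (by positivity)]
  nlinarith

lemma tilt_two (L L' : Pl) (κ : ℝ) (h : ∀ v ∈ L.V, ‖v - L'.pr v‖ ≤ κ * ‖v‖)
    (h' : ∀ v ∈ L'.V, ‖v - L.pr v‖ ≤ κ * ‖v‖) (hκ : 0 ≤ κ) (x : E4) :
    ‖L.pr x - L'.pr x‖ ≤ 2 * κ * ‖x‖ := by
  set z := x - L.pr x with hz
  have e : L.pr x - L'.pr x = (L.pr x - L'.pr (L.pr x)) - L'.pr z := by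
    rw [hz, map_sub]; abel
  have h1 : ‖L.pr x - L'.pr (L.pr x)‖ ≤ κ * ‖x‖ :=
    (h _ (L.pr_mem x)).trans (mul_le_mul_of_nonneg_left (L.norm_pr_le x) hκ)
  have hpz : L.pr z = 0 := by rw [hz, map_sub, L.pr_pr, sub_self]
  have h2 : ‖L'.pr z‖ ≤ κ * ‖z‖ := by
    have e1 : ‖L'.pr z‖ ^ 2 = inner ℝ (L'.pr z - L.pr (L'.pr z)) z := by
      rw [inner_sub_left, L.symm, hpz, inner_zero_right, sub_zero, ← real_inner_self_eq_norm_sq,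
        L'.symm, L'.pr_pr, ← L'.symm]
    have e2 := real_inner_le_norm (L'.pr z - L.pr (L'.pr z)) z
    have e3 := h' _ (L'.pr_mem z)
    rcases (norm_nonneg (L'.pr z)).eq_or_lt with h0 | h0
    · rw [← h0]; positivity
    · have := mul_le_mul_of_nonneg_right e3 (norm_nonneg z)
      have : ‖L'.pr z‖ * ‖L'.pr z‖ ≤ ‖L'.pr z‖ * (κ * ‖z‖) := by nlinarith
      exact le_of_mul_le_mul_left this h0
  have h3 := L.norm_sub_pr_le x
  rw [e]
  refine (norm_sub_le _ _).trans ?_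
  have := mul_le_mul_of_nonneg_left h3 hκ
  linarith

/-- Two planes close to three well spread points are close. -/
lemma tilt_pts (L L' : Pl) (a q0 q1 q2 : E4) (t ρ δ : ℝ) (ht : 0 < t) (hρ : 0 < ρ) (hρ1 : ρ ≤ 1)
    (hδ0 : 0 ≤ δ) (hδ : δ ≤ ρ ^ 2 / 16)
    (h0 : ‖q0 - a‖ ≤ t) (h2 : ‖q2 - a‖ ≤ t) (hw1 : ρ * t ≤ ‖q1 - q0‖)
    (hw2 : ∀ s : ℝ, ρ * t ≤ ‖(q2 - q0) + s • (q1 - q0)‖)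
    (hL0 : ‖L.A q0‖ ≤ δ * t) (hL1 : ‖L.A q1‖ ≤ δ * t) (hL2 : ‖L.A q2‖ ≤ δ * t)
    (hL0' : ‖L'.A q0‖ ≤ δ * t) (hL1' : ‖L'.A q1‖ ≤ δ * t) (hL2' : ‖L'.A q2‖ ≤ δ * t) :
    (∀ v, ‖L.pr v - L'.pr v‖ ≤ 1400 / ρ ^ 2 * δ * ‖v‖) ∧
    ∀ y, ‖y - a‖ ≤ 20 * t → ‖L.A y - L'.A y‖ ≤ 1400 / ρ ^ 2 * δ * t := by
  have hd : ∀ (M : Pl) (q : E4), ‖M.A q0‖ ≤ δ * t → ‖M.A q‖ ≤ δ * t →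
      ‖(q - q0) - M.pr (q - q0)‖ ≤ 2 * δ * t := by
    intro M q h1 h2
    rw [← norm_neg, ← M.A_sub]
    exact (norm_sub_le _ _).trans (by linarith)
  have hq2 : ‖q2 - q0‖ ≤ 2 * t := by
    have : q2 - q0 = (q2 - a) - (q0 - a) := by abel
    rw [this]; exact (norm_sub_le _ _).trans (by linarith)
  have a1 := tilt_one L L' _ _ t ρ δ ht hρ hρ1 hδ0 hδ hq2 hw1 hw2 (hd L q1 hL0 hL1)
    (hd L q2 hL0 hL2) (hd L' q1 hL0' hL1') (hd L' q2 hL0' hL2')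
  have a2 := tilt_one L' L _ _ t ρ δ ht hρ hρ1 hδ0 hδ hq2 hw1 hw2 (hd L' q1 hL0' hL1')
    (hd L' q2 hL0' hL2') (hd L q1 hL0 hL1) (hd L q2 hL0 hL2)
  have hpr := tilt_two L L' _ a1 a2 (by positivity)
  have hρ2 : 0 < ρ ^ 2 := by positivity
  have hρ3 : ρ ^ 2 ≤ 1 := by nlinarith
  set κ := δ / ρ ^ 2 with hκ
  have hκ0 : 0 ≤ κ := by positivity
  have hδκ : δ ≤ κ := by rw [hκ, le_div_iff₀ hρ2]; nlinarith
  have e1 : 32 * δ / ρ ^ 2 = 32 * κ := by rw [hκ]; ring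
  have e2 : 1400 / ρ ^ 2 * δ = 1400 * κ := by rw [hκ]; ring
  rw [e1] at hpr
  rw [e2]
  refine ⟨fun v => (hpr v).trans ?_, fun y hy => ?_⟩
  · have := norm_nonneg v
    nlinarith [mul_nonneg hκ0 this]
  · have : L.A y - L'.A y = (L.pr (y - q0) - L'.pr (y - q0)) + (L.A q0 - L'.A q0) := by
      have x1 := L.A_sub y q0
      have x2 := L'.A_sub y q0
      rw [sub_eq_iff_eq_add] at x1 x2
      rw [x1, x2]; abel
    have hy' : ‖y - q0‖ ≤ 21 * t := by
      have : y - q0 = (y - a) - (q0 - a) := by abel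
      rw [this]; exact (norm_sub_le _ _).trans (by linarith)
    have z1 := hpr (y - q0)
    have z2 := norm_sub_le (L.A q0) (L'.A q0)
    rw [this]
    refine (norm_add_le _ _).trans ?_
    have z3 := mul_le_mul_of_nonneg_left hy' hκ0
    have z4 := mul_le_mul_of_nonneg_right hδκ ht.le
    nlinarith [mul_nonneg hκ0 ht.le]

/-! ### Combinatorial lemmas -/

lemma noncol (Q : Finset E4) (m : E4 → ℝ) (a : E4) (t ρ c K : ℝ) (ht : 0 < t) (hρ : 0 < ρ)
    (hρ1 : ρ ≤ 1) (hc : 0 < c) (hK : 0 ≤ K)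
    (hQ : ∀ q ∈ Q, ‖q - a‖ ≤ t) (hm : ∀ q ∈ Q, 0 ≤ m q)
    (hmass : c * t ^ 2 / 2 ≤ ∑ q ∈ Q, m q)
    (hball : ∀ q ∈ Q, ∑ q' ∈ Q with ‖q' - q‖ ≤ 4 * ρ * t, m q' ≤ K * (ρ * t) ^ 2)
    (hcK : 9 * K * ρ < c / 2) :
    ∃ q0 ∈ Q, ∃ q1 ∈ Q, ∃ q2 ∈ Q, ρ * t ≤ ‖q1 - q0‖ ∧
      ∀ s : ℝ, ρ * t ≤ ‖(q2 - q0) + s • (q1 - q0)‖ := by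
  have hρt : 0 < ρ * t := by positivity
  have hne : Q.Nonempty := by
    by_contra h
    rw [Finset.not_nonempty_iff_eq_empty] at h
    rw [h, Finset.sum_empty] at hmass
    have : 0 < c * t ^ 2 / 2 := by positivity
    linarith
  obtain ⟨q0, hq0⟩ := hne
  have hbig : 9 * K * ρ * t ^ 2 < c / 2 * t ^ 2 := by
    have : 0 < t ^ 2 := by positivity
    nlinarith
  have h1 : ∃ q1 ∈ Q, ρ * t ≤ ‖q1 - q0‖ := by
    by_contra hcon
    push Not at hcon
    have e : (Q.filter fun q' => ‖q' - q0‖ ≤ 4 * ρ * t) = Q := by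
      apply Finset.filter_true_of_mem
      intro q hq
      have := hcon q hq
      nlinarith
    have := hball q0 hq0
    rw [e] at this
    have h2 : K * (ρ * t) ^ 2 ≤ 9 * K * ρ * t ^ 2 := by
      have : ρ ^ 2 ≤ 9 * ρ := by nlinarith
      have h3 : 0 ≤ K * t ^ 2 := by positivity
      nlinarith
    linarith
  obtain ⟨q1, hq1, hq01⟩ := h1
  refine ⟨q0, hq0, q1, hq1, ?_⟩
  by_contra hcon
  push Not at hcon
  have hcon' : ∀ q2 ∈ Q, ∃ s : ℝ, ‖(q2 - q0) + s • (q1 - q0)‖ < ρ * t := fun q2 h2 =>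
    hcon q2 h2 hq01
  choose! s hs using hcon'
  set w := q1 - q0 with hw
  let g : E4 → ℤ := fun q => ⌊s q * ‖w‖ / (ρ * t)⌋
  set n : ℤ := ⌈3 / ρ⌉ with hn
  have hg : ∀ q ∈ Q, g q ∈ Finset.Icc (-n) n := by
    intro q hq
    have h1 := hs q hq
    have h2 : ‖q - q0‖ ≤ 2 * t := by
      have : q - q0 = (q - a) - (q0 - a) := by abel
      rw [this]; exact (norm_sub_le _ _).trans (by linarith [hQ q hq, hQ q0 hq0])
    have h3 : ‖s q • w‖ ≤ 3 * t := by
      have : s q • w = ((q - q0) + s q • w) - (q - q0) := by abel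
      rw [this]
      refine (norm_sub_le _ _).trans ?_
      nlinarith
    rw [norm_smul, Real.norm_eq_abs] at h3
    have h4 : |s q * ‖w‖ / (ρ * t)| ≤ 3 / ρ := by
      rw [abs_div, abs_mul, abs_of_nonneg (norm_nonneg w), abs_of_pos hρt, div_le_div_iff₀ hρt hρ]
      nlinarith
    rw [abs_le] at h4
    have h5 : (3 / ρ : ℝ) ≤ n := Int.le_ceil _
    rw [Finset.mem_Icc]
    constructor
    · apply Int.le_floor.2
      push_cast; linarith
    · have : (g q : ℝ) ≤ n := (Int.floor_le _).trans (by linarith)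
      exact_mod_cast this
  have hsum := Finset.sum_fiberwise_of_maps_to hg m
  have hfib : ∀ z ∈ Finset.Icc (-n) n, ∑ q ∈ Q with g q = z, m q ≤ K * (ρ * t) ^ 2 := by
    intro z _
    by_cases hz : (Q.filter fun q => g q = z).Nonempty
    · obtain ⟨q, hq⟩ := hz
      rw [Finset.mem_filter] at hq
      refine le_trans (Finset.sum_le_sum_of_subset_of_nonneg ?_ ?_) (hball q hq.1)
      · intro q' hq'
        rw [Finset.mem_filter] at hq' ⊢
        refine ⟨hq'.1, ?_⟩
        have hgg : g q' = g q := by rw [hq'.2, hq.2]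
        have h1 := Int.abs_sub_lt_one_of_floor_eq_floor hgg
        rw [← sub_div, abs_div, abs_of_pos hρt, div_lt_one hρt, ← sub_mul, abs_mul,
          abs_of_nonneg (norm_nonneg w)] at h1
        have h2 : q' - q = ((q' - q0) + s q' • w) - ((q - q0) + s q • w) - (s q' - s q) • w := by
          rw [sub_smul]; abel
        rw [h2]
        refine (norm_sub_le _ _).trans ?_
        rw [norm_smul, Real.norm_eq_abs]
        have h3 := norm_sub_le ((q' - q0) + s q' • w) ((q - q0) + s q • w)
        have h4 := hs q' hq'.1
        have h5 := hs q hq.1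
        nlinarith
      · intro q' hq' _
        exact hm q' (Finset.mem_filter.1 hq').1
    · rw [Finset.not_nonempty_iff_eq_empty] at hz
      rw [hz, Finset.sum_empty]; positivity
  have hle := Finset.sum_le_card_nsmul _ _ _ hfib
  rw [hsum] at hle
  have hn1 : (n : ℝ) < 3 / ρ + 1 := Int.ceil_lt_add_one _
  have hn0 : 0 ≤ n := by
    have : (0:ℝ) ≤ n := le_trans (by positivity) (Int.le_ceil (3 / ρ))
    exact_mod_cast this
  have hcard : ((Finset.Icc (-n) n).card : ℝ) ≤ 9 / ρ := by
    rw [Int.card_Icc]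
    have h : ((n + 1 - -n).toNat : ℝ) = 2 * n + 1 := by
      have : ((n + 1 - -n).toNat : ℤ) = 2 * n + 1 := by
        rw [Int.toNat_of_nonneg (by linarith)]; ring
      exact_mod_cast this
    rw [h]
    have : (3:ℝ) ≤ 3 / ρ := by rw [le_div_iff₀ hρ]; linarith
    have e : 9 / ρ = 3 * (3 / ρ) := by ring
    rw [e]; linarith
  rw [nsmul_eq_mul] at hle
  have : ((Finset.Icc (-n) n).card : ℝ) * (K * (ρ * t) ^ 2) ≤ 9 / ρ * (K * (ρ * t) ^ 2) :=
    mul_le_mul_of_nonneg_right hcard (by positivity)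
  have e : 9 / ρ * (K * (ρ * t) ^ 2) = 9 * K * ρ * t ^ 2 := by field_simp
  linarith

/-- Two planes which are `L²`-close to a spread-out measure are close. -/
lemma tilt_mass (L L' : Pl) (Q : Finset E4) (m : E4 → ℝ) (a : E4) (t ρ c K M ε : ℝ) (ht : 0 < t)
    (hρ : 0 < ρ) (hρ1 : ρ ≤ 1) (hc : 0 < c) (hK : 0 ≤ K) (hM : 0 < M) (hMc : 8 ≤ M ^ 2 * c)
    (hε : 0 < ε) (hεs : M * ε ≤ ρ ^ 2 / 16)
    (hQ : ∀ q ∈ Q, ‖q - a‖ ≤ t) (hm : ∀ q ∈ Q, 0 ≤ m q)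
    (hmass : c * t ^ 2 ≤ ∑ q ∈ Q, m q)
    (hball : ∀ q ∈ Q, ∑ q' ∈ Q with ‖q' - q‖ ≤ 4 * ρ * t, m q' ≤ K * (ρ * t) ^ 2)
    (hcK : 9 * K * ρ < c / 2)
    (hJ : ∑ q ∈ Q, m q * ‖L.A q‖ ^ 2 ≤ ε ^ 2 * t ^ 4)
    (hJ' : ∑ q ∈ Q, m q * ‖L'.A q‖ ^ 2 ≤ ε ^ 2 * t ^ 4) :
    (∀ v, ‖L.pr v - L'.pr v‖ ≤ 1400 / ρ ^ 2 * M * ε * ‖v‖) ∧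
    ∀ y, ‖y - a‖ ≤ 20 * t → ‖L.A y - L'.A y‖ ≤ 1400 / ρ ^ 2 * M * ε * t := by
  classical
  set δ := M * ε with hδ
  have hδ0 : 0 < δ := by positivity
  let p : E4 → Prop := fun q => ‖L.A q‖ ≤ δ * t ∧ ‖L'.A q‖ ≤ δ * t
  have hsplit := Finset.sum_filter_add_sum_filter_not Q p m
  have hbad : (∑ q ∈ Q with ¬ p q, m q) * (δ * t) ^ 2 ≤ 2 * (ε ^ 2 * t ^ 4) := by
    rw [Finset.sum_mul]
    have : ∑ q ∈ Q with ¬ p q, m q * (δ * t) ^ 2 ≤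
        ∑ q ∈ Q, (m q * ‖L.A q‖ ^ 2 + m q * ‖L'.A q‖ ^ 2) := by
      refine le_trans (Finset.sum_le_sum (g := fun q => m q * ‖L.A q‖ ^ 2 + m q * ‖L'.A q‖ ^ 2)
        ?_) (Finset.sum_le_sum_of_subset_of_nonneg (Finset.filter_subset _ _) ?_)
      · intro q hq
        rw [Finset.mem_filter] at hq
        have hmq := hm q hq.1
        rw [← mul_add]
        refine mul_le_mul_of_nonneg_left ?_ hmq
        have hδt : 0 < δ * t := by positivity
        by_cases h1 : ‖L.A q‖ ≤ δ * t
        · have h2 : δ * t < ‖L'.A q‖ := by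
            by_contra h2
            exact hq.2 ⟨h1, not_lt.1 h2⟩
          nlinarith [sq_nonneg ‖L.A q‖]
        · push Not at h1
          nlinarith [sq_nonneg ‖L'.A q‖]
      · intro q hq _
        have := hm q hq
        positivity
    rw [Finset.sum_add_distrib] at this
    linarith
  have hbad2 : ∑ q ∈ Q with ¬ p q, m q ≤ c * t ^ 2 / 4 := by
    have h1 : 8 * (ε ^ 2 * t ^ 2) ≤ c * (δ * t) ^ 2 := by
      have : 0 ≤ ε ^ 2 * t ^ 2 := by positivity
      have e : c * (δ * t) ^ 2 = (M ^ 2 * c) * (ε ^ 2 * t ^ 2) := by rw [hδ]; ring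
      rw [e]; exact mul_le_mul_of_nonneg_right hMc this
    have h2 : (∑ q ∈ Q with ¬ p q, m q) * (δ * t) ^ 2 ≤ (c * t ^ 2 / 4) * (δ * t) ^ 2 := by
      have : 0 ≤ t ^ 2 := by positivity
      nlinarith [mul_le_mul_of_nonneg_right h1 this]
    exact le_of_mul_le_mul_right h2 (by positivity)
  have hm' : c * t ^ 2 / 2 ≤ ∑ q ∈ Q with p q, m q := by
    have : 0 < c * t ^ 2 := by positivity
    linarith
  obtain ⟨q0, h0, q1, h1, q2, h2, hd1, hd2⟩ := noncol (Q.filter p) m a t ρ c K ht hρ hρ1 hc hK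
    (fun q hq => hQ q (Finset.mem_filter.1 hq).1) (fun q hq => hm q (Finset.mem_filter.1 hq).1)
    hm' (fun q hq => by
      refine le_trans (Finset.sum_le_sum_of_subset_of_nonneg ?_ ?_)
        (hball q (Finset.mem_filter.1 hq).1)
      · exact Finset.filter_subset_filter _ (Finset.filter_subset _ _)
      · intro i hi _; exact hm i (Finset.mem_filter.1 hi).1) hcK
  rw [Finset.mem_filter] at h0 h1 h2
  have := tilt_pts L L' a q0 q1 q2 t ρ δ ht hρ hρ1 hδ0.le hεs (hQ _ h0.1) (hQ _ h2.1) hd1 hd2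
    h0.2.1 h1.2.1 h2.2.1 h0.2.2 h1.2.2 h2.2.2
  rw [mul_assoc _ M ε, ← hδ]
  exact this

/-- Volume packing. -/
lemma packing {F : Type*} [NormedAddCommGroup F] [NormedSpace ℝ F] [FiniteDimensional ℝ F]
    {ι : Type*} (S : Finset ι) (z : ι → F) (r : ι → ℝ) (x : F) (R : ℝ)
    (h : ∀ i ∈ S, 0 < r i ∧ dist (z i) x + r i ≤ R) (hR : 0 < R)
    (hd : ∀ i ∈ S, ∀ j ∈ S, i ≠ j → r i + r j ≤ dist (z i) (z j)) :
    ∑ i ∈ S, r i ^ (Module.finrank ℝ F) ≤ R ^ (Module.finrank ℝ F) := by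
  borelize F
  let μ : Measure F := MeasureTheory.Measure.addHaar
  have hdis : Set.PairwiseDisjoint (↑S : Set ι) (fun i => ball (z i) (r i)) := by
    intro i hi j hj hij
    exact ball_disjoint_ball (hd i hi j hj hij)
  have h1 : ∑ i ∈ S, μ (ball (z i) (r i)) ≤ μ (ball x R) := by
    rw [← measure_biUnion_finset hdis (fun i _ => measurableSet_ball)]
    apply measure_mono
    apply Set.iUnion₂_subset
    intro i hi
    apply ball_subset_ball'
    linarith [(h i hi).2]
  have h2 : ∀ i ∈ S, μ (ball (z i) (r i)) =
      ENNReal.ofReal (r i ^ (Module.finrank ℝ F)) * μ (ball 0 1) := fun i hi =>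
    Measure.addHaar_ball_of_pos μ _ (h i hi).1
  rw [Finset.sum_congr rfl h2, Measure.addHaar_ball_of_pos μ _ hR, ← Finset.sum_mul] at h1
  have h3 : μ (ball (0:F) 1) ≠ 0 := (measure_ball_pos μ _ one_pos).ne'
  have h4 : μ (ball (0:F) 1) ≠ ⊤ := measure_ball_lt_top.ne
  rw [ENNReal.mul_le_mul_iff_left h3 h4, ← ENNReal.ofReal_sum_of_nonneg] at h1
  · exact (ENNReal.ofReal_le_ofReal_iff (by positivity)).1 h1
  · intro i hi
    exact pow_nonneg (h i hi).1.le _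

/-- Greedy selection of separated points. -/
lemma greedy (n : ℕ) : ∀ (S : Set E4) (u : E4 → ℝ) (umin : ℝ), 0 < umin →
    (∀ p ∈ S, umin ≤ u p) → (u '' S).Finite →
    (∀ F : Finset E4, (↑F : Set E4) ⊆ S → (∀ p ∈ F, ∀ q ∈ F, p ≠ q → umin ≤ dist p q) →
      F.card ≤ n) →
    ∃ S' : Finset E4, (↑S' : Set E4) ⊆ S ∧
      (∀ p ∈ S', ∀ q ∈ S', p ≠ q → u p ≤ dist p q) ∧
      ∀ p ∈ S, ∃ q ∈ S', u p ≤ u q ∧ dist p q < u q := by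
  classical
  induction n with
  | zero =>
    intro S u umin h0 h1 h2 h3
    have : S = ∅ := by
      by_contra h
      obtain ⟨p, hp⟩ := Set.nonempty_iff_ne_empty.2 h
      have := h3 {p} (by simpa using hp) (by simp)
      simp at this
    refine ⟨∅, by simp, by simp, by simp [this]⟩
  | succ n ih =>
    intro S u umin h0 h1 h2 h3
    by_cases hS : S.Nonempty
    · obtain ⟨_, ⟨p, hp, rfl⟩, hmax⟩ := h2.exists_maximal (hS.image u)
      have hmax' : ∀ q ∈ S, u q ≤ u p := by
        intro q hq
        by_contra hc
        push Not at hc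
        exact absurd (hmax ⟨q, hq, rfl⟩ hc.le) (not_le.2 hc)
      have hup := h1 p hp
      obtain ⟨S', a1, a2, a3⟩ := ih (S \ ball p (u p)) u umin h0 (fun q hq => h1 q hq.1)
        (h2.subset (Set.image_mono Set.sdiff_subset)) (by
          intro F hF hsep
          have hpF : p ∉ F := by
            intro hpF
            have := (hF hpF).2
            simp at this; linarith
          have hfar : ∀ q ∈ F, umin ≤ dist q p := by
            intro q hq
            have := (hF hq).2
            simp only [mem_ball, not_lt] at this
            linarith
          have := h3 (insert p F) (by
            intro q hq
            rw [Finset.coe_insert, Set.mem_insert_iff] at hq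
            rcases hq with rfl | hq
            · exact hp
            · exact (hF hq).1) (by
            intro q hq q' hq' hne
            rw [Finset.mem_insert] at hq hq'
            rcases hq with rfl | hq <;> rcases hq' with rfl | hq'
            · exact absurd rfl hne
            · rw [dist_comm]; exact hfar q' hq'
            · exact hfar q hq
            · exact hsep q hq q' hq' hne)
          rw [Finset.card_insert_of_notMem hpF] at this
          omega)
      refine ⟨insert p S', ?_, ?_, ?_⟩
      · intro q hq
        rw [Finset.coe_insert, Set.mem_insert_iff] at hq
        rcases hq with rfl | hq
        · exact hp
        · exact (a1 hq).1
      · intro q hq q' hq' hne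
        have hfar : ∀ q ∈ S', u p ≤ dist q p := by
          intro q hq
          have := (a1 hq).2
          simpa only [mem_ball, not_lt] using this
        rw [Finset.mem_insert] at hq hq'
        rcases hq with rfl | hq <;> rcases hq' with rfl | hq'
        · exact absurd rfl hne
        · rw [dist_comm]; exact hfar q' hq'
        · exact (hmax' q (a1 hq).1).trans (hfar q hq)
        · exact a2 q hq q' hq' hne
      · intro q hq
        by_cases hb : q ∈ ball p (u p)
        · exact ⟨p, Finset.mem_insert_self _ _, hmax' q hq, hb⟩
        · obtain ⟨q', b1, b2⟩ := a3 q ⟨hq, hb⟩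
          exact ⟨q', Finset.mem_insert_of_mem b1, b2⟩
    · rw [Set.not_nonempty_iff_eq_empty] at hS
      refine ⟨∅, by simp, by simp, by simp [hS]⟩

/-! ### One smoothing step -/

lemma norm_wsum_le (Q : Finset E4) (w : E4 → ℝ) (f : E4 → E4) (b s : ℝ)
    (hs : ∑ q ∈ Q, |w q| ≤ s) (hb : 0 ≤ b) (hf : ∀ q ∈ Q, ‖f q‖ ≤ b) :
    ‖∑ q ∈ Q, w q • f q‖ ≤ s * b := by
  calc ‖∑ q ∈ Q, w q • f q‖ ≤ ∑ q ∈ Q, ‖w q • f q‖ := norm_sum_le _ _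
    _ ≤ ∑ q ∈ Q, |w q| * b := by
        apply Finset.sum_le_sum
        intro q hq
        rw [norm_smul, Real.norm_eq_abs]
        exact mul_le_mul_of_nonneg_left (hf q hq) (abs_nonneg _)
    _ = (∑ q ∈ Q, |w q|) * b := by rw [Finset.sum_mul]
    _ ≤ _ := mul_le_mul_of_nonneg_right hs hb

lemma one_step_val (Q : Finset E4) (L : E4 → Pl) (L0 : Pl) (w : E4 → ℝ) (y : E4) (η : ℝ)
    (hη : 0 ≤ η)
    (hw : ∀ q ∈ Q, 0 ≤ w q) (hs : ∑ q ∈ Q, w q = 1)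
    (hA : ∀ q ∈ Q, ‖(L q).A y - L0.A y‖ ≤ η) :
    ‖L0.A (y + ∑ q ∈ Q, w q • (L q).A y)‖ ≤ η ∧
    ‖∑ q ∈ Q, w q • (L q).A y‖ ≤ ‖L0.A y‖ + η := by
  have hs' : ∑ q ∈ Q, |w q| ≤ 1 := by
    rw [← hs]; exact le_of_eq (Finset.sum_congr rfl fun q hq => abs_of_nonneg (hw q hq))
  constructor
  · have e : L0.A (y + ∑ q ∈ Q, w q • (L q).A y) =
        ∑ q ∈ Q, w q • (-(((L q).A y - L0.A y) - L0.pr ((L q).A y - L0.A y))) := by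
      have h1 := L0.A_sub (y + ∑ q ∈ Q, w q • (L q).A y) y
      rw [add_sub_cancel_left] at h1
      have h2 : L0.A y = ∑ q ∈ Q, w q • L0.A y := by rw [← Finset.sum_smul, hs, one_smul]
      have h3 : L0.A (y + ∑ q ∈ Q, w q • (L q).A y) = L0.A y +
        -(∑ q ∈ Q, w q • (L q).A y - L0.pr (∑ q ∈ Q, w q • (L q).A y)) := by
        rw [← h1]; abel
      rw [h3]
      conv_lhs => rw [h2]
      rw [map_sum, ← Finset.sum_sub_distrib, ← Finset.sum_neg_distrib, ← Finset.sum_add_distrib]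
      refine Finset.sum_congr rfl fun q hq => ?_
      rw [map_smul, map_sub, L0.pr_A]
      module
    rw [e]
    have := norm_wsum_le Q w (fun q => -(((L q).A y - L0.A y) - L0.pr ((L q).A y - L0.A y)))
      η 1 hs' hη (fun q hq => by
        rw [norm_neg]; exact (L0.norm_sub_pr_le _).trans (hA q hq))
    simpa using this
  · have := norm_wsum_le Q w (fun q => (L q).A y) (‖L0.A y‖ + η) 1 hs' (by positivity)
      (fun q hq => by
        have := norm_add_le (L0.A y) ((L q).A y - L0.A y)
        rw [add_sub_cancel] at this
        linarith [hA q hq])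
    simpa using this

lemma one_step_diff (Q : Finset E4) (L : E4 → Pl) (L0 : Pl) (w w' : E4 → ℝ) (y y' : E4)
    (t ε e B : ℝ) (ht : 0 < t) (hε : 0 ≤ ε) (hee : ε ≤ e) (hB : 0 ≤ B)
    (hw : ∀ q ∈ Q, 0 ≤ w q) (hs : ∑ q ∈ Q, w q = 1)
    (hd : ∑ q ∈ Q, |w q - w' q| ≤ B * (‖y - y'‖ / t))
    (hp : ∀ q ∈ Q, ∀ v, ‖(L q).pr v - L0.pr v‖ ≤ ε * ‖v‖)
    (hA' : ∀ q ∈ Q, ‖(L q).A y' - L0.A y'‖ ≤ ε * t)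
    (h0 : ‖L0.A y'‖ ≤ e * t) :
    let D := y - y'
    let D' := (y + ∑ q ∈ Q, w q • (L q).A y) - (y' + ∑ q ∈ Q, w' q • (L q).A y')
    ‖D' - L0.pr D'‖ ≤ (1 + 2 * B) * e * ‖D‖ ∧
    ‖L0.pr D' - L0.pr D‖ ≤ e * ‖D - L0.pr D‖ + (1 + 2 * B) * e ^ 2 * ‖D‖ := by
  intro D D'
  have he : 0 ≤ e := hε.trans hee
  have hs' : ∑ q ∈ Q, |w q| ≤ 1 := by
    rw [← hs]; exact le_of_eq (Finset.sum_congr rfl fun q hq => abs_of_nonneg (hw q hq))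
  have hAq : ∀ q ∈ Q, ‖(L q).A y'‖ ≤ 2 * e * t := by
    intro q hq
    have := norm_add_le (L0.A y') ((L q).A y' - L0.A y')
    rw [add_sub_cancel] at this
    have := hA' q hq
    nlinarith
  have hD' : D' = ∑ q ∈ Q, w q • (L q).pr D + ∑ q ∈ Q, (w q - w' q) • (L q).A y' := by
    have h2 : D = ∑ q ∈ Q, w q • D := by rw [← Finset.sum_smul, hs, one_smul]
    have h3 : D' = D + (∑ q ∈ Q, w q • (L q).A y - ∑ q ∈ Q, w' q • (L q).A y') := by
      simp only [D, D']; abel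
    rw [h3]
    conv_lhs => rw [h2]
    rw [← Finset.sum_sub_distrib, ← Finset.sum_add_distrib, ← Finset.sum_add_distrib]
    refine Finset.sum_congr rfl fun q hq => ?_
    have h4 := (L q).A_sub y y'
    have h5 : (L q).A y = (L q).A y' + -(D - (L q).pr D) := by rw [← h4]; abel
    rw [h5]
    module
  have hN : 0 ≤ ‖D‖ := norm_nonneg _
  constructor
  · have e1 : D' - L0.pr D' = ∑ q ∈ Q, w q • ((L q).pr ((L q).pr D) - L0.pr ((L q).pr D)) +
        ∑ q ∈ Q, (w q - w' q) • ((L q).A y' - L0.pr ((L q).A y')) := by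
      rw [hD', map_add, map_sum, map_sum, add_sub_add_comm, ← Finset.sum_sub_distrib,
        ← Finset.sum_sub_distrib]
      congr 1
      · refine Finset.sum_congr rfl fun q hq => ?_
        rw [map_smul, (L q).pr_pr]; module
      · refine Finset.sum_congr rfl fun q hq => ?_
        rw [map_smul]; module
    rw [e1]
    have b1 := norm_wsum_le Q w (fun q => (L q).pr ((L q).pr D) - L0.pr ((L q).pr D))
      (ε * ‖D‖) 1 hs' (by positivity)
      (fun q hq => (hp q hq _).trans (mul_le_mul_of_nonneg_left ((L q).norm_pr_le _) hε))
    have b2 := norm_wsum_le Q (fun q => w q - w' q) (fun q => (L q).A y' - L0.pr ((L q).A y'))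
      (2 * e * t) _ hd (by positivity)
      (fun q hq => (L0.norm_sub_pr_le _).trans (hAq q hq))
    have e2 : B * (‖y - y'‖ / t) * (2 * e * t) = 2 * B * e * ‖D‖ := by
      simp only [D]; field_simp
    rw [e2] at b2
    refine (norm_add_le _ _).trans ((add_le_add b1 b2).trans ?_)
    have := mul_le_mul_of_nonneg_right hee hN
    linarith
  · have e1 : L0.pr D' - L0.pr D =
        ∑ q ∈ Q, w q • ((L q).pr (D - (L q).pr D) - L0.pr (D - (L q).pr D)) +
        ∑ q ∈ Q, (w q - w' q) • (-((L q).pr ((L q).A y') - L0.pr ((L q).A y'))) := by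
      have h2 : D = ∑ q ∈ Q, w q • D := by rw [← Finset.sum_smul, hs, one_smul]
      have h6 : L0.pr D = ∑ q ∈ Q, w q • L0.pr D := by rw [← Finset.sum_smul, hs, one_smul]
      rw [h6, hD', map_add, map_sum, map_sum, add_sub_right_comm, ← Finset.sum_sub_distrib]
      congr 1
      · refine Finset.sum_congr rfl fun q hq => ?_
        rw [map_smul, map_sub (L q).pr D, map_sub L0.pr D, (L q).pr_pr]; module
      · refine Finset.sum_congr rfl fun q hq => ?_
        rw [map_smul, (L q).pr_A]; module
    rw [e1]
    have hNq : ∀ q ∈ Q, ‖D - (L q).pr D‖ ≤ ‖D - L0.pr D‖ + ε * ‖D‖ := by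
      intro q hq
      have h7 : D - (L q).pr D = (D - L0.pr D) - ((L q).pr D - L0.pr D) := by abel
      rw [h7]
      exact (norm_sub_le _ _).trans (by linarith [hp q hq D])
    have b1 := norm_wsum_le Q w (fun q => (L q).pr (D - (L q).pr D) - L0.pr (D - (L q).pr D))
      (ε * (‖D - L0.pr D‖ + ε * ‖D‖)) 1 hs' (by positivity)
      (fun q hq => (hp q hq _).trans (mul_le_mul_of_nonneg_left (hNq q hq) hε))
    have b2 := norm_wsum_le Q (fun q => w q - w' q)
      (fun q => -((L q).pr ((L q).A y') - L0.pr ((L q).A y')))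
      (ε * (2 * e * t)) _ hd (by positivity)
      (fun q hq => by
        rw [norm_neg]
        exact (hp q hq _).trans (mul_le_mul_of_nonneg_left (hAq q hq) hε))
    have e2 : B * (‖y - y'‖ / t) * (ε * (2 * e * t)) = 2 * B * e * ‖D‖ * ε := by
      simp only [D]; field_simp
    rw [e2] at b2
    refine (norm_add_le _ _).trans ((add_le_add b1 b2).trans ?_)
    have h8 : 0 ≤ ‖D - L0.pr D‖ := norm_nonneg _
    have f1 : ε * ‖D - L0.pr D‖ ≤ e * ‖D - L0.pr D‖ := mul_le_mul_of_nonneg_right hee h8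
    have f2 : ε * (ε * ‖D‖) ≤ e * (e * ‖D‖) :=
      mul_le_mul hee (mul_le_mul_of_nonneg_right hee hN) (by positivity) he
    have f3 : 2 * B * e * ‖D‖ * ε ≤ 2 * B * e * ‖D‖ * e :=
      mul_le_mul_of_nonneg_left hee (by positivity)
    nlinarith

/-- tent function -/
def tent (s : ℝ) : ℝ := max 0 (4 - s)

lemma tent_nonneg (s : ℝ) : 0 ≤ tent s := le_max_left _ _

lemma tent_sub (s s' : ℝ) : |tent s - tent s'| ≤ |s - s'| := by
  unfold tent
  have := abs_max_sub_max_le_abs (4 - s) (4 - s') 0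
  rw [max_comm 0, max_comm 0]
  refine this.trans (le_of_eq ?_)
  rw [show 4 - s - (4 - s') = -(s - s') by ring, abs_neg]

/-- unnormalized weight -/
def phw (m : E4 → ℝ) (t : ℝ) (q y : E4) : ℝ := m q * tent (‖y - q‖ / t)

/-- normalized weight -/
def wgt (Q : Finset E4) (m : E4 → ℝ) (t : ℝ) (q y : E4) : ℝ :=
  phw m t q y / ∑ q' ∈ Q, phw m t q' y

/-- one smoothing map -/
def sig (Q : Finset E4) (m : E4 → ℝ) (t : ℝ) (L : E4 → Pl) (y : E4) : E4 :=
  y + ∑ q ∈ Q, wgt Q m t q y • (L q).A y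

lemma phw_nonneg {m : E4 → ℝ} {q : E4} (h : 0 ≤ m q) (t : ℝ) (y : E4) : 0 ≤ phw m t q y :=
  mul_nonneg h (tent_nonneg _)

lemma phw_far {m : E4 → ℝ} {t : ℝ} (ht : 0 < t) {q y a : E4} (hy : ‖y - a‖ ≤ t)
    (hq : ¬ ‖q - a‖ < 8 * t) : phw m t q y = 0 := by
  have h1 : 4 * t ≤ ‖y - q‖ := by
    have : ‖q - a‖ ≤ ‖y - a‖ + ‖y - q‖ := by
      rw [show q - a = (y - a) - (y - q) by abel]; exact norm_sub_le _ _
    linarith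
  have h2 : 4 ≤ ‖y - q‖ / t := by rwa [le_div_iff₀ ht]
  unfold phw tent
  rw [max_eq_left (by linarith), mul_zero]

lemma phw_sum_lower (Q : Finset E4) (m : E4 → ℝ) (t c : ℝ) (ht : 0 < t)
    (hm : ∀ q ∈ Q, 0 ≤ m q) (a y : E4) (hy : ‖y - a‖ ≤ t)
    (hlow : c * t ^ 2 ≤ ∑ q ∈ Q with ‖q - a‖ < t, m q) :
    2 * c * t ^ 2 ≤ ∑ q ∈ Q, phw m t q y := by
  calc 2 * c * t ^ 2 = (c * t ^ 2) * 2 := by ring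
    _ ≤ (∑ q ∈ Q with ‖q - a‖ < t, m q) * 2 := by linarith
    _ = ∑ q ∈ Q with ‖q - a‖ < t, m q * 2 := by rw [Finset.sum_mul]
    _ ≤ ∑ q ∈ Q with ‖q - a‖ < t, phw m t q y := by
        apply Finset.sum_le_sum
        intro q hq
        rw [Finset.mem_filter] at hq
        apply mul_le_mul_of_nonneg_left _ (hm q hq.1)
        refine le_trans ?_ (le_max_right _ _)
        have : ‖y - q‖ ≤ ‖y - a‖ + ‖q - a‖ := by
          rw [show y - q = (y - a) - (q - a) by abel]; exact norm_sub_le _ _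
        have : ‖y - q‖ / t ≤ 2 := by rw [div_le_iff₀ ht]; linarith [hq.2]
        linarith
    _ ≤ _ := Finset.sum_le_sum_of_subset_of_nonneg (Finset.filter_subset _ _)
        (fun q hq _ => phw_nonneg (hm q hq) _ _)

lemma sum_near {M : Type*} [AddCommMonoid M] (Q : Finset E4) (a : E4) (t : ℝ) (f : E4 → M)
    (hf : ∀ q ∈ Q, ¬ ‖q - a‖ < 8 * t → f q = 0) :
    ∑ q ∈ Q, f q = ∑ q ∈ Q with ‖q - a‖ < 8 * t, f q := by
  symm
  apply Finset.sum_subset (Finset.filter_subset _ _)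
  intro q hq hn
  apply hf q hq
  intro h
  exact hn (Finset.mem_filter.2 ⟨hq, h⟩)

lemma wgt_diff (Q : Finset E4) (m : E4 → ℝ) (t c K : ℝ) (ht : 0 < t) (hc : 0 < c)
    (hm : ∀ q ∈ Q, 0 ≤ m q) (a y y' : E4) (hy : ‖y - a‖ ≤ t) (hy' : ‖y' - a‖ ≤ t)
    (hlow : c * t ^ 2 ≤ ∑ q ∈ Q with ‖q - a‖ < t, m q)
    (hup : ∑ q ∈ Q with ‖q - a‖ < 8 * t, m q ≤ K * t ^ 2) :
    ∑ q ∈ Q, |wgt Q m t q y - wgt Q m t q y'| ≤ K / c * (‖y - y'‖ / t) := by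
  have hS := phw_sum_lower Q m t c ht hm a y hy hlow
  have hS' := phw_sum_lower Q m t c ht hm a y' hy' hlow
  set S := ∑ q ∈ Q, phw m t q y with hSd
  set S' := ∑ q ∈ Q, phw m t q y' with hSd'
  have hpos : 0 < 2 * c * t ^ 2 := by positivity
  have hSp : 0 < S := hpos.trans_le hS
  have hSp' : 0 < S' := hpos.trans_le hS'
  set T := ∑ q ∈ Q, |phw m t q y - phw m t q y'| with hT
  have hTb : T ≤ K * t ^ 2 * (‖y - y'‖ / t) := by
    have e : T = ∑ q ∈ Q with ‖q - a‖ < 8 * t, |phw m t q y - phw m t q y'| := by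
      apply sum_near
      intro q _ hn
      rw [phw_far ht hy hn, phw_far ht hy' hn]; simp
    rw [e]
    calc _ ≤ ∑ q ∈ Q with ‖q - a‖ < 8 * t, m q * (‖y - y'‖ / t) := by
          apply Finset.sum_le_sum
          intro q hq
          rw [Finset.mem_filter] at hq
          unfold phw
          rw [← mul_sub, abs_mul, abs_of_nonneg (hm q hq.1)]
          apply mul_le_mul_of_nonneg_left _ (hm q hq.1)
          refine (tent_sub _ _).trans ?_
          rw [← sub_div, abs_div, abs_of_pos ht]
          apply div_le_div_of_nonneg_right _ ht.le
          have := abs_norm_sub_norm_le (y - q) (y' - q)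
          rwa [sub_sub_sub_cancel_right] at this
      _ = (∑ q ∈ Q with ‖q - a‖ < 8 * t, m q) * (‖y - y'‖ / t) := by rw [Finset.sum_mul]
      _ ≤ _ := mul_le_mul_of_nonneg_right hup (by positivity)
  have hSS : |S - S'| ≤ T := by
    rw [hSd, hSd', ← Finset.sum_sub_distrib]; exact Finset.abs_sum_le_sum_abs _ _
  have hterm : ∀ q ∈ Q, |wgt Q m t q y - wgt Q m t q y'| ≤
      |phw m t q y - phw m t q y'| / S + phw m t q y' * (T / (S * S')) := by
    intro q hq
    have h0 := phw_nonneg (hm q hq) t y'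
    have e : wgt Q m t q y - wgt Q m t q y' =
        (phw m t q y - phw m t q y') / S + phw m t q y' * ((S' - S) / (S * S')) := by
      unfold wgt
      rw [← hSd, ← hSd']
      field_simp
      ring
    rw [e]
    refine (abs_add_le _ _).trans ?_
    rw [abs_div, abs_mul, abs_div, abs_of_pos hSp, abs_of_nonneg h0,
      abs_of_pos (mul_pos hSp hSp'), abs_sub_comm S' S]
    gcongr
  have hTn : 0 ≤ T := Finset.sum_nonneg fun _ _ => abs_nonneg _
  calc _ ≤ ∑ q ∈ Q, (|phw m t q y - phw m t q y'| / S + phw m t q y' * (T / (S * S'))) :=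
        Finset.sum_le_sum hterm
    _ = T / S + S' * (T / (S * S')) := by
        rw [Finset.sum_add_distrib, ← Finset.sum_div, ← Finset.sum_mul]
    _ = 2 * T / S := by field_simp; ring
    _ ≤ 2 * (K * t ^ 2 * (‖y - y'‖ / t)) / (2 * c * t ^ 2) := by
        apply div_le_div₀ _ _ hpos hS
        · have : 0 ≤ K * t ^ 2 * (‖y - y'‖ / t) := hTn.trans hTb
          linarith
        · linarith
    _ = _ := by field_simp

lemma wgt_nonneg (Q : Finset E4) (m : E4 → ℝ) (t : ℝ) (hm : ∀ q ∈ Q, 0 ≤ m q) (y : E4) :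
    ∀ q ∈ Q, 0 ≤ wgt Q m t q y := fun q hq =>
  div_nonneg (phw_nonneg (hm q hq) _ _) (Finset.sum_nonneg fun q hq => phw_nonneg (hm q hq) _ _)

lemma wgt_far {Q : Finset E4} {m : E4 → ℝ} {t : ℝ} (ht : 0 < t) {q y a : E4} (hy : ‖y - a‖ ≤ t)
    (hq : ¬ ‖q - a‖ < 8 * t) : wgt Q m t q y = 0 := by
  unfold wgt; rw [phw_far ht hy hq, zero_div]

lemma wgt_sum (Q : Finset E4) (m : E4 → ℝ) (t c : ℝ) (ht : 0 < t) (hc : 0 < c)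
    (hm : ∀ q ∈ Q, 0 ≤ m q) (a y : E4) (hy : ‖y - a‖ ≤ t)
    (hlow : c * t ^ 2 ≤ ∑ q ∈ Q with ‖q - a‖ < t, m q) :
    ∑ q ∈ Q with ‖q - a‖ < 8 * t, wgt Q m t q y = 1 := by
  rw [← sum_near Q a t (fun q => wgt Q m t q y) (fun q _ h => wgt_far ht hy h)]
  unfold wgt
  rw [← Finset.sum_div]
  apply div_self
  have := phw_sum_lower Q m t c ht hm a y hy hlow
  have : 0 < 2 * c * t ^ 2 := by positivity
  linarith

lemma sig_near (Q : Finset E4) (m : E4 → ℝ) (t : ℝ) (L : E4 → Pl) (ht : 0 < t)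
    (a y : E4) (hy : ‖y - a‖ ≤ t) :
    sig Q m t L y = y + ∑ q ∈ Q with ‖q - a‖ < 8 * t, wgt Q m t q y • (L q).A y := by
  unfold sig
  rw [← sum_near Q a t (fun q => wgt Q m t q y • (L q).A y)
    (fun q _ h => by rw [wgt_far ht hy h, zero_smul])]

/-- Value estimates for one smoothing step. -/
lemma sig_val (Q : Finset E4) (m : E4 → ℝ) (t c ε : ℝ) (L : E4 → Pl) (L0 : Pl)
    (ht : 0 < t) (hc : 0 < c) (hε : 0 ≤ ε)
    (hm : ∀ q ∈ Q, 0 ≤ m q) (a y : E4) (hy : ‖y - a‖ ≤ t)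
    (hlow : c * t ^ 2 ≤ ∑ q ∈ Q with ‖q - a‖ < t, m q)
    (hA : ∀ q ∈ Q, ‖q - a‖ < 8 * t → ∀ y, ‖y - a‖ ≤ 20 * t →
      ‖(L q).A y - L0.A y‖ ≤ ε * t) :
    ‖L0.A (sig Q m t L y)‖ ≤ ε * t ∧ ‖sig Q m t L y - y‖ ≤ ‖L0.A y‖ + ε * t := by
  rw [sig_near Q m t L ht a y hy, add_sub_cancel_left]
  apply one_step_val _ _ _ _ _ _ (by positivity)
  · intro q hq
    exact wgt_nonneg Q m t hm y q (Finset.mem_filter.1 hq).1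
  · exact wgt_sum Q m t c ht hc hm a y hy hlow
  · intro q hq
    rw [Finset.mem_filter] at hq
    exact hA q hq.1 hq.2 y (by linarith)

/-- Difference estimates for one smoothing step. -/
lemma sig_diff (Q : Finset E4) (m : E4 → ℝ) (t c K ε e : ℝ) (L : E4 → Pl) (L0 : Pl)
    (ht : 0 < t) (hc : 0 < c) (hK : 0 ≤ K) (hε : 0 ≤ ε) (hee : ε ≤ e)
    (hm : ∀ q ∈ Q, 0 ≤ m q) (a y y' : E4) (hy : ‖y - a‖ ≤ t) (hy' : ‖y' - a‖ ≤ t)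
    (hlow : c * t ^ 2 ≤ ∑ q ∈ Q with ‖q - a‖ < t, m q)
    (hup : ∑ q ∈ Q with ‖q - a‖ < 8 * t, m q ≤ K * t ^ 2)
    (hp : ∀ q ∈ Q, ‖q - a‖ < 8 * t → ∀ v, ‖(L q).pr v - L0.pr v‖ ≤ ε * ‖v‖)
    (hA : ∀ q ∈ Q, ‖q - a‖ < 8 * t → ∀ y, ‖y - a‖ ≤ 20 * t →
      ‖(L q).A y - L0.A y‖ ≤ ε * t)
    (h0 : ‖L0.A y'‖ ≤ e * t) :
    let D := y - y'
    let D' := sig Q m t L y - sig Q m t L y'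
    ‖D' - L0.pr D'‖ ≤ (1 + 2 * (K / c)) * e * ‖D‖ ∧
    ‖L0.pr D' - L0.pr D‖ ≤ e * ‖D - L0.pr D‖ + (1 + 2 * (K / c)) * e ^ 2 * ‖D‖ := by
  rw [sig_near Q m t L ht a y hy, sig_near Q m t L ht a y' hy']
  apply one_step_diff _ _ _ _ _ _ _ _ ε _ _ ht hε hee (by positivity)
  · intro q hq
    exact wgt_nonneg Q m t hm y q (Finset.mem_filter.1 hq).1
  · exact wgt_sum Q m t c ht hc hm a y hy hlow
  · refine le_trans ?_ (wgt_diff Q m t c K ht hc hm a y y' hy hy' hlow hup)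
    exact Finset.sum_le_sum_of_subset_of_nonneg (Finset.filter_subset _ _)
      (fun _ _ _ => abs_nonneg _)
  · intro q hq
    rw [Finset.mem_filter] at hq
    exact hp q hq.1 hq.2
  · intro q hq
    rw [Finset.mem_filter] at hq
    exact hA q hq.1 hq.2 y' (by linarith)
  · exact h0

/-! ### Flattening -/

/-- scales -/
def sc (t0 : ℝ) (k : ℕ) : ℝ := t0 / 16 ^ k

lemma sc_pos {t0 : ℝ} (h : 0 < t0) (k : ℕ) : 0 < sc t0 k := by unfold sc; positivity

lemma sc_succ (t0 : ℝ) (k : ℕ) : sc t0 (k + 1) = sc t0 k / 16 := by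
  unfold sc; rw [pow_succ]; field_simp

lemma sc_zero (t0 : ℝ) : sc t0 0 = t0 := by simp [sc]

/-- the points active at level `k` -/
def actv (P : Finset E4) (rad : E4 → ℝ) (t0 ρ : ℝ) (k : ℕ) : Finset E4 :=
  P.filter (fun p => rad p ≤ ρ * sc t0 k)

lemma mem_actv {P : Finset E4} {rad : E4 → ℝ} {t0 ρ : ℝ} {k : ℕ} {p : E4} :
    p ∈ actv P rad t0 ρ k ↔ p ∈ P ∧ rad p ≤ ρ * sc t0 k := by
  simp [actv]

structure FlatData (P G : Finset E4) (rad : E4 → ℝ) (t0 ρ c K κ : ℝ) (L : ℕ → E4 → Pl)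
    (E : ℕ → E4 → ℝ) : Prop where
  ht0 : 0 < t0
  hρ : 0 < ρ
  hρ1 : ρ ≤ 1
  hc : 0 < c
  hK : 0 ≤ K
  hκ : 0 < κ
  hκs : κ * (100000 * (1 + 2 * (K / c))) ≤ ρ ^ 2
  hrad : ∀ p ∈ P, 0 < rad p
  hsep : ∀ p ∈ P, ∀ q ∈ P, p ≠ q → rad p ≤ ‖p - q‖
  hGP : G ⊆ actv P rad t0 ρ 0
  hE : ∀ a ∈ G, ∀ k, 0 ≤ E k a
  hEs : ∀ a ∈ G, ∀ n, ∑ k ∈ Finset.range n, E k a ^ 2 ≤ κ ^ 2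
  low : ∀ a ∈ G, ∀ k, a ∈ actv P rad t0 ρ k →
    c * sc t0 k ^ 2 ≤ ∑ q ∈ actv P rad t0 ρ k with ‖q - a‖ < sc t0 k, rad q ^ 2
  up : ∀ a ∈ G, ∀ k, a ∈ actv P rad t0 ρ k →
    ∑ q ∈ actv P rad t0 ρ k with ‖q - a‖ < 8 * sc t0 k, rad q ^ 2 ≤ K * sc t0 k ^ 2
  T1p : ∀ a ∈ G, ∀ k, a ∈ actv P rad t0 ρ k → ∀ q ∈ actv P rad t0 ρ k,
    ‖q - a‖ < 8 * sc t0 k → ∀ v, ‖(L k q).pr v - (L k a).pr v‖ ≤ E k a * ‖v‖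
  T1A : ∀ a ∈ G, ∀ k, a ∈ actv P rad t0 ρ k → ∀ q ∈ actv P rad t0 ρ k,
    ‖q - a‖ < 8 * sc t0 k → ∀ y, ‖y - a‖ ≤ 20 * sc t0 k →
    ‖(L k q).A y - (L k a).A y‖ ≤ E k a * sc t0 k
  T2p : ∀ a ∈ G, ∀ k, a ∈ actv P rad t0 ρ (k + 1) →
    ∀ v, ‖(L k a).pr v - (L (k + 1) a).pr v‖ ≤ E k a * ‖v‖
  T2A : ∀ a ∈ G, ∀ k, a ∈ actv P rad t0 ρ (k + 1) →
    ∀ y, ‖y - a‖ ≤ 20 * sc t0 (k + 1) →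
    ‖(L k a).A y - (L (k + 1) a).A y‖ ≤ E k a * sc t0 k
  T3 : ∀ a ∈ G, ∀ k, a ∈ actv P rad t0 ρ k →
    rad a * ‖(L k a).A a‖ ≤ E k a * sc t0 k ^ 2

/-- iterated smoothing, from level `k + n` to level `k` -/
def Ys (P : Finset E4) (rad : E4 → ℝ) (t0 ρ : ℝ) (L : ℕ → E4 → Pl) : ℕ → ℕ → E4 → E4
  | 0, _, p => p
  | n + 1, k, p => open Classical in
      if p ∈ actv P rad t0 ρ k then
        sig (actv P rad t0 ρ k) (fun q => rad q ^ 2) (sc t0 k) (L k) (Ys P rad t0 ρ L n (k + 1) p)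
      else p

section flat

variable {P G : Finset E4} {rad : E4 → ℝ} {t0 ρ c K κ : ℝ} {L : ℕ → E4 → Pl}
    {E : ℕ → E4 → ℝ}

lemma actv_mono (ht0 : 0 < t0) (hρ : 0 < ρ) {k : ℕ} {p : E4}
    (h : p ∈ actv P rad t0 ρ (k + 1)) : p ∈ actv P rad t0 ρ k := by
  rw [mem_actv] at *
  refine ⟨h.1, h.2.trans ?_⟩
  apply mul_le_mul_of_nonneg_left _ hρ.le
  rw [sc_succ]; have := sc_pos ht0 k; linarith

lemma actv_eventually (hrad : ∀ p ∈ P, 0 < rad p) :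
    ∃ N, ∀ k, N ≤ k → ∀ p, p ∉ actv P rad t0 ρ k := by
  have h1 : Filter.Tendsto (fun k : ℕ => ρ * sc t0 k) Filter.atTop (nhds 0) := by
    have := (tendsto_pow_atTop_nhds_zero_of_lt_one (r := (1/16:ℝ)) (by norm_num)
      (by norm_num)).const_mul (ρ * t0)
    rw [mul_zero] at this
    refine this.congr fun k => ?_
    unfold sc; rw [one_div, inv_pow]; ring
  have h2 : ∀ p ∈ P, ∀ᶠ k in Filter.atTop, ρ * sc t0 k < rad p := fun p hp =>
    h1.eventually_lt_const (hrad p hp)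
  have h3 := (Filter.eventually_all_finset P).2 h2
  obtain ⟨N, hN⟩ := Filter.eventually_atTop.1 h3
  refine ⟨N, fun k hk p hp => ?_⟩
  rw [mem_actv] at hp
  exact absurd (hN k hk p hp.1) (not_lt.2 hp.2)


lemma FlatData.exY (H : FlatData P G rad t0 ρ c K κ L E) : ∃ (N : ℕ) (Y : ℕ → E4 → E4),
    (∀ k, N ≤ k → ∀ p, p ∉ actv P rad t0 ρ k) ∧
    (∀ k p, p ∈ actv P rad t0 ρ k → Y k p =
      sig (actv P rad t0 ρ k) (fun q => rad q ^ 2) (sc t0 k) (L k) (Y (k + 1) p)) ∧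
    (∀ k p, p ∉ actv P rad t0 ρ k → Y k p = p) := by
  obtain ⟨N, hN⟩ := actv_eventually (t0 := t0) (ρ := ρ) H.hrad
  refine ⟨N, fun k p => Ys P rad t0 ρ L (N - k) k p, hN, ?_, ?_⟩
  · intro k p hp
    have hk : k < N := by
      by_contra h
      exact hN k (not_lt.1 h) p hp
    have : N - k = (N - (k + 1)) + 1 := by omega
    dsimp only
    rw [this, Ys, if_pos hp]
  · intro k p hp
    dsimp only
    cases h : N - k with
    | zero => rw [Ys]
    | succ n => rw [Ys, if_neg hp]

lemma FlatData.E_le (H : FlatData P G rad t0 ρ c K κ L E) {a : E4} (ha : a ∈ G) (k : ℕ) : E k a ≤ κ := by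
  have h := H.hEs a ha (k + 1)
  have h2 : E k a ^ 2 ≤ ∑ k ∈ Finset.range (k + 1), E k a ^ 2 :=
    Finset.single_le_sum (f := fun k => E k a ^ 2) (fun _ _ => sq_nonneg _)
      (Finset.mem_range.2 (Nat.lt_succ_self k))
  exact abs_le_of_sq_le_sq' (h2.trans h) H.hκ.le |>.2

lemma FlatData.B_ge (H : FlatData P G rad t0 ρ c K κ L E) : 1 ≤ 1 + 2 * (K / c) := by
  have := div_nonneg H.hK H.hc.le; linarith

/-- the small parameter `η = 16 κ / ρ` -/
lemma FlatData.eta (H : FlatData P G rad t0 ρ c K κ L E) : ∃ η, η = 16 * κ / ρ ∧ 0 < η ∧ 16 * κ ≤ η ∧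
    6250 * (1 + 2 * (K / c)) * η ≤ ρ := by
  have hρ := H.hρ
  have hκ := H.hκ
  refine ⟨16 * κ / ρ, rfl, by positivity, ?_, ?_⟩
  · rw [le_div_iff₀ hρ]; nlinarith [H.hρ1]
  · rw [← mul_div_assoc, div_le_iff₀ hρ]; have := H.hκs; nlinarith

lemma FlatData.crude (H : FlatData P G rad t0 ρ c K κ L E) {N : ℕ} {Y : ℕ → E4 → E4}
    (hN : ∀ k, N ≤ k → ∀ p, p ∉ actv P rad t0 ρ k)
    (hY : ∀ k p, p ∈ actv P rad t0 ρ k → Y k p =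
      sig (actv P rad t0 ρ k) (fun q => rad q ^ 2) (sc t0 k) (L k) (Y (k + 1) p))
    (hY' : ∀ k p, p ∉ actv P rad t0 ρ k → Y k p = p)
    {η : ℝ} (hη : η = 16 * κ / ρ) {a : E4} (ha : a ∈ G) :
    ∀ n k, N ≤ k + n → ‖Y k a - a‖ ≤ 2 * η * sc t0 k ∧
      (a ∈ actv P rad t0 ρ k → ‖(L k a).A (Y (k + 1) a)‖ ≤ η * sc t0 k) := by
  obtain ⟨η', hη', hη0, hηκ, hηρ⟩ := H.eta
  obtain rfl : η' = η := by rw [hη, hη']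
  have hρ := H.hρ
  have hκ := H.hκ
  have hB := H.B_ge
  have hη1 : η' ≤ 1 / 6250 := by
    have := H.hρ1
    have : 6250 * η' ≤ 6250 * (1 + 2 * (K / c)) * η' := by nlinarith
    linarith
  intro n
  induction n with
  | zero =>
    intro k hk
    have := hN k hk a
    refine ⟨?_, fun h => absurd h this⟩
    rw [hY' k a this, sub_self, norm_zero]
    have := sc_pos H.ht0 k
    positivity
  | succ n ih =>
    intro k hk
    have hT := sc_pos H.ht0 k
    by_cases hact : a ∈ actv P rad t0 ρ k
    swap
    · refine ⟨?_, fun h => absurd h hact⟩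
      rw [hY' k a hact, sub_self, norm_zero]
      positivity
    obtain ⟨ih1, ih2⟩ := ih (k + 1) (by omega)
    have hscs := sc_succ t0 k
    have hT1 := sc_pos H.ht0 (k + 1)
    have hEk := H.E_le ha k
    have hEk1 := H.E_le ha (k + 1)
    have hm : ∀ k, ∀ q ∈ actv P rad t0 ρ k, (0:ℝ) ≤ rad q ^ 2 := fun _ q _ => sq_nonneg _
    have hy : ‖Y (k + 1) a - a‖ ≤ sc t0 k := by
      refine ih1.trans ?_
      rw [hscs]; nlinarith
    have key : ‖(L k a).A (Y (k + 1) a)‖ ≤ η' * sc t0 k := by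
      by_cases hact1 : a ∈ actv P rad t0 ρ (k + 1)
      · have hy2 : ‖Y (k + 2) a - a‖ ≤ sc t0 (k + 1) := by
          refine (ih (k + 2) (by omega)).1.trans ?_
          rw [sc_succ t0 (k + 1)]; nlinarith
        have hv := (sig_val (actv P rad t0 ρ (k + 1)) (fun q => rad q ^ 2) (sc t0 (k + 1)) c
          (E (k + 1) a) (L (k + 1)) (L (k + 1) a) hT1 H.hc (H.hE a ha _) (hm _) a
          (Y (k + 2) a) hy2 (H.low a ha _ hact1) (H.T1A a ha _ hact1)).1
        rw [← hY (k + 1) a hact1] at hv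
        have h2 := H.T2A a ha k hact1 (Y (k + 1) a) (by
          refine ih1.trans ?_
          nlinarith)
        have h3 := norm_add_le ((L k a).A (Y (k + 1) a) - (L (k + 1) a).A (Y (k + 1) a))
          ((L (k + 1) a).A (Y (k + 1) a))
        rw [sub_add_cancel] at h3
        have h4 : E (k + 1) a * sc t0 (k + 1) ≤ κ * sc t0 k := by
          rw [hscs]; nlinarith
        have h5 : E k a * sc t0 k ≤ κ * sc t0 k := by nlinarith
        have h6 : (2 * κ) * sc t0 k ≤ η' * sc t0 k := by
          apply mul_le_mul_of_nonneg_right _ hT.le; linarith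
        linarith
      · rw [hY' _ _ hact1]
        have h3 := H.T3 a ha k hact
        have haP := (mem_actv.1 hact).1
        have h4 : ρ * sc t0 k / 16 < rad a := by
          by_contra hcon
          apply hact1
          rw [mem_actv, hscs]
          exact ⟨haP, by linarith [not_lt.1 hcon]⟩
        have h5 : (ρ * sc t0 k / 16) * ‖(L k a).A a‖ ≤ κ * sc t0 k ^ 2 := by
          have := mul_le_mul_of_nonneg_right h4.le (norm_nonneg ((L k a).A a))
          have : E k a * sc t0 k ^ 2 ≤ κ * sc t0 k ^ 2 := by
            apply mul_le_mul_of_nonneg_right hEk (sq_nonneg _)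
          linarith
        rw [hη, div_mul_eq_mul_div, le_div_iff₀ hρ]
        have h6 : sc t0 k * (‖(L k a).A a‖ * ρ) ≤ sc t0 k * (16 * κ * sc t0 k) := by nlinarith
        exact le_of_mul_le_mul_left h6 hT
    refine ⟨?_, fun _ => key⟩
    have hv := (sig_val (actv P rad t0 ρ k) (fun q => rad q ^ 2) (sc t0 k) c
          (E k a) (L k) (L k a) hT H.hc (H.hE a ha _) (hm _) a
          (Y (k + 1) a) hy (H.low a ha _ hact) (H.T1A a ha _ hact)).2
    rw [← hY k a hact] at hv
    have h3 := norm_add_le (Y k a - Y (k + 1) a) (Y (k + 1) a - a)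
    rw [sub_add_sub_cancel] at h3
    have h5 : E k a * sc t0 k ≤ κ * sc t0 k := by nlinarith
    have h6 : 2 * η' * sc t0 (k + 1) ≤ 1 / 8 * (η' * sc t0 k) := by rw [hscs]; nlinarith
    have h7 : (16 * κ) * sc t0 k ≤ η' * sc t0 k := by
      apply mul_le_mul_of_nonneg_right _ hT.le; linarith
    have h8 := mul_pos hη0 hT
    linarith

end flat

section flat

variable {P G : Finset E4} {rad : E4 → ℝ} {t0 ρ c K κ : ℝ} {L : ℕ → E4 → Pl}
    {E : ℕ → E4 → ℝ}

/-- abstract one-step loss estimate -/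
lemma loss (M : Pl) (D D' : E4) (α f B : ℝ) (hα : 0 ≤ α) (hf : 0 ≤ f) (hB : 1 ≤ B)
    (hαf : 2 * B * f ≤ α)
    (h1 : ‖M.pr D' - M.pr D‖ ≤ f * ‖D - M.pr D‖ + B * f ^ 2 * ‖D‖)
    (h2 : ‖D - M.pr D‖ ≤ α * ‖D‖) : (1 - 2 * α ^ 2) * ‖D‖ ≤ ‖D'‖ := by
  have hD := norm_nonneg D
  have hp := M.pyth D
  have hp0 := norm_nonneg (M.pr D)
  have h3 : (1 - α ^ 2) * ‖D‖ ≤ ‖M.pr D‖ := by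
    by_cases hα1 : 1 ≤ α ^ 2
    · nlinarith
    · have h4 : ‖D - M.pr D‖ ^ 2 ≤ (α * ‖D‖) ^ 2 := by gcongr
      apply abs_le_of_sq_le_sq' _ hp0 |>.2
      have h5 : (1 - α ^ 2) ^ 2 ≤ 1 - α ^ 2 := by nlinarith [sq_nonneg α]
      have h6 : (1 - α ^ 2) ^ 2 * ‖D‖ ^ 2 ≤ (1 - α ^ 2) * ‖D‖ ^ 2 := by gcongr
      nlinarith
  have h7 : ‖M.pr D‖ ≤ ‖D'‖ + ‖M.pr D' - M.pr D‖ := by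
    have := norm_sub_le (M.pr D') (M.pr D' - M.pr D)
    rw [sub_sub_cancel] at this
    exact this.trans (by linarith [M.norm_pr_le D'])
  have h8 : f * ‖D - M.pr D‖ ≤ f * (α * ‖D‖) := by gcongr
  have h9 : f ≤ α / 2 := by nlinarith
  have h10 : f * α + B * f ^ 2 ≤ α ^ 2 := by
    have e1 : f * α ≤ α ^ 2 / 2 := by nlinarith
    have e2 : B * f ^ 2 ≤ α ^ 2 / 4 := by
      have : B * f * f ≤ (α / 2) * (α / 2) := by
        apply mul_le_mul (by linarith) h9 hf (by linarith)
      nlinarith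
    nlinarith [sq_nonneg α]
  have h11 : (f * α + B * f ^ 2) * ‖D‖ ≤ α ^ 2 * ‖D‖ := by gcongr
  nlinarith

lemma sum_alpha (x : ℕ → ℝ) (κ : ℝ) (hx : ∀ n, ∑ k ∈ Finset.range n, x k ^ 2 ≤ κ ^ 2)
    (j : ℕ) : ∑ k ∈ Finset.range j, (x k + x (k + 1)) ^ 2 ≤ 4 * κ ^ 2 := by
  calc _ ≤ ∑ k ∈ Finset.range j, (2 * x k ^ 2 + 2 * x (k + 1) ^ 2) :=
        Finset.sum_le_sum fun k _ => by nlinarith [sq_nonneg (x k - x (k + 1))]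
    _ = 2 * ∑ k ∈ Finset.range j, x k ^ 2 + 2 * ∑ k ∈ Finset.range j, x (k + 1) ^ 2 := by
        rw [Finset.sum_add_distrib, Finset.mul_sum, Finset.mul_sum]
    _ ≤ _ := by
        have h1 := hx j
        have h2 := hx (j + 1)
        rw [Finset.sum_range_succ'] at h2
        nlinarith [sq_nonneg (x 0)]

/-- numeric estimate of the total loss -/
lemma total_loss (x f α : ℕ → ℝ) (κ ρ B η : ℝ) (j : ℕ) (hρ : 0 < ρ) (hρ1 : ρ ≤ 1) (hB : 1 ≤ B)
    (hκ : 0 < κ) (hη : 0 < η)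
    (hx : ∀ n, ∑ k ∈ Finset.range n, x k ^ 2 ≤ κ ^ 2)
    (hκη : 16 * κ ≤ η) (hηρ : 6250 * B * η ≤ ρ)
    (hf : ∀ k, k < j → f k = x k + x (k + 1)) (hfj : f j = 2 * η)
    (hα : ∀ k, k < j → α k = 2 * B * (f k + f (k + 1))) (hαj : α j = 400 * B * η / ρ) :
    ∑ k ∈ Finset.range (j + 1), 2 * α k ^ 2 ≤ 1 / 2 := by
  have hB0 : 0 < B := by linarith
  have h1 : B * η / ρ ≤ 1 / 6250 := by
    rw [div_le_iff₀ hρ]; linarith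
  have h1' : B * η ≤ 1 / 6250 := by linarith
  have h0 : 0 ≤ B * η := by positivity
  have h0' : 0 ≤ B * η / ρ := by positivity
  have h2 : ∑ k ∈ Finset.range (j + 1), f k ^ 2 ≤ 5 * η ^ 2 := by
    rw [Finset.sum_range_succ, hfj]
    have e : ∑ k ∈ Finset.range j, f k ^ 2 ≤ 4 * κ ^ 2 := by
      rw [Finset.sum_congr rfl fun k hk => by rw [hf k (Finset.mem_range.1 hk)]]
      exact sum_alpha x κ hx j
    nlinarith
  have h3 : ∑ k ∈ Finset.range j, α k ^ 2 ≤ 80 * (B * η) ^ 2 := by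
    calc _ ≤ ∑ k ∈ Finset.range j, 8 * B ^ 2 * (f k ^ 2 + f (k + 1) ^ 2) := by
          apply Finset.sum_le_sum
          intro k hk
          rw [hα k (Finset.mem_range.1 hk), mul_pow]
          have : (f k + f (k + 1)) ^ 2 ≤ 2 * (f k ^ 2 + f (k + 1) ^ 2) := by
            nlinarith [sq_nonneg (f k - f (k + 1))]
          nlinarith [sq_nonneg B]
      _ = 8 * B ^ 2 * (∑ k ∈ Finset.range j, f k ^ 2 + ∑ k ∈ Finset.range j, f (k + 1) ^ 2) := by
          rw [← Finset.mul_sum, Finset.sum_add_distrib]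
      _ ≤ 8 * B ^ 2 * (5 * η ^ 2 + 5 * η ^ 2) := by
          have e1 : ∑ k ∈ Finset.range j, f k ^ 2 ≤ 5 * η ^ 2 := by
            rw [Finset.sum_range_succ] at h2
            nlinarith [sq_nonneg (f j)]
          have e2 : ∑ k ∈ Finset.range j, f (k + 1) ^ 2 ≤ 5 * η ^ 2 := by
            rw [Finset.sum_range_succ'] at h2
            nlinarith [sq_nonneg (f 0)]
          gcongr
      _ = _ := by ring
  rw [← Finset.mul_sum, Finset.sum_range_succ, hαj]
  have h4 : (400 * B * η / ρ) ^ 2 = 160000 * (B * η / ρ) ^ 2 := by ring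
  rw [h4]
  have h5 : (B * η / ρ) ^ 2 ≤ (1 / 6250) ^ 2 := by gcongr
  have h6 : (B * η) ^ 2 ≤ (1 / 6250) ^ 2 := by gcongr
  nlinarith


set_option maxHeartbeats 2000000 in
lemma FlatData.pair (H : FlatData P G rad t0 ρ c K κ L E) {N : ℕ} {Y : ℕ → E4 → E4}
    (hN : ∀ k, N ≤ k → ∀ p, p ∉ actv P rad t0 ρ k)
    (hY : ∀ k p, p ∈ actv P rad t0 ρ k → Y k p =
      sig (actv P rad t0 ρ k) (fun q => rad q ^ 2) (sc t0 k) (L k) (Y (k + 1) p))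
    (hY' : ∀ k p, p ∉ actv P rad t0 ρ k → Y k p = p)
    {η : ℝ} (hη : η = 16 * κ / ρ) {a b : E4} (ha : a ∈ G) (hb : b ∈ G) (hab : a ≠ b)
    (hd : 4 * ‖a - b‖ ≤ t0) :
    ‖a - b‖ ≤ 4 * ‖Y 0 a - Y 0 b‖ ∧
    ‖(Y 0 a - Y 0 b) - (L 0 a).pr (Y 0 a - Y 0 b)‖ ≤
      4 * (1 + 2 * (K / c)) * η * ‖Y 0 a - Y 0 b‖ := by
  have hca := fun k => H.crude hN hY hY' hη ha N k (by omega)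
  have hcb := fun k => H.crude hN hY hY' hη hb N k (by omega)
  obtain ⟨η', hη', hη0, hηκ, hηρ⟩ := H.eta
  obtain rfl : η' = η := by rw [hη, hη']
  clear hη'
  have hρ := H.hρ
  have hρ1 := H.hρ1
  have hκ := H.hκ
  have hB := H.B_ge
  set B := 1 + 2 * (K / c) with hBd
  have hη1 : η' ≤ 1 / 6250 := by
    have : 6250 * η' ≤ 6250 * B * η' := by nlinarith
    linarith
  have hηρ' : 6250 * η' ≤ ρ := by nlinarith
  have hm : ∀ k, ∀ q ∈ actv P rad t0 ρ k, (0:ℝ) ≤ rad q ^ 2 := fun _ q _ => sq_nonneg _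
  set d := ‖a - b‖ with hdd
  have hd0 : 0 < d := norm_pos_iff.2 (sub_ne_zero.2 hab)
  set J : ℕ → Prop := fun k => a ∈ actv P rad t0 ρ k ∧ b ∈ actv P rad t0 ρ k ∧ 4 * d ≤ sc t0 k
    with hJ
  have hJ0 : J 0 := ⟨H.hGP ha, H.hGP hb, by rw [sc_zero]; exact hd⟩
  have hJs : ∀ k, J (k + 1) → J k := by
    intro k hk
    refine ⟨actv_mono H.ht0 hρ hk.1, actv_mono H.ht0 hρ hk.2.1, ?_⟩
    have := hk.2.2
    rw [sc_succ] at this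
    have := sc_pos H.ht0 k
    linarith
  obtain ⟨j, hj, hj1⟩ : ∃ j, J j ∧ ¬ J (j + 1) := by
    by_contra hcon
    push Not at hcon
    have : ∀ k, J k := fun k => by
      induction k with
      | zero => exact hJ0
      | succ k ih => exact hcon k ih
    exact hN N le_rfl a (this N).1
  have hJle : ∀ k, k ≤ j → J k := by
    intro k hk
    induction hk using Nat.decreasingInduction with
    | self => exact hj
    | of_succ k _ ih => exact hJs k ih
  have hTj := sc_pos H.ht0 j
  have hdj : ρ * sc t0 j / 64 ≤ d := by
    have hsepab : rad a ≤ d := H.hsep a (mem_actv.1 hj.1).1 b (mem_actv.1 hj.2.1).1 hab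
    have hsepba : rad b ≤ d := by
      rw [hdd, norm_sub_rev]; exact H.hsep b (mem_actv.1 hj.2.1).1 a (mem_actv.1 hj.1).1 hab.symm
    by_contra hcon
    push Not at hcon
    have : 0 < ρ * sc t0 j := by positivity
    apply hj1
    refine ⟨mem_actv.2 ⟨(mem_actv.1 hj.1).1, ?_⟩, mem_actv.2 ⟨(mem_actv.1 hj.2.1).1, ?_⟩, ?_⟩
    · rw [sc_succ]; linarith
    · rw [sc_succ]; linarith
    · rw [sc_succ]; nlinarith
  -- positions
  have hya : ∀ k, ‖Y (k + 1) a - a‖ ≤ sc t0 k := by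
    intro k
    refine (hca (k + 1)).1.trans ?_
    have := sc_pos H.ht0 k
    rw [sc_succ]; nlinarith
  have hyb : ∀ k, J k → ‖Y (k + 1) b - a‖ ≤ sc t0 k := by
    intro k hk
    have h1 := (hcb (k + 1)).1
    have h2 := norm_add_le (Y (k + 1) b - b) (b - a)
    rw [sub_add_sub_cancel, norm_sub_rev b a, ← hdd] at h2
    have := sc_pos H.ht0 k
    have := hk.2.2
    rw [sc_succ] at h1
    nlinarith
  set X : ℕ → E4 := fun k => Y k a - Y k b with hX
  set f : ℕ → ℝ := fun k => if k < j then E k a + E (k + 1) a else 2 * η' with hf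
  set α : ℕ → ℝ := fun k => if k < j then 2 * B * (f k + f (k + 1)) else 400 * B * η' / ρ with hα
  have hf0 : ∀ k, 0 ≤ f k := by
    intro k
    simp only [hf]
    split_ifs
    · exact add_nonneg (H.hE a ha _) (H.hE a ha _)
    · positivity
  have hfη : ∀ k, f k ≤ 2 * η' := by
    intro k
    simp only [hf]
    split_ifs
    · linarith [H.E_le ha k, H.E_le ha (k + 1)]
    · exact le_rfl
  have hEf : ∀ k, E k a ≤ f k := by
    intro k
    simp only [hf]
    split_ifs
    · linarith [H.hE a ha (k + 1)]
    · linarith [H.E_le ha k]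
  have hB0 : 0 < B := by linarith
  have hαf : ∀ k, 2 * B * f k ≤ α k := by
    intro k
    simp only [hα]
    split_ifs with h
    · have := mul_nonneg (by positivity : 0 ≤ 2 * B) (hf0 (k + 1))
      linarith
    · have h1 := mul_le_mul_of_nonneg_left (hfη k) (by positivity : 0 ≤ 2 * B)
      refine h1.trans ?_
      rw [le_div_iff₀ hρ]
      have : 0 < B * η' := by positivity
      nlinarith
  have hα0 : ∀ k, 0 ≤ α k := fun k =>
    (mul_nonneg (by positivity) (hf0 k)).trans (hαf k)
  have htot : ∑ k ∈ Finset.range (j + 1), 2 * α k ^ 2 ≤ 1 / 2 := by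
    apply total_loss (fun k => E k a) f α κ ρ B η' j hρ hρ1 hB hκ hη0 (H.hEs a ha) hηκ hηρ
    · intro k hk; simp only [hf, if_pos hk]
    · simp only [hf, lt_irrefl, if_false]
    · intro k hk; simp only [hα, if_pos hk]
    · simp only [hα, lt_irrefl, if_false]
  -- heights
  have hh : ∀ k, k ≤ j → ‖(L k a).A (Y (k + 1) b)‖ ≤ f k * sc t0 k := by
    intro k hk
    have hTk := sc_pos H.ht0 k
    rcases hk.lt_or_eq with hlt | rfl
    · have hJ1 := hJle (k + 1) hlt
      have hv := (sig_val (actv P rad t0 ρ (k + 1)) (fun q => rad q ^ 2) (sc t0 (k + 1)) c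
          (E (k + 1) a) (L (k + 1)) (L (k + 1) a) (sc_pos H.ht0 _) H.hc (H.hE a ha _) (hm _) a
          (Y (k + 2) b) (hyb _ hJ1) (H.low a ha _ hJ1.1) (H.T1A a ha _ hJ1.1)).1
      rw [← hY (k + 1) b hJ1.2.1] at hv
      have h2 := H.T2A a ha k hJ1.1 (Y (k + 1) b) (by
          refine (hyb k (hJle k hk)).trans ?_
          rw [sc_succ]; linarith)
      have h3 := norm_add_le ((L k a).A (Y (k + 1) b) - (L (k + 1) a).A (Y (k + 1) b))
          ((L (k + 1) a).A (Y (k + 1) b))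
      rw [sub_add_cancel] at h3
      simp only [hf, if_pos hlt]
      rw [sc_succ] at hv
      have := mul_nonneg (H.hE a ha (k + 1)) hTk.le
      linarith
    · have h1 := (hcb k).2 hj.2.1
      have h2 := H.T1A a ha k hj.1 b hj.2.1 (by
        rw [norm_sub_rev, ← hdd]; linarith [hj.2.2]) (Y (k + 1) b)
        ((hyb k hj).trans (by linarith))
      have h3 := norm_sub_le ((L k b).A (Y (k + 1) b))
        ((L k b).A (Y (k + 1) b) - (L k a).A (Y (k + 1) b))
      rw [sub_sub_cancel] at h3
      simp only [hf, lt_irrefl, if_false]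
      have : E k a * sc t0 k ≤ κ * sc t0 k := mul_le_mul_of_nonneg_right (H.E_le ha k) hTk.le
      have : 16 * κ * sc t0 k ≤ η' * sc t0 k := mul_le_mul_of_nonneg_right hηκ hTk.le
      have : 0 ≤ κ * sc t0 k := by positivity
      linarith
  -- the step
  have hstep : ∀ k, k ≤ j → ‖X k - (L k a).pr (X k)‖ ≤ B * f k * ‖X (k + 1)‖ ∧
      (‖X (k + 1) - (L k a).pr (X (k + 1))‖ ≤ α k * ‖X (k + 1)‖ →
        (1 - 2 * α k ^ 2) * ‖X (k + 1)‖ ≤ ‖X k‖) := by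
    intro k hk
    have hJk := hJle k hk
    have h := sig_diff (actv P rad t0 ρ k) (fun q => rad q ^ 2) (sc t0 k) c K (E k a) (f k)
      (L k) (L k a) (sc_pos H.ht0 k) H.hc H.hK (H.hE a ha k) (hEf k) (hm k) a
      (Y (k + 1) a) (Y (k + 1) b) (hya k) (hyb k hJk) (H.low a ha k hJk.1)
      (H.up a ha k hJk.1) (H.T1p a ha k hJk.1) (H.T1A a ha k hJk.1) (hh k hk)
    rw [← hY k a hJk.1, ← hY k b hJk.2.1] at h
    exact ⟨h.1, fun h2 => loss (L k a) (X (k + 1)) (X k) (α k) (f k) B (hα0 k) (hf0 k) hB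
      (hαf k) h.2 h2⟩
  -- start
  have hX1 : d / 2 ≤ ‖X (j + 1)‖ := by
    have h1 := (hca (j + 1)).1
    have h2 := (hcb (j + 1)).1
    have h3 : a - b = X (j + 1) - (Y (j + 1) a - a) + (Y (j + 1) b - b) := by
      simp only [hX]; abel
    have h4 : d ≤ ‖X (j + 1)‖ + ‖Y (j + 1) a - a‖ + ‖Y (j + 1) b - b‖ := by
      rw [hdd, h3]
      exact (norm_add_le _ _).trans (by linarith [norm_sub_le (X (j + 1)) (Y (j + 1) a - a)])
    rw [sc_succ] at h1 h2
    nlinarith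
  have hstart : ‖X (j + 1) - (L j a).pr (X (j + 1))‖ ≤ α j * ‖X (j + 1)‖ := by
    have h1 := (hca j).2 hj.1
    have h2 := hh j le_rfl
    have h3 := (L j a).A_sub (Y (j + 1) a) (Y (j + 1) b)
    have h4 : ‖X (j + 1) - (L j a).pr (X (j + 1))‖ ≤ 3 * η' * sc t0 j := by
      rw [← norm_neg, ← h3]
      refine (norm_sub_le _ _).trans ?_
      have := mul_le_mul_of_nonneg_right (hfη j) hTj.le
      linarith
    refine h4.trans ?_
    have h5 : α j = 400 * B * η' / ρ := by simp only [hα, lt_irrefl, if_false]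
    rw [h5, div_mul_eq_mul_div, le_div_iff₀ hρ]
    have h6 : ρ * sc t0 j ≤ 128 * ‖X (j + 1)‖ := by linarith
    have h7 : 3 * η' * sc t0 j * ρ ≤ 400 * η' * ‖X (j + 1)‖ := by
      have := mul_le_mul_of_nonneg_left h6 hη0.le
      have := mul_nonneg hη0.le (norm_nonneg (X (j + 1)))
      nlinarith
    have h8 : 400 * η' * ‖X (j + 1)‖ ≤ 400 * B * η' * ‖X (j + 1)‖ := by
      have := mul_nonneg hη0.le (norm_nonneg (X (j + 1)))
      nlinarith
    linarith
  have hαsmall : ∀ k, k ≤ j → 2 * α k ^ 2 ≤ 1 / 2 := by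
    intro k hk
    refine le_trans ?_ htot
    exact Finset.single_le_sum (f := fun k => 2 * α k ^ 2) (fun _ _ => by positivity)
      (Finset.mem_range.2 (by omega))
  -- the induction
  have hind : ∀ k, k ≤ j → ‖X (k + 1) - (L k a).pr (X (k + 1))‖ ≤ α k * ‖X (k + 1)‖ ∧
      (1 - ∑ i ∈ Finset.Ico (k + 1) (j + 1), 2 * α i ^ 2) * ‖X (j + 1)‖ ≤ ‖X (k + 1)‖ := by
    intro k hk
    induction hk using Nat.decreasingInduction with
    | self =>
      refine ⟨hstart, ?_⟩
      simp
    | of_succ k hk ih =>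
      have hs := hstep (k + 1) hk
      have hs2 := hs.2 ih.1
      have hsm := hαsmall (k + 1) hk
      have hJ1 := hJle (k + 1) hk
      have hhalf : ‖X (k + 1 + 1)‖ ≤ 2 * ‖X (k + 1)‖ := by
        have := norm_nonneg (X (k + 1 + 1))
        nlinarith
      constructor
      · have h1 := H.T2p a ha k hJ1.1 (X (k + 1))
        have h2 : X (k + 1) - (L k a).pr (X (k + 1)) =
          (X (k + 1) - (L (k + 1) a).pr (X (k + 1))) -
            ((L k a).pr (X (k + 1)) - (L (k + 1) a).pr (X (k + 1))) := by abel
        rw [h2]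
        refine (norm_sub_le _ _).trans ?_
        have h3 : α k = 2 * B * (f k + f (k + 1)) := by
          simp only [hα]; rw [if_pos (Nat.lt_of_succ_le hk)]
        rw [h3]
        have h4 : B * f (k + 1) * ‖X (k + 1 + 1)‖ ≤ B * f (k + 1) * (2 * ‖X (k + 1)‖) :=
          mul_le_mul_of_nonneg_left hhalf (mul_nonneg hB0.le (hf0 _))
        have h5 : E k a * ‖X (k + 1)‖ ≤ 2 * B * f k * ‖X (k + 1)‖ := by
          apply mul_le_mul_of_nonneg_right _ (norm_nonneg _)
          have := hEf k
          have := hf0 k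
          nlinarith
        linarith [hs.1]
      · have h6 : Finset.Ico (k + 1) (j + 1) = insert (k + 1) (Finset.Ico (k + 1 + 1) (j + 1)) := by
          ext i; simp only [Finset.mem_Ico, Finset.mem_insert]; omega
        rw [h6, Finset.sum_insert (by simp)]
        set S := ∑ i ∈ Finset.Ico (k + 1 + 1) (j + 1), 2 * α i ^ 2 with hS
        have hS0 : 0 ≤ S := Finset.sum_nonneg fun _ _ => by positivity
        have h7 := ih.2
        have h8 := norm_nonneg (X (j + 1))
        have h9 : 0 ≤ 1 - 2 * α (k + 1) ^ 2 := by linarith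
        have h10 := mul_le_mul_of_nonneg_left h7 h9
        have h11 : 0 ≤ 2 * α (k + 1) ^ 2 * S * ‖X (j + 1)‖ := by positivity
        nlinarith
  have h0 := hind 0 (Nat.zero_le _)
  have hs0 := hstep 0 (Nat.zero_le _)
  have hs02 := hs0.2 h0.1
  have hnn := norm_nonneg (X (j + 1))
  have hnn1 := norm_nonneg (X 1)
  have hfin : ‖X (j + 1)‖ ≤ 2 * ‖X 0‖ := by
    have e : ∑ k ∈ Finset.range (j + 1), 2 * α k ^ 2 =
        2 * α 0 ^ 2 + ∑ i ∈ Finset.Ico (0 + 1) (j + 1), 2 * α i ^ 2 := by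
      rw [← Finset.sum_insert (f := fun k => 2 * α k ^ 2) (by simp)]
      apply Finset.sum_congr _ fun _ _ => rfl
      ext i; simp only [Finset.mem_range, Finset.mem_Ico, Finset.mem_insert]; omega
    rw [e] at htot
    set S := ∑ i ∈ Finset.Ico (0 + 1) (j + 1), 2 * α i ^ 2 with hS
    have hS0 : 0 ≤ S := Finset.sum_nonneg fun _ _ => by positivity
    have h7 := h0.2
    have h9 : 0 ≤ 1 - 2 * α 0 ^ 2 := by linarith
    have h10 := mul_le_mul_of_nonneg_left h7 h9
    have h11 : 0 ≤ 2 * α 0 ^ 2 * S * ‖X (j + 1)‖ := by positivity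
    rw [zero_add] at h10 hs02
    nlinarith
  constructor
  · change d ≤ 4 * ‖X 0‖
    linarith
  · change ‖X 0 - (L 0 a).pr (X 0)‖ ≤ 4 * B * η' * ‖X 0‖
    have hsm := hαsmall 0 (Nat.zero_le _)
    rw [zero_add] at hs02 hs0
    have h1 : ‖X 1‖ ≤ 2 * ‖X 0‖ := by nlinarith
    have h2 : B * f 0 * ‖X 1‖ ≤ B * (2 * η') * (2 * ‖X 0‖) := by
      apply mul_le_mul (mul_le_mul_of_nonneg_left (hfη 0) hB0.le) h1 hnn1 (by positivity)
    linarith [hs0.1]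

/-- The flattening lemma. -/
lemma FlatData.bound (H : FlatData P G rad t0 ρ c K κ L E) (x0 : E4) (hx0 : ∀ a ∈ G, ‖a - x0‖ ≤ t0 / 100) :
    ∑ a ∈ G, rad a ^ 2 ≤ 1024 * t0 ^ 2 := by
  rcases G.eq_empty_or_nonempty with rfl | ⟨o, ho⟩
  · simp; positivity
  obtain ⟨N, Y, hN, hY, hY'⟩ := H.exY
  obtain ⟨η, hη, hη0, hηκ, hηρ⟩ := H.eta
  have hρ := H.hρ
  have hρ1 := H.hρ1
  have hκ := H.hκ
  have hB := H.B_ge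
  have ht0 := H.ht0
  have hη1 : η ≤ 1 / 6250 := by
    have : 6250 * η ≤ 6250 * (1 + 2 * (K / c)) * η := by nlinarith
    linarith
  have hdist : ∀ a ∈ G, ∀ b ∈ G, ‖a - b‖ ≤ t0 / 50 := by
    intro a ha b hb
    have := norm_sub_le (a - x0) (b - x0)
    rw [sub_sub_sub_cancel_right] at this
    linarith [hx0 a ha, hx0 b hb]
  have hpk := packing G (fun a => (⟨(L 0 o).pr (Y 0 a), (L 0 o).pr_mem _⟩ : (L 0 o).V))
    (fun a => rad a / 16) ⟨(L 0 o).pr x0, (L 0 o).pr_mem _⟩ (2 * t0) ?_ (by linarith) ?_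
  · rw [(L 0 o).dim] at hpk
    have e : ∑ i ∈ G, (rad i / 16) ^ 2 = (∑ a ∈ G, rad a ^ 2) / 256 := by
      rw [Finset.sum_div]; refine Finset.sum_congr rfl fun a _ => by ring
    rw [e] at hpk
    linarith
  · intro a ha
    have haP := mem_actv.1 (H.hGP ha)
    rw [sc_zero] at haP
    refine ⟨by have := H.hrad a haP.1; positivity, ?_⟩
    have h1 : dist (⟨(L 0 o).pr (Y 0 a), (L 0 o).pr_mem _⟩ : (L 0 o).V)
        ⟨(L 0 o).pr x0, (L 0 o).pr_mem _⟩ = ‖(L 0 o).pr (Y 0 a - x0)‖ := by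
      rw [Subtype.dist_eq, dist_eq_norm, map_sub]
    rw [h1]
    have h2 := (L 0 o).norm_pr_le (Y 0 a - x0)
    have h3 := (H.crude hN hY hY' hη ha N 0 (by omega)).1
    rw [sc_zero] at h3
    have h4 := norm_add_le (Y 0 a - a) (a - x0)
    rw [sub_add_sub_cancel] at h4
    have h5 := hx0 a ha
    have h6 : ρ * t0 ≤ t0 := by nlinarith
    have h7 : 2 * η * t0 ≤ t0 := by nlinarith
    linarith [haP.2]
  · intro a ha b hb hab
    have haP := mem_actv.1 (H.hGP ha)
    have hbP := mem_actv.1 (H.hGP hb)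
    have h1 : dist (⟨(L 0 o).pr (Y 0 a), (L 0 o).pr_mem _⟩ : (L 0 o).V)
        ⟨(L 0 o).pr (Y 0 b), (L 0 o).pr_mem _⟩ = ‖(L 0 o).pr (Y 0 a - Y 0 b)‖ := by
      rw [Subtype.dist_eq, dist_eq_norm, map_sub]
    rw [h1]
    obtain ⟨h2, h3⟩ := H.pair hN hY hY' hη ha hb hab (by linarith [hdist a ha b hb])
    have h4 := H.hsep a haP.1 b hbP.1 hab
    have h5 := H.hsep b hbP.1 a haP.1 hab.symm
    rw [norm_sub_rev] at h5
    set X := Y 0 a - Y 0 b with hX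
    have h6 := H.T1p o ho 0 (H.hGP ho) a (H.hGP ha) (by
      rw [sc_zero]; linarith [hdist a ha o ho]) X
    have h7 : X = (X - (L 0 a).pr X) + ((L 0 a).pr X - (L 0 o).pr X) + (L 0 o).pr X := by abel
    have h8 : ‖X‖ ≤ ‖X - (L 0 a).pr X‖ + ‖(L 0 a).pr X - (L 0 o).pr X‖ + ‖(L 0 o).pr X‖ := by
      conv_lhs => rw [h7]
      have h7' := norm_add_le (X - (L 0 a).pr X) ((L 0 a).pr X - (L 0 o).pr X)
      exact (norm_add_le _ _).trans (by linarith)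
    have hXn := norm_nonneg X
    have h9 : 4 * (1 + 2 * (K / c)) * η * ‖X‖ ≤ 1 / 4 * ‖X‖ := by
      apply mul_le_mul_of_nonneg_right _ hXn
      nlinarith
    have h10 : E 0 o * ‖X‖ ≤ 1 / 4 * ‖X‖ := by
      apply mul_le_mul_of_nonneg_right _ hXn
      linarith [H.E_le ho 0]
    linarith

end flat

/-! ### Planes from the taming condition -/

lemma exists_plane : ∃ V : Submodule ℝ E4, Module.finrank ℝ V = 2 := by
  have h := ((EuclideanSpace.basisFun (Fin 4) ℝ).orthonormal.comp (Fin.castLE (by norm_num : 2 ≤ 4))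
    (Fin.castLE_injective _)).linearIndependent
  exact ⟨_, (finrank_span_eq_card h).trans (by simp)⟩

lemma Pl.A_le_infDist (L : AffineSubspace ℝ E4) (hL : (L : Set E4).Nonempty) (c : E4) (hc : c ∈ L)
    (hd : Module.finrank ℝ L.direction = 2) (y : E4) :
    ‖(Pl.mk c L.direction hd).A y‖ ≤ Metric.infDist y (L : Set E4) := by
  rw [Metric.le_infDist hL]
  intro z hz
  set M := Pl.mk c L.direction hd
  have h1 : M.A z = 0 := by
    unfold Pl.A
    have : z - M.c ∈ M.V := L.vsub_mem_direction hz hc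
    rw [M.pr_of_mem this, sub_self]
  have := M.norm_A_sub_le y z
  rwa [h1, sub_zero, ← dist_eq_norm] at this

/-- atomic measure -/
def atoms (P : Finset E4) (m : E4 → ℝ) : Measure E4 :=
  ∑ p ∈ P, ENNReal.ofReal (m p) • Measure.dirac p

lemma atoms_finite (P : Finset E4) (m : E4 → ℝ) : IsFiniteMeasure (atoms P m) := by
  constructor
  unfold atoms
  rw [Measure.finsetSum_apply]
  apply ENNReal.sum_lt_top.2
  intro p _
  simp

lemma atoms_null (P : Finset E4) (m : E4 → ℝ) (S : Set E4) (hS : MeasurableSet S)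
    (h : ∀ p ∈ P, p ∈ S) : atoms P m Sᶜ = 0 := by
  unfold atoms
  rw [Measure.finsetSum_apply]
  apply Finset.sum_eq_zero
  intro p hp
  rw [Measure.smul_apply, Measure.dirac_apply' _ hS.compl]
  simp [h p hp]

lemma atoms_integral (P : Finset E4) (m : E4 → ℝ) (hm : ∀ p ∈ P, 0 ≤ m p) (f : E4 → ℝ) (x : E4)
    (t : ℝ) (h : ∀ p ∈ P, p ∈ ball x t) :
    ∫ y in ball x t, f y ∂(atoms P m) = ∑ p ∈ P, m p * f p := by
  have h1 : (atoms P m).restrict (ball x t) = atoms P m := by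
    apply Measure.restrict_eq_self_of_ae_mem
    exact (atoms_null P m _ measurableSet_ball h)
  rw [h1]
  unfold atoms
  rw [integral_finsetSum_measure]
  · apply Finset.sum_congr rfl
    intro p hp
    rw [integral_smul_measure, integral_dirac, ENNReal.toReal_ofReal (hm p hp), smul_eq_mul]
  · intro p _
    apply Integrable.smul_measure _ ENNReal.ofReal_ne_top
    exact integrable_dirac (by finiteness)

lemma tame_plane {Z : Set E4} (hZm : MeasurableSet Z) {I : E4 → ℝ → ℝ} {Λ : ℝ}
    {epsFn : ℝ → ℝ → ℝ → ℝ} {C : ℝ} (hI : IsTamingFunctionWith 2 Z I Λ epsFn C)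
    (P : Finset E4) (m : E4 → ℝ) (x : E4) (t η : ℝ) (hm : ∀ p ∈ P, 0 ≤ m p)
    (hP : ∀ p ∈ P, p ∈ Z) (hPx : ∀ p ∈ P, ‖p - x‖ < t) (hx : ‖x‖ ≤ 4) (ht : 0 < t) (ht4 : t ≤ 4)
    (hη : 0 < η) :
    ∃ L : Pl, ∑ p ∈ P, m p * ‖L.A p‖ ^ 2 ≤
      C * t ^ 2 * ∑ p ∈ P, m p * (I p (32 * t) - I p (2 * t)) + η := by
  obtain ⟨-, -, -, -, hC, h3⟩ := hI
  have hb : ∀ p ∈ P, p ∈ ball x t := fun p hp => by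
    rw [mem_ball, dist_eq_norm]; exact hPx p hp
  have h := h3 (atoms P m) (atoms_finite P m) (atoms_null P m Z hZm hP) x
    (by rw [mem_closedBall, dist_zero_right]; linarith) t ⟨ht, by linarith⟩
  rw [atoms_integral P m hm _ x t hb] at h
  have hne : { s : ℝ | ∃ L : AffineSubspace ℝ E4, (L : Set E4).Nonempty ∧
    Module.finrank ℝ L.direction = 2 ∧
    s = t ^ (-4 : ℤ) * ∫ y in ball x t, (Metric.infDist y (L : Set E4)) ^ 2 ∂(atoms P m) }.Nonempty := by
    obtain ⟨V, hV⟩ := exists_plane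
    refine ⟨_, AffineSubspace.mk' 0 V, ⟨0, AffineSubspace.self_mem_mk' _ _⟩, ?_, rfl⟩
    rw [AffineSubspace.direction_mk']; exact hV
  have hlt : Dmu2 (atoms P m) x t < C / t ^ 2 * ∑ p ∈ P, m p * (I p (32 * t) - I p (2 * t)) +
      η / t ^ 4 := by
    have : 0 < η / t ^ 4 := by positivity
    linarith
  obtain ⟨s, ⟨L, hL, hd, rfl⟩, hs⟩ := exists_lt_of_csInf_lt hne hlt
  obtain ⟨c, hc⟩ := id hL
  refine ⟨⟨c, L.direction, hd⟩, ?_⟩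
  rw [atoms_integral P m hm _ x t hb] at hs
  have h4 : ∑ p ∈ P, m p * ‖(Pl.mk c L.direction hd).A p‖ ^ 2 ≤
      ∑ p ∈ P, m p * (Metric.infDist p (L : Set E4)) ^ 2 := by
    apply Finset.sum_le_sum
    intro p hp
    apply mul_le_mul_of_nonneg_left _ (hm p hp)
    exact pow_le_pow_left₀ (norm_nonneg _) (Pl.A_le_infDist L hL c hc hd p) 2
  refine h4.trans ?_
  set X := ∑ p ∈ P, m p * (Metric.infDist p (L : Set E4)) ^ 2
  set S := ∑ p ∈ P, m p * (I p (32 * t) - I p (2 * t))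
  have e1 : t ^ (-4 : ℤ) * X = X / t ^ 4 := by
    rw [zpow_neg]; rw [div_eq_inv_mul]; norm_cast
  rw [e1, div_lt_iff₀ (by positivity)] at hs
  have e2 : (C / t ^ 2 * S + η / t ^ 4) * t ^ 4 = C * t ^ 2 * S + η := by
    field_simp
  linarith

/-! ### The packing proposition: volume bounds, big and light points -/

lemma card_sep (S : Finset E4) (x : E4) (s R : ℝ) (hs : 0 < s) (hR : 0 < R)
    (h : ∀ p ∈ S, ‖p - x‖ ≤ R) (hd : ∀ p ∈ S, ∀ q ∈ S, p ≠ q → s ≤ ‖p - q‖) :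
    (S.card : ℝ) * s ^ 4 ≤ (2 * R + s) ^ 4 := by
  have := packing S (fun p => p) (fun _ => s / 2) x (R + s / 2)
    (fun p hp => ⟨by positivity, by rw [dist_eq_norm]; linarith [h p hp]⟩) (by positivity)
    (fun p hp q hq hpq => by rw [dist_eq_norm]; linarith [hd p hp q hq hpq])
  rw [finrank_euclideanSpace_fin, Finset.sum_const, nsmul_eq_mul] at this
  have e1 : (s / 2) ^ 4 = s ^ 4 / 16 := by ring
  have e2 : (R + s / 2) ^ 4 = (2 * R + s) ^ 4 / 16 := by ring
  rw [e1, e2] at this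
  linarith

/-- admissible families -/
structure Adm (Z : Set E4) (I : E4 → ℝ → ℝ) (τ : ℝ) (P : Finset E4) (rad : E4 → ℝ) : Prop where
  mem : ∀ p ∈ P, p ∈ Z
  pos : ∀ p ∈ P, 0 < rad p
  pin : ∀ p ∈ P, I p 256 - I p (rad p / 2) ≤ τ
  sep : ∀ p ∈ P, ∀ q ∈ P, p ≠ q → rad p ≤ ‖p - q‖

lemma Adm.subset {Z : Set E4} {I : E4 → ℝ → ℝ} {τ : ℝ} {P P' : Finset E4} {rad : E4 → ℝ}
    (h : Adm Z I τ P rad) (hs : P' ⊆ P) : Adm Z I τ P' rad :=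
  ⟨fun p hp => h.mem p (hs hp), fun p hp => h.pos p (hs hp), fun p hp => h.pin p (hs hp),
   fun p hp q hq => h.sep p (hs hp) q (hs hq)⟩

/-- the packing statement at depth `n` -/
def PK (Z : Set E4) (I : E4 → ℝ → ℝ) (τ K : ℝ) (n : ℕ) : Prop :=
  ∀ (x0 : E4) (r0 : ℝ) (P : Finset E4) (rad : E4 → ℝ), 0 < r0 → r0 ≤ 1 / 250 →
    Adm Z I τ P rad → (∀ p ∈ P, ‖p - x0‖ < r0 ∧ (1 / 2) ^ n * r0 ≤ rad p ∧ rad p ≤ r0) →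
    ∑ p ∈ P, rad p ^ 2 ≤ K * r0 ^ 2

/-- greedy for finsets -/
lemma greedy_fin (S : Finset E4) (u : E4 → ℝ) (hu : ∀ p ∈ S, 0 < u p) :
    ∃ S' ⊆ S, (∀ p ∈ S', ∀ q ∈ S', p ≠ q → u p ≤ ‖p - q‖) ∧
      ∀ p ∈ S, ∃ q ∈ S', u p ≤ u q ∧ ‖p - q‖ < u q := by
  rcases S.eq_empty_or_nonempty with rfl | hne
  · exact ⟨∅, le_rfl, by simp, by simp⟩
  obtain ⟨o, ho, hmin⟩ := S.exists_min_image u hne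
  obtain ⟨S', h1, h2, h3⟩ := greedy S.card (S : Set E4) u (u o) (hu o ho)
    (fun p hp => hmin p hp) (S.finite_toSet.image u)
    (fun F hF _ => Finset.card_le_card (by exact_mod_cast hF))
  refine ⟨S', by exact_mod_cast h1, fun p hp q hq hpq => ?_, fun p hp => ?_⟩
  · rw [← dist_eq_norm]; exact h2 p hp q hq hpq
  · obtain ⟨q, hq, h4, h5⟩ := h3 p hp
    exact ⟨q, hq, h4, by rw [← dist_eq_norm]; exact h5⟩

lemma sum_le_cover (S S' : Finset E4) (u m : E4 → ℝ) (hm : ∀ p ∈ S, 0 ≤ m p)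
    (b : E4 → ℝ) (hc : ∀ p ∈ S, ∃ q ∈ S', u p ≤ u q ∧ ‖p - q‖ < u q)
    (hb : ∀ q ∈ S', ∑ p ∈ S with (u p ≤ u q ∧ ‖p - q‖ < u q), m p ≤ b q) :
    ∑ p ∈ S, m p ≤ ∑ q ∈ S', b q := by
  classical
  calc ∑ p ∈ S, m p ≤ ∑ p ∈ S, ∑ q ∈ S', if u p ≤ u q ∧ ‖p - q‖ < u q then m p else 0 := by
        apply Finset.sum_le_sum
        intro p hp
        obtain ⟨q, hq, h⟩ := hc p hp
        have h1 := Finset.single_le_sum (s := S')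
          (f := fun q => if u p ≤ u q ∧ ‖p - q‖ < u q then m p else 0)
          (fun q _ => by split_ifs; exacts [hm p hp, le_rfl]) hq
        rwa [if_pos h] at h1
    _ = ∑ q ∈ S', ∑ p ∈ S with (u p ≤ u q ∧ ‖p - q‖ < u q), m p := by
        rw [Finset.sum_comm]
        exact Finset.sum_congr rfl fun q _ => (Finset.sum_filter _ _).symm
    _ ≤ _ := Finset.sum_le_sum hb

section
variable {Z : Set E4} {I : E4 → ℝ → ℝ} {τ K : ℝ} {n : ℕ} {x0 : E4} {r0 : ℝ} {P : Finset E4}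
  {rad : E4 → ℝ}

lemma apriori (hPK : PK Z I τ K n) (hK : 1 ≤ K) (hr0 : 0 < r0) (hr : r0 ≤ 1 / 250)
    (hA : Adm Z I τ P rad)
    (hP : ∀ p ∈ P, ‖p - x0‖ < r0 ∧ (1 / 2) ^ (n + 1) * r0 ≤ rad p ∧ rad p ≤ r0) :
    ∑ p ∈ P, rad p ^ 2 ≤ 5120 * K * r0 ^ 2 := by
  have hcard : ∀ S : Finset E4, S ⊆ P → (∀ p ∈ S, ∀ q ∈ S, p ≠ q → r0 / 2 ≤ ‖p - q‖) →
      (S.card : ℝ) ≤ 625 := by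
    intro S hS hd
    have := card_sep S x0 (r0 / 2) r0 (by positivity) hr0 (fun p hp => (hP p (hS hp)).1.le) hd
    have e : (2 * r0 + r0 / 2) ^ 4 = 625 * (r0 / 2) ^ 4 := by ring
    rw [e] at this
    exact le_of_mul_le_mul_right this (by positivity)
  rw [← Finset.sum_filter_add_sum_filter_not P (fun p => r0 / 2 < rad p)]
  have h1 : ∑ p ∈ P with r0 / 2 < rad p, rad p ^ 2 ≤ 625 * r0 ^ 2 := by
    calc _ ≤ ∑ p ∈ P with r0 / 2 < rad p, r0 ^ 2 := by
          apply Finset.sum_le_sum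
          intro p hp
          rw [Finset.mem_filter] at hp
          exact pow_le_pow_left₀ (hA.pos p hp.1).le (hP p hp.1).2.2 2
      _ = ((P.filter fun p => r0 / 2 < rad p).card : ℝ) * r0 ^ 2 := by
          rw [Finset.sum_const, nsmul_eq_mul]
      _ ≤ _ := by
          apply mul_le_mul_of_nonneg_right _ (sq_nonneg _)
          apply hcard _ (Finset.filter_subset _ _)
          intro p hp q hq hpq
          rw [Finset.mem_filter] at hp hq
          exact hp.2.le.trans (hA.sep p hp.1 q hq.1 hpq)
  have h2 : ∑ p ∈ P with ¬ r0 / 2 < rad p, rad p ^ 2 ≤ 625 * (K * (r0 / 2) ^ 2) := by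
    obtain ⟨S', hs1, hs2, hs3⟩ := greedy_fin (P.filter fun p => ¬ r0 / 2 < rad p)
      (fun _ => r0 / 2) (fun _ _ => by positivity)
    have := sum_le_cover (P.filter fun p => ¬ r0 / 2 < rad p) S' (fun _ => r0 / 2)
      (fun p => rad p ^ 2) (fun _ _ => sq_nonneg _) (fun _ => K * (r0 / 2) ^ 2) hs3 ?_
    · refine this.trans ?_
      rw [Finset.sum_const, nsmul_eq_mul]
      apply mul_le_mul_of_nonneg_right _ (by positivity)
      exact hcard _ (hs1.trans (Finset.filter_subset _ _)) hs2
    · intro q hq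
      apply hPK q (r0 / 2) _ rad (by positivity) (by linarith)
        (hA.subset ((Finset.filter_subset _ _).trans (Finset.filter_subset _ _)))
      intro p hp
      rw [Finset.mem_filter, Finset.mem_filter] at hp
      refine ⟨hp.2.2, ?_, not_lt.1 hp.1.2⟩
      have := (hP p hp.1.1).2.1
      rw [pow_succ] at this
      linarith
  nlinarith [sq_nonneg r0]

lemma apriori_ball (hPK : PK Z I τ K n) (hK : 1 ≤ K) (hr0 : 0 < r0) (hr : r0 ≤ 1 / 250)
    (hA : Adm Z I τ P rad)
    (hP : ∀ p ∈ P, ‖p - x0‖ < r0 ∧ (1 / 2) ^ (n + 1) * r0 ≤ rad p ∧ rad p ≤ r0)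
    (a : E4) (ha : a ∈ P) (u : ℝ) (hu : rad a ≤ u) :
    ∑ p ∈ P with ‖p - a‖ < u, rad p ^ 2 ≤ 20480 * K * u ^ 2 := by
  have hu0 : 0 < u := (hA.pos a ha).trans_le hu
  by_cases h : u ≤ r0 / 2
  · have h1 := hPK a u (P.filter fun p => ‖p - a‖ < u) rad hu0 (by linarith)
      (hA.subset (Finset.filter_subset _ _)) (by
        intro p hp
        rw [Finset.mem_filter] at hp
        refine ⟨hp.2, ?_, ?_⟩
        · refine le_trans ?_ (hP p hp.1).2.1
          rw [pow_succ]
          have : (0:ℝ) < (1 / 2) ^ n := by positivity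
          nlinarith
        · by_cases hpa : p = a
          · rw [hpa]; exact hu
          · exact (hA.sep p hp.1 a ha hpa).trans hp.2.le)
    have : 0 ≤ K * u ^ 2 := by positivity
    linarith
  · have h1 := apriori hPK hK hr0 hr (hA.subset (Finset.filter_subset (fun p => ‖p - a‖ < u) P))
      (fun p hp => hP p (Finset.mem_filter.1 hp).1)
    refine h1.trans ?_
    have : r0 ^ 2 ≤ 4 * u ^ 2 := by nlinarith
    have := mul_le_mul_of_nonneg_left this (by positivity : 0 ≤ 5120 * K)
    linarith

lemma light_bound (hPK : PK Z I τ K n) (hK : 1 ≤ K) (hr0 : 0 < r0) (hr : r0 ≤ 1 / 250)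
    (hmono : ∀ x ∈ Z, ∀ r₁ ∈ Set.Ioc (0:ℝ) 256, ∀ r₂ ∈ Set.Ioc (0:ℝ) 256,
      r₁ ≤ r₂ → I x r₁ ≤ I x r₂)
    (hA : Adm Z I τ P rad)
    (hP : ∀ p ∈ P, ‖p - x0‖ < r0 ∧ (1 / 2) ^ (n + 1) * r0 ≤ rad p ∧ rad p ≤ r0)
    (ρ : ℝ) (hρ : 0 < ρ) (hρ1 : ρ ≤ 1)
    (S : Finset E4) (hS : S ⊆ P)
    (hl : ∀ p ∈ S, ∃ k, p ∈ actv P rad (100 * r0) ρ k ∧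
      ∑ q ∈ actv P rad (100 * r0) ρ k with ‖q - p‖ < sc (100 * r0) k, rad q ^ 2 ≤
        1 / 40000 * sc (100 * r0) k ^ 2) :
    ∑ p ∈ S, rad p ^ 2 ≤ K / 4 * r0 ^ 2 := by
  have ht0 : 0 < 100 * r0 := by positivity
  choose! k hk1 hk2 using hl
  set u : E4 → ℝ := fun p => sc (100 * r0) (k p) with hu
  have hu0 : ∀ p, 0 < u p := fun p => sc_pos ht0 _
  obtain ⟨S', hs1, hs2, hs3⟩ := greedy_fin S u (fun p _ => hu0 p)
  have h1 := sum_le_cover S S' u (fun p => rad p ^ 2) (fun _ _ => sq_nonneg _)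
    (fun q => 1 / 40000 * u q ^ 2) hs3 (by
      intro q hq
      refine le_trans ?_ (hk2 q (hs1 hq))
      apply Finset.sum_le_sum_of_subset_of_nonneg _ (fun _ _ _ => sq_nonneg _)
      intro p hp
      rw [Finset.mem_filter] at hp ⊢
      refine ⟨mem_actv.2 ⟨hS hp.1, ?_⟩, hp.2.2⟩
      refine (mem_actv.1 (hk1 p hp.1)).2.trans ?_
      exact mul_le_mul_of_nonneg_left hp.2.1 hρ.le)
  refine h1.trans ?_
  rw [← Finset.mul_sum]
  have hr2 : 0 < r0 ^ 2 := by positivity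
  have h2 : ∑ q ∈ S', u q ^ 2 ≤ 10000 * K * r0 ^ 2 := by
    by_cases hbig : ∃ q ∈ S', 2 * r0 ≤ u q
    · obtain ⟨q, hq, hqu⟩ := hbig
      have : S' = {q} := by
        ext p
        rw [Finset.mem_singleton]
        constructor
        · intro hp
          by_contra hpq
          have h3 := hs2 q hq p hp (Ne.symm hpq)
          have h4 := norm_sub_le (q - x0) (p - x0)
          rw [sub_sub_sub_cancel_right] at h4
          linarith [(hP q (hS (hs1 hq))).1, (hP p (hS (hs1 hp))).1]
        · rintro rfl; exact hq
      rw [this, Finset.sum_singleton]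
      have h5 : u q ≤ 100 * r0 := by
        simp only [hu, sc]
        apply div_le_self ht0.le
        exact one_le_pow₀ (by norm_num)
      have h6 : u q ^ 2 ≤ (100 * r0) ^ 2 := pow_le_pow_left₀ (hu0 q).le h5 2
      nlinarith
    · push Not at hbig
      have h6 : ∀ q ∈ S', u q ≤ r0 := by
        intro q hq
        have := hbig q hq
        simp only [hu] at this ⊢
        rcases hkq : k q with _ | _ | j
        · rw [hkq, sc_zero] at this; linarith
        · rw [hkq, sc_succ, sc_zero] at this; linarith
        · unfold sc
          rw [div_le_iff₀ (by positivity), pow_succ, pow_succ]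
          have : (1:ℝ) ≤ 16 ^ j := one_le_pow₀ (by norm_num)
          nlinarith
      have hru : ∀ q ∈ S', rad q ≤ u q := by
        intro q hq
        refine (mem_actv.1 (hk1 q (hs1 hq))).2.trans ?_
        have := hu0 q
        simp only [hu] at this ⊢
        nlinarith
      have h7 := apriori (P := S') (rad := u) (x0 := x0) hPK hK hr0 hr
        ⟨fun p hp => hA.mem p (hS (hs1 hp)), fun p _ => hu0 p, fun p hp => by
          have hpP := hS (hs1 hp)
          have hpp := hA.pos p hpP
          have h8 := hmono p (hA.mem p hpP) (rad p / 2)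
            ⟨by positivity, by linarith [(hP p hpP).2.2]⟩ (u p / 2)
            ⟨by linarith [hu0 p], by linarith [h6 p hp]⟩ (by linarith [hru p hp])
          linarith [hA.pin p hpP], hs2⟩
        (fun p hp => ⟨(hP p (hS (hs1 hp))).1,
          (hP p (hS (hs1 hp))).2.1.trans (hru p hp), h6 p hp⟩)
      have : 0 ≤ K * r0 ^ 2 := by positivity
      linarith
  linarith

lemma big_bound (hZm : MeasurableSet Z) {Λ : ℝ} {epsFn : ℝ → ℝ → ℝ → ℝ} {C : ℝ}
    (hI : IsTamingFunctionWith 2 Z I Λ epsFn C) (hZ : Z ⊆ ball (0:E4) 2)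
    (hr0 : 0 < r0) (hr : r0 ≤ 1 / 250)
    (hA : Adm Z I τ P rad) (hP : ∀ p ∈ P, ‖p - x0‖ < r0 ∧ rad p ≤ r0)
    (K' : ℝ) (hmass : ∑ p ∈ P, rad p ^ 2 ≤ K' * r0 ^ 2) (hτ : 0 < τ)
    (ρ : ℝ) (hρ : 0 < ρ) (hbig : ∀ p ∈ P, 100 * ρ * r0 ≤ rad p)
    (hτs : C * τ * (4 * K' + 1) ≤ 10 ^ 6 * ρ ^ 4) :
    ∑ p ∈ P, rad p ^ 2 ≤ 64 * r0 ^ 2 := by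
  rcases P.eq_empty_or_nonempty with rfl | ⟨o, ho⟩
  · simp; positivity
  have hC := hI.2.2.2.2.1
  have hmono := hI.2.2.1
  have ho2 := hZ (hA.mem o ho)
  rw [mem_ball, dist_zero_right] at ho2
  have hpo : ∀ p ∈ P, ‖p - o‖ < 2 * r0 := by
    intro p hp
    have h4 := norm_sub_le (p - x0) (o - x0)
    rw [sub_sub_sub_cancel_right] at h4
    linarith [(hP p hp).1, (hP o ho).1]
  obtain ⟨L, hL⟩ := tame_plane hZm hI P (fun p => rad p ^ 2) o (2 * r0) (C * τ * r0 ^ 4)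
    (fun _ _ => sq_nonneg _) hA.mem hpo (by linarith) (by linarith) (by linarith) (by positivity)
  have hW : ∑ p ∈ P, rad p ^ 2 * (I p (32 * (2 * r0)) - I p (2 * (2 * r0))) ≤
      τ * (K' * r0 ^ 2) := by
    calc _ ≤ ∑ p ∈ P, rad p ^ 2 * τ := by
          apply Finset.sum_le_sum
          intro p hp
          apply mul_le_mul_of_nonneg_left _ (sq_nonneg _)
          have hpp := hA.pos p hp
          have h1 := hmono p (hA.mem p hp) (32 * (2 * r0)) ⟨by positivity, by linarith⟩ 256
            ⟨by norm_num, by norm_num⟩ (by linarith)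
          have h2 := hmono p (hA.mem p hp) (rad p / 2) ⟨by positivity, by linarith [(hP p hp).2]⟩
            (2 * (2 * r0)) ⟨by positivity, by linarith⟩ (by linarith [(hP p hp).2])
          linarith [hA.pin p hp]
      _ = τ * ∑ p ∈ P, rad p ^ 2 := by rw [← Finset.sum_mul, mul_comm]
      _ ≤ _ := mul_le_mul_of_nonneg_left hmass hτ.le
  have htot : ∑ p ∈ P, rad p ^ 2 * ‖L.A p‖ ^ 2 ≤ (C * τ * (4 * K' + 1)) * r0 ^ 4 := by
    refine hL.trans ?_
    have := mul_le_mul_of_nonneg_left hW (by positivity : 0 ≤ C * (2 * r0) ^ 2)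
    calc _ ≤ C * (2 * r0) ^ 2 * (τ * (K' * r0 ^ 2)) + C * τ * r0 ^ 4 := by linarith
      _ = _ := by ring
  have hAp : ∀ p ∈ P, ‖L.A p‖ ≤ 10 * ρ * r0 := by
    intro p hp
    have h1 : rad p ^ 2 * ‖L.A p‖ ^ 2 ≤ (C * τ * (4 * K' + 1)) * r0 ^ 4 :=
      (Finset.single_le_sum (f := fun p => rad p ^ 2 * ‖L.A p‖ ^ 2)
        (fun _ _ => by positivity) hp).trans htot
    have h2 : (C * τ * (4 * K' + 1)) * r0 ^ 4 ≤ (10 ^ 6 * ρ ^ 4) * r0 ^ 4 :=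
      mul_le_mul_of_nonneg_right hτs (by positivity)
    have h3 : (rad p * ‖L.A p‖) ^ 2 ≤ (1000 * ρ ^ 2 * r0 ^ 2) ^ 2 := by
      rw [mul_pow]; refine (h1.trans h2).trans (le_of_eq (by ring))
    have h4 := abs_le_of_sq_le_sq' h3 (by positivity) |>.2
    have h5 := mul_le_mul_of_nonneg_right (hbig p hp) (norm_nonneg (L.A p))
    have h6 : (100 * ρ * r0) * ‖L.A p‖ ≤ (100 * ρ * r0) * (10 * ρ * r0) := by nlinarith
    exact le_of_mul_le_mul_left h6 (by positivity)
  have hpk := packing P (fun a => (⟨L.pr a, L.pr_mem _⟩ : L.V))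
    (fun a => rad a / 4) ⟨L.pr x0, L.pr_mem _⟩ (2 * r0) ?_ (by linarith) ?_
  · rw [L.dim] at hpk
    have e : ∑ i ∈ P, (rad i / 4) ^ 2 = (∑ a ∈ P, rad a ^ 2) / 16 := by
      rw [Finset.sum_div]; refine Finset.sum_congr rfl fun a _ => by ring
    rw [e] at hpk
    linarith
  · intro a ha
    have hap := hA.pos a ha
    refine ⟨by positivity, ?_⟩
    have h1 : dist (⟨L.pr a, L.pr_mem _⟩ : L.V) ⟨L.pr x0, L.pr_mem _⟩ = ‖L.pr (a - x0)‖ := by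
      rw [Subtype.dist_eq, dist_eq_norm, map_sub]
    rw [h1]
    have h2 := L.norm_pr_le (a - x0)
    linarith [(hP a ha).1, (hP a ha).2]
  · intro a ha b hb hab
    have h1 : dist (⟨L.pr a, L.pr_mem _⟩ : L.V) ⟨L.pr b, L.pr_mem _⟩ = ‖L.pr (a - b)‖ := by
      rw [Subtype.dist_eq, dist_eq_norm, map_sub]
    rw [h1]
    have h2 := hA.sep a ha b hb hab
    have h3 := hA.sep b hb a ha hab.symm
    rw [norm_sub_rev] at h3
    have h4 : ‖(a - b) - L.pr (a - b)‖ ≤ 20 * ρ * r0 := by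
      rw [← norm_neg, ← L.A_sub a b]
      refine (norm_sub_le _ _).trans ?_
      linarith [hAp a ha, hAp b hb]
    have h5 := norm_add_le ((a - b) - L.pr (a - b)) (L.pr (a - b))
    rw [sub_add_cancel] at h5
    have h6 := hbig a ha
    have h7 : 0 < ρ * r0 := by positivity
    linarith
end

/-! ### Good points -/

lemma sum_filter_mono {Q Q' : Finset E4} {f : E4 → ℝ} (h : Q ⊆ Q') (hf : ∀ q ∈ Q', 0 ≤ f q)
    {p p' : E4 → Prop} [DecidablePred p] [DecidablePred p'] (hp : ∀ q ∈ Q, p q → p' q) :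
    ∑ q ∈ Q with p q, f q ≤ ∑ q ∈ Q' with p' q, f q := by
  apply Finset.sum_le_sum_of_subset_of_nonneg
  · intro q hq
    rw [Finset.mem_filter] at hq ⊢
    exact ⟨h hq.1, hp q hq.1 hq.2⟩
  · intro q hq _
    exact hf q (Finset.mem_filter.1 hq).1

lemma actv_subset (P : Finset E4) (rad : E4 → ℝ) (t0 ρ : ℝ) (k : ℕ) : actv P rad t0 ρ k ⊆ P :=
  Finset.filter_subset _ _

set_option maxHeartbeats 1000000 in
lemma flat_of_planes (P G : Finset E4) (rad : E4 → ℝ) (t0 ρ c K' κ s M : ℝ)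
    (L : ℕ → E4 → Pl) (eps2 : ℕ → E4 → ℝ)
    (ht0 : 0 < t0) (hρ : 0 < ρ) (hρ1 : ρ ≤ 1) (hc : 0 < c) (hK' : 0 ≤ K') (hκ : 0 < κ)
    (hM : 1 ≤ M) (hMc : 8 ≤ M ^ 2 * c) (hρc : 9 * (25 * K') * ρ < c / 2)
    (hκs : κ * (100000 * (1 + 2 * ((64 * K') / c))) ≤ ρ ^ 2)
    (hs : (1400 / ρ ^ 2 * M) ^ 2 * 131074 * s ≤ κ ^ 2)
    (hrad : ∀ p ∈ P, 0 < rad p)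
    (hsep : ∀ p ∈ P, ∀ q ∈ P, p ≠ q → rad p ≤ ‖p - q‖)
    (hGP : G ⊆ actv P rad t0 ρ 0)
    (hball : ∀ a ∈ P, ∀ u, rad a ≤ u → ∑ q ∈ P with ‖q - a‖ < u, rad q ^ 2 ≤ K' * u ^ 2)
    (heps0 : ∀ a ∈ G, ∀ k, 0 ≤ eps2 k a)
    (hepsp : ∀ a ∈ G, ∀ k, a ∈ actv P rad t0 ρ k → 0 < eps2 k a)
    (hsum : ∀ a ∈ G, ∀ n, ∑ k ∈ Finset.range n, eps2 k a ≤ s)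
    (low : ∀ a ∈ G, ∀ k, a ∈ actv P rad t0 ρ k →
      c * sc t0 k ^ 2 ≤ ∑ q ∈ actv P rad t0 ρ k with ‖q - a‖ < sc t0 k, rad q ^ 2)
    (hJ : ∀ a ∈ G, ∀ k, a ∈ actv P rad t0 ρ k → ∀ q ∈ actv P rad t0 ρ k,
      ‖q - a‖ < 8 * sc t0 k →
      ∑ p ∈ actv P rad t0 ρ k with ‖p - q‖ < 10 * sc t0 k, rad p ^ 2 * ‖(L k q).A p‖ ^ 2 ≤
        eps2 k a * sc t0 k ^ 4) :
    FlatData P G rad t0 ρ c (64 * K') κ L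
      (fun k a => 1400 / ρ ^ 2 * M * (256 * Real.sqrt (eps2 k a) + Real.sqrt (eps2 (k + 1) a))) := by
  set D := 1400 / ρ ^ 2 * M with hD
  have hρ2 : ρ ^ 2 ≤ 1 := pow_le_one₀ hρ.le hρ1
  have hD1 : 1 ≤ D := by
    have h1 : 1 ≤ 1400 / ρ ^ 2 := by rw [le_div_iff₀ (by positivity)]; linarith
    nlinarith
  have hD0 : 0 < D := by linarith
  set x : ℕ → E4 → ℝ := fun k a => Real.sqrt (eps2 k a) with hx
  have hx0 : ∀ k a, 0 ≤ x k a := fun _ _ => Real.sqrt_nonneg _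
  have hxs : ∀ a ∈ G, ∀ k, x k a ^ 2 = eps2 k a := fun a ha k => Real.sq_sqrt (heps0 a ha k)
  set E : ℕ → E4 → ℝ := fun k a => D * (256 * x k a + x (k + 1) a) with hE
  have hE0 : ∀ k a, 0 ≤ E k a := fun k a => by
    have := hx0 k a; have := hx0 (k + 1) a; simp only [hE]; positivity
  have hEs : ∀ a ∈ G, ∀ n, ∑ k ∈ Finset.range n, E k a ^ 2 ≤ κ ^ 2 := by
    intro a ha n
    have h1 : ∑ k ∈ Finset.range n, eps2 (k + 1) a ≤ s := by
      have := hsum a ha (n + 1)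
      rw [Finset.sum_range_succ'] at this
      linarith [heps0 a ha 0]
    calc _ ≤ ∑ k ∈ Finset.range n, D ^ 2 * (2 * (65536 * eps2 k a + eps2 (k + 1) a)) := by
          apply Finset.sum_le_sum
          intro k _
          simp only [hE]
          rw [mul_pow]
          apply mul_le_mul_of_nonneg_left _ (sq_nonneg _)
          rw [← hxs a ha, ← hxs a ha]
          nlinarith [sq_nonneg (256 * x k a - x (k + 1) a)]
      _ = D ^ 2 * (2 * (65536 * ∑ k ∈ Finset.range n, eps2 k a +
            ∑ k ∈ Finset.range n, eps2 (k + 1) a)) := by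
          rw [← Finset.mul_sum, ← Finset.mul_sum, Finset.sum_add_distrib, ← Finset.mul_sum]
      _ ≤ D ^ 2 * (2 * (65536 * s + s)) := by
          have := hsum a ha n
          gcongr
      _ = D ^ 2 * 131074 * s := by ring
      _ ≤ _ := hs
  have hEκ : ∀ a ∈ G, ∀ k, E k a ≤ κ := by
    intro a ha k
    have h2 : E k a ^ 2 ≤ ∑ k ∈ Finset.range (k + 1), E k a ^ 2 :=
      Finset.single_le_sum (f := fun k => E k a ^ 2) (fun _ _ => sq_nonneg _)
        (Finset.mem_range.2 (Nat.lt_succ_self k))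
    exact abs_le_of_sq_le_sq' (h2.trans (hEs a ha (k + 1))) hκ.le |>.2
  have hκ1 : κ ≤ 1 := by
    have : 1 ≤ 100000 * (1 + 2 * ((64 * K') / c)) := by
      have : 0 ≤ (64 * K') / c := by positivity
      linarith
    nlinarith
  -- smallness for tilt_mass
  have hsm : ∀ a ∈ G, ∀ k ε, D * ε ≤ E k a → M * ε ≤ ρ ^ 2 / 16 := by
    intro a ha k ε h
    have h1 := h.trans ((hEκ a ha k).trans hκ1)
    have h2 : D * ε = 1400 * (M * ε) / ρ ^ 2 := by rw [hD]; ring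
    rw [h2, div_le_iff₀ (by positivity)] at h1
    have : 0 < ρ ^ 2 := by positivity
    linarith
  have hm : ∀ q ∈ P, (0:ℝ) ≤ rad q ^ 2 := fun q _ => sq_nonneg _
  -- mass upper bounds in small balls
  have hballs : ∀ k a, ∀ q ∈ (actv P rad t0 ρ k).filter (fun q => ‖q - a‖ < sc t0 k),
      ∑ q' ∈ (actv P rad t0 ρ k).filter (fun q => ‖q - a‖ < sc t0 k) with
        ‖q' - q‖ ≤ 4 * ρ * sc t0 k, rad q' ^ 2 ≤ (25 * K') * (ρ * sc t0 k) ^ 2 := by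
    intro k a q hq
    have hq' := mem_actv.1 (Finset.mem_filter.1 hq).1
    have hT := sc_pos ht0 k
    have hpos : 0 < ρ * sc t0 k := by positivity
    refine (sum_filter_mono ((Finset.filter_subset _ _).trans (actv_subset _ _ _ _ _)) hm
      (p' := fun q' => ‖q' - q‖ < 5 * (ρ * sc t0 k)) (fun q' _ h => by linarith)).trans ?_
    refine (hball q hq'.1 (5 * (ρ * sc t0 k)) (by linarith)).trans (le_of_eq (by ring))
  refine ⟨ht0, hρ, hρ1, hc, by positivity, hκ, hκs, hrad, hsep, hGP, fun a _ k => hE0 k a, hEs,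
    low, ?_, ?_, ?_, ?_, ?_, ?_⟩
  · intro a ha k hak
    have hT := sc_pos ht0 k
    refine (sum_filter_mono (actv_subset _ _ _ _ _) hm
      (p' := fun q => ‖q - a‖ < 8 * sc t0 k) (fun q _ h => h)).trans ?_
    have hak' := mem_actv.1 hak
    refine (hball a hak'.1 (8 * sc t0 k) ?_).trans (le_of_eq (by ring))
    refine hak'.2.trans ?_
    nlinarith
  rotate_left 4
  · -- T3
    intro a ha k hak
    have hT := sc_pos ht0 k
    have h1 := hJ a ha k hak a hak (by rw [sub_self, norm_zero]; positivity)
    have h2 : rad a ^ 2 * ‖(L k a).A a‖ ^ 2 ≤ eps2 k a * sc t0 k ^ 4 := by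
      refine le_trans ?_ h1
      exact Finset.single_le_sum (f := fun p => rad p ^ 2 * ‖(L k a).A p‖ ^ 2)
        (fun _ _ => by positivity)
        (Finset.mem_filter.2 ⟨hak, by rw [sub_self, norm_zero]; positivity⟩)
    rw [← hxs a ha] at h2
    have h3 : (rad a * ‖(L k a).A a‖) ^ 2 ≤ (x k a * sc t0 k ^ 2) ^ 2 := by
      rw [mul_pow]; exact h2.trans (le_of_eq (by ring))
    have h4 := abs_le_of_sq_le_sq' h3 (mul_nonneg (hx0 _ _) (by positivity)) |>.2
    refine h4.trans ?_
    apply mul_le_mul_of_nonneg_right _ (sq_nonneg _)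
    change x k a ≤ D * (256 * x k a + x (k + 1) a)
    nlinarith [hx0 k a, hx0 (k + 1) a]
  all_goals
    have hT1 : ∀ a ∈ G, ∀ k, a ∈ actv P rad t0 ρ k → ∀ q ∈ actv P rad t0 ρ k,
        ‖q - a‖ < 8 * sc t0 k → (∀ v, ‖(L k q).pr v - (L k a).pr v‖ ≤ E k a * ‖v‖) ∧
        ∀ y, ‖y - a‖ ≤ 20 * sc t0 k → ‖(L k q).A y - (L k a).A y‖ ≤ E k a * sc t0 k := by
      intro a ha k hak q hq hqa
      have hT := sc_pos ht0 k
      have hDE : D * x k a ≤ E k a := by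
        apply mul_le_mul_of_nonneg_left _ hD0.le
        nlinarith [hx0 k a, hx0 (k + 1) a]
      have hJ1 : ∀ q' ∈ actv P rad t0 ρ k, ‖q' - a‖ < 8 * sc t0 k →
          ∑ p ∈ (actv P rad t0 ρ k).filter (fun q => ‖q - a‖ < sc t0 k),
            rad p ^ 2 * ‖(L k q').A p‖ ^ 2 ≤ x k a ^ 2 * sc t0 k ^ 4 := by
        intro q' hq' hq'a
        rw [hxs a ha]
        refine le_trans ?_ (hJ a ha k hak q' hq' hq'a)
        apply sum_filter_mono le_rfl (fun _ _ => by positivity)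
        intro p _ hp
        have := norm_sub_le (p - a) (q' - a)
        rw [sub_sub_sub_cancel_right] at this
        linarith
      have h := tilt_mass (L k q) (L k a)
        ((actv P rad t0 ρ k).filter (fun q => ‖q - a‖ < sc t0 k)) (fun q => rad q ^ 2) a
        (sc t0 k) ρ c (25 * K') M (x k a) hT hρ hρ1 hc (by positivity) (by linarith) hMc
        (Real.sqrt_pos.2 (hepsp a ha k hak)) (hsm a ha k _ hDE)
        (fun q hq => (Finset.mem_filter.1 hq).2.le) (fun _ _ => sq_nonneg _)
        (low a ha k hak) (hballs k a) hρc (hJ1 q hq hqa)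
        (hJ1 a hak (by rw [sub_self, norm_zero]; positivity))
      refine ⟨fun v => (h.1 v).trans ?_, fun y hy => (h.2 y hy).trans ?_⟩
      · exact mul_le_mul_of_nonneg_right hDE (norm_nonneg _)
      · exact mul_le_mul_of_nonneg_right hDE hT.le
    have hT2 : ∀ a ∈ G, ∀ k, a ∈ actv P rad t0 ρ (k + 1) →
        (∀ v, ‖(L k a).pr v - (L (k + 1) a).pr v‖ ≤ E k a * ‖v‖) ∧
        ∀ y, ‖y - a‖ ≤ 20 * sc t0 (k + 1) →
          ‖(L k a).A y - (L (k + 1) a).A y‖ ≤ E k a * sc t0 k := by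
      intro a ha k hak1
      have hak := actv_mono ht0 hρ hak1
      have hT := sc_pos ht0 k
      have hT1 := sc_pos ht0 (k + 1)
      set ε := 256 * x k a + x (k + 1) a with hε
      have hs1 : sc t0 k = 16 * sc t0 (k + 1) := by rw [sc_succ]; ring
      have hxp : 0 < x (k + 1) a := Real.sqrt_pos.2 (hepsp a ha _ hak1)
      have hJa : ∑ p ∈ (actv P rad t0 ρ (k + 1)).filter (fun q => ‖q - a‖ < sc t0 (k + 1)),
            rad p ^ 2 * ‖(L k a).A p‖ ^ 2 ≤ ε ^ 2 * sc t0 (k + 1) ^ 4 := by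
        have h1 := hJ a ha k hak a hak (by rw [sub_self, norm_zero]; positivity)
        have h2 : eps2 k a * sc t0 k ^ 4 ≤ ε ^ 2 * sc t0 (k + 1) ^ 4 := by
          rw [← hxs a ha, hs1]
          have : (256 * x k a) ^ 2 ≤ ε ^ 2 :=
            pow_le_pow_left₀ (by linarith [hx0 k a]) (by rw [hε]; linarith) 2
          have := mul_le_mul_of_nonneg_right this (by positivity : 0 ≤ sc t0 (k + 1) ^ 4)
          refine le_trans (le_of_eq (by ring)) this
        refine le_trans ?_ (h1.trans h2)
        apply sum_filter_mono (fun p hp => actv_mono ht0 hρ hp) (fun _ _ => by positivity)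
        intro p _ hp
        linarith
      have hJb : ∑ p ∈ (actv P rad t0 ρ (k + 1)).filter (fun q => ‖q - a‖ < sc t0 (k + 1)),
            rad p ^ 2 * ‖(L (k + 1) a).A p‖ ^ 2 ≤ ε ^ 2 * sc t0 (k + 1) ^ 4 := by
        have h1 := hJ a ha (k + 1) hak1 a hak1 (by rw [sub_self, norm_zero]; positivity)
        have h2 : eps2 (k + 1) a * sc t0 (k + 1) ^ 4 ≤ ε ^ 2 * sc t0 (k + 1) ^ 4 := by
          rw [← hxs a ha]
          have : (x (k + 1) a) ^ 2 ≤ ε ^ 2 :=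
            pow_le_pow_left₀ hxp.le (by rw [hε]; linarith [hx0 k a]) 2
          exact mul_le_mul_of_nonneg_right this (by positivity)
        refine le_trans ?_ (h1.trans h2)
        apply sum_filter_mono le_rfl (fun _ _ => by positivity)
        intro p _ hp
        linarith
      have h := tilt_mass (L k a) (L (k + 1) a)
        ((actv P rad t0 ρ (k + 1)).filter (fun q => ‖q - a‖ < sc t0 (k + 1)))
        (fun q => rad q ^ 2) a
        (sc t0 (k + 1)) ρ c (25 * K') M ε hT1 hρ hρ1 hc (by positivity) (by linarith) hMc
        (by rw [hε]; linarith [hx0 k a]) (hsm a ha k _ le_rfl)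
        (fun q hq => (Finset.mem_filter.1 hq).2.le) (fun _ _ => sq_nonneg _)
        (low a ha (k + 1) hak1) (hballs (k + 1) a) hρc hJa hJb
      refine ⟨h.1, fun y hy => (h.2 y hy).trans ?_⟩
      apply mul_le_mul_of_nonneg_left _ (hE0 k a)
      linarith
  · exact fun a ha k hak q hq hqa => (hT1 a ha k hak q hq hqa).1
  · exact fun a ha k hak q hq hqa => (hT1 a ha k hak q hq hqa).2
  · exact fun a ha k hak => (hT2 a ha k hak).1
  · exact fun a ha k hak => (hT2 a ha k hak).2


lemma tele (F : ℕ → ℝ) (act : ℕ → Prop) [DecidablePred act] (hd : ∀ k, act (k + 1) → act k) (B : ℝ)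
    (hF : ∀ k, act k → B ≤ F (k + 1)) (h0 : B ≤ F 0) (n : ℕ) :
    ∑ k ∈ Finset.range n, (if act k then F k - F (k + 1) else 0) ≤ F 0 - B := by
  have hdd : ∀ n, act n → ∀ k < n, act k := by
    intro n
    induction n with
    | zero => intro _ k hk; omega
    | succ m ih =>
      intro h k hk
      have hm := hd m h
      rcases Nat.lt_succ_iff_lt_or_eq.1 hk with h1 | h1
      · exact ih hm k h1
      · rw [h1]; exact hm
  have key : ∑ k ∈ Finset.range n, (if act k then F k - F (k + 1) else 0) ≤ F 0 - B ∧
      ((∀ k < n, act k) →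
        ∑ k ∈ Finset.range n, (if act k then F k - F (k + 1) else 0) = F 0 - F n) := by
    induction n with
    | zero => simp [h0]
    | succ m ih =>
      rw [Finset.sum_range_succ]
      by_cases hm : act m
      · have h2 := ih.2 (hdd m hm)
        rw [h2, if_pos hm]
        have := hF m hm
        exact ⟨by linarith, fun _ => by ring⟩
      · rw [if_neg hm]
        refine ⟨by linarith [ih.1], fun h => absurd (h m (Nat.lt_succ_self m)) hm⟩
  exact key.1

section stepD
variable {Z : Set E4} {I : E4 → ℝ → ℝ} {τ : ℝ} {P : Finset E4} {rad : E4 → ℝ} {r0 : ℝ}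

lemma sc_le {t0 : ℝ} (h : 0 < t0) (k : ℕ) : sc t0 k ≤ t0 := by
  unfold sc
  exact div_le_self h.le (one_le_pow₀ (by norm_num))

lemma exists_eps (hZm : MeasurableSet Z) {Λ : ℝ} {epsFn : ℝ → ℝ → ℝ → ℝ} {C : ℝ}
    (hI : IsTamingFunctionWith 2 Z I Λ epsFn C) (hZ : Z ⊆ ball (0:E4) 2)
    (hr0 : 0 < r0) (hr : r0 ≤ 1 / 250) (hA : Adm Z I τ P rad) (hP : ∀ p ∈ P, rad p ≤ r0)
    (ρ K' : ℝ) (hρ : 0 < ρ) (hρ1 : ρ ≤ 1) (hτ : 0 < τ)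
    (hball : ∀ a ∈ P, ∀ u, rad a ≤ u → ∑ q ∈ P with ‖q - a‖ < u, rad q ^ 2 ≤ K' * u ^ 2) :
    ∃ (L : ℕ → E4 → Pl) (eps2 : ℕ → E4 → ℝ) (T : E4 → ℝ),
      (∀ k a, 0 ≤ eps2 k a) ∧ (∀ k a, a ∈ actv P rad (100 * r0) ρ k → 0 < eps2 k a) ∧
      (∀ a, ∀ k, a ∈ actv P rad (100 * r0) ρ k → ∀ q ∈ actv P rad (100 * r0) ρ k,
        ‖q - a‖ < 8 * sc (100 * r0) k →
        ∑ p ∈ actv P rad (100 * r0) ρ k with ‖p - q‖ < 10 * sc (100 * r0) k,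
          rad p ^ 2 * ‖(L k q).A p‖ ^ 2 ≤ eps2 k a * sc (100 * r0) k ^ 4) ∧
      (∀ a n, ∑ k ∈ Finset.range n, eps2 k a ≤ T a) ∧
      ∑ a ∈ P, rad a ^ 2 * T a ≤ (40000 * C * K' + 1) * τ * ∑ a ∈ P, rad a ^ 2 := by
  classical
  have hC := hI.2.2.2.2.1
  have hmono := hI.2.2.1
  set t0 := 100 * r0 with ht0d
  have ht0 : 0 < t0 := by positivity
  have ht04 : t0 ≤ 2 / 5 := by rw [ht0d]; linarith
  have htp : ∀ k, 0 < sc t0 k := sc_pos ht0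
  have htl : ∀ k, sc t0 k ≤ t0 := sc_le ht0
  have htl4 : ∀ k, sc t0 k ≤ 2 / 5 := fun k => (htl k).trans ht04
  obtain ⟨N0, hN0⟩ := actv_eventually (P := P) (rad := rad) (t0 := t0) (ρ := ρ) hA.pos
  set N := N0 + 1 with hN
  have hNp : (0:ℝ) < N := by rw [hN]; positivity
  set Q := actv P rad t0 ρ with hQ
  have hQN : ∀ k, N ≤ k → ∀ p, p ∉ Q k := fun k hk => hN0 k (by omega)
  have hQP : ∀ k, Q k ⊆ P := fun k => actv_subset _ _ _ _ _
  have hQr : ∀ k, ∀ q ∈ Q k, rad q ≤ sc t0 k := by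
    intro k q hq
    refine (mem_actv.1 hq).2.trans ?_
    have := htp k
    nlinarith
  set η := τ / N with hη
  have hηp : 0 < η := by positivity
  set W : ℕ → E4 → ℝ := fun k q => I q (320 * sc t0 k) - I q (20 * sc t0 k) with hW
  have hW0 : ∀ k, ∀ q ∈ P, 0 ≤ W k q := by
    intro k q hq
    have h1 := htp k
    have h2 := htl4 k
    have := hmono q (hA.mem q hq) (20 * sc t0 k) ⟨by positivity, by linarith⟩ (320 * sc t0 k)
      ⟨by positivity, by linarith⟩ (by linarith)
    simp only [hW]; linarith
  have hpl : ∀ k q, ∃ L : Pl, q ∈ P → ∑ p ∈ Q k with ‖p - q‖ < 10 * sc t0 k, rad p ^ 2 * ‖L.A p‖ ^ 2 ≤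
      100 * C * sc t0 k ^ 2 * ∑ p ∈ Q k with ‖p - q‖ < 10 * sc t0 k, rad p ^ 2 * W k p
        + η * sc t0 k ^ 4 := by
    intro k q
    have h1 := htp k
    have h2 := htl4 k
    by_cases hq : q ∈ P
    · have hq2 := hZ (hA.mem q hq)
      rw [mem_ball, dist_zero_right] at hq2
      obtain ⟨L, hL⟩ := tame_plane hZm hI ((Q k).filter fun p => ‖p - q‖ < 10 * sc t0 k)
        (fun p => rad p ^ 2) q (10 * sc t0 k) (η * sc t0 k ^ 4) (fun p _ => by positivity)
        (fun p hp => hA.mem p (hQP k (Finset.mem_filter.1 hp).1))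
        (fun p hp => (Finset.mem_filter.1 hp).2) (by linarith) (by positivity) (by linarith)
        (by positivity)
      refine ⟨L, fun _ => hL.trans (le_of_eq ?_)⟩
      have e1 : 32 * (10 * sc t0 k) = 320 * sc t0 k := by ring
      have e2 : 2 * (10 * sc t0 k) = 20 * sc t0 k := by ring
      simp only [e1, e2, hW]
      ring
    · obtain ⟨L, _⟩ := tame_plane hZm hI ∅ (fun p => rad p ^ 2) 0 1 1 (by simp) (by simp) (by simp)
        (by simp) one_pos (by norm_num) one_pos
      exact ⟨L, fun h => absurd h hq⟩
  choose L hL using hpl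
  set S : ℕ → E4 → ℝ := fun k a => ∑ q ∈ Q k with ‖q - a‖ < 20 * sc t0 k, rad q ^ 2 * W k q with hS
  have hS0 : ∀ k a, 0 ≤ S k a := fun k a => Finset.sum_nonneg fun q hq =>
    mul_nonneg (by positivity) (hW0 k q (hQP k (Finset.mem_filter.1 hq).1))
  set eps2 : ℕ → E4 → ℝ := fun k a => if a ∈ Q k then 100 * C / sc t0 k ^ 2 * S k a + η else 0 with he
  have he0 : ∀ k a, 0 ≤ eps2 k a := by
    intro k a
    simp only [he]
    have := hS0 k a
    have := htp k
    split_ifs <;> positivity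
  have hep : ∀ k a, a ∈ Q k → 0 < eps2 k a := by
    intro k a ha
    simp only [he, if_pos ha]
    have := hS0 k a
    have := htp k
    positivity
  refine ⟨L, eps2, fun a => ∑ k ∈ Finset.range N, eps2 k a, he0, hep, ?_, ?_, ?_⟩
  · intro a k ha q hq hqa
    refine (hL k q (hQP k hq)).trans ?_
    simp only [he, if_pos ha]
    have h1 := htp k
    have h2 : ∑ p ∈ Q k with ‖p - q‖ < 10 * sc t0 k, rad p ^ 2 * W k p ≤ S k a := by
      simp only [hS]
      refine sum_filter_mono (le_refl _)
        (fun p hp => mul_nonneg (by positivity) (hW0 k p (hQP k hp))) ?_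
      intro p _ hp
      have := norm_sub_le_norm_sub_add_norm_sub p q a
      linarith
    have e : (100 * C / sc t0 k ^ 2 * S k a + η) * sc t0 k ^ 4
        = 100 * C * sc t0 k ^ 2 * S k a + η * sc t0 k ^ 4 := by
      field_simp
    rw [e]
    gcongr
  · intro a n
    have : ∑ k ∈ Finset.range n, eps2 k a ≤ ∑ k ∈ Finset.range (max n N), eps2 k a :=
      Finset.sum_le_sum_of_subset_of_nonneg (Finset.range_subset_range.2 (le_max_left _ _))
        (fun k _ _ => he0 k a)
    refine this.trans (le_of_eq ?_)
    symm
    apply Finset.sum_subset (Finset.range_subset_range.2 (le_max_right _ _))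
    intro k _ hk
    rw [Finset.mem_range, not_lt] at hk
    simp only [he, if_neg (hQN k hk a)]
  · -- Chebyshev
    have hk : ∀ k, ∑ a ∈ P, rad a ^ 2 * eps2 k a ≤
        40000 * C * K' * ∑ q ∈ P, rad q ^ 2 * (if q ∈ Q k then W k q else 0)
          + η * ∑ a ∈ P, rad a ^ 2 := by
      intro k
      have h1 := htp k
      have hPQ : ∀ f : E4 → ℝ, ∑ a ∈ Q k, f a = ∑ a ∈ P, if a ∈ Q k then f a else 0 := by
        intro f
        rw [← Finset.sum_filter]
        congr 1
        ext a
        simp only [Finset.mem_filter]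
        exact ⟨fun h => ⟨hQP k h, h⟩, fun h => h.2⟩
      have a1 : ∑ a ∈ P, rad a ^ 2 * eps2 k a ≤
          ∑ a ∈ Q k, rad a ^ 2 * (100 * C / sc t0 k ^ 2 * S k a) + η * ∑ a ∈ P, rad a ^ 2 := by
        rw [hPQ, Finset.mul_sum, ← Finset.sum_add_distrib]
        apply Finset.sum_le_sum
        intro a _
        simp only [he]
        split_ifs
        · apply le_of_eq; ring
        · have : 0 ≤ η * rad a ^ 2 := by positivity
          linarith
      have a2 : ∑ a ∈ Q k, rad a ^ 2 * (100 * C / sc t0 k ^ 2 * S k a) =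
          ∑ q ∈ Q k, rad q ^ 2 * W k q * (100 * C / sc t0 k ^ 2 *
            ∑ a ∈ Q k with ‖a - q‖ < 20 * sc t0 k, rad a ^ 2) := by
        simp only [hS, Finset.mul_sum, Finset.sum_filter]
        rw [Finset.sum_comm]
        apply Finset.sum_congr rfl
        intro q _
        apply Finset.sum_congr rfl
        intro a _
        rw [norm_sub_rev q a]
        split_ifs
        · ring
        · ring
      have a3 : ∑ q ∈ Q k, rad q ^ 2 * W k q * (100 * C / sc t0 k ^ 2 *
            ∑ a ∈ Q k with ‖a - q‖ < 20 * sc t0 k, rad a ^ 2) ≤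
          ∑ q ∈ Q k, 40000 * C * K' * (rad q ^ 2 * W k q) := by
        apply Finset.sum_le_sum
        intro q hq
        have b1 : ∑ a ∈ Q k with ‖a - q‖ < 20 * sc t0 k, rad a ^ 2 ≤ K' * (20 * sc t0 k) ^ 2 :=
          (sum_filter_mono (hQP k) (fun q _ => by positivity) (fun _ _ h => h)).trans
            (hball q (hQP k hq) _ (by linarith [hQr k q hq]))
        have b2 : 100 * C / sc t0 k ^ 2 * ∑ a ∈ Q k with ‖a - q‖ < 20 * sc t0 k, rad a ^ 2 ≤
            40000 * C * K' := by
          calc _ ≤ 100 * C / sc t0 k ^ 2 * (K' * (20 * sc t0 k) ^ 2) := by gcongr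
            _ = 40000 * C * K' := by field_simp; ring
        have b3 : 0 ≤ rad q ^ 2 * W k q := mul_nonneg (by positivity) (hW0 k q (hQP k hq))
        nlinarith [mul_le_mul_of_nonneg_left b2 b3]
      have a4 : ∑ q ∈ Q k, 40000 * C * K' * (rad q ^ 2 * W k q) =
          40000 * C * K' * ∑ q ∈ P, rad q ^ 2 * (if q ∈ Q k then W k q else 0) := by
        rw [← Finset.mul_sum, hPQ]
        congr 1
        apply Finset.sum_congr rfl
        intro q _
        split_ifs <;> ring
      linarith
    have hT : ∀ q ∈ P, ∑ k ∈ Finset.range N, (if q ∈ Q k then W k q else 0) ≤ τ := by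
      intro q hq
      have hqZ := hA.mem q hq
      have hqr := hA.pos q hq
      have hr1 := hP q hq
      have := tele (fun k => I q (320 * sc t0 k)) (fun k => q ∈ Q k)
        (fun k h => actv_mono ht0 hρ h) (I q (rad q / 2)) (by
          intro k hk
          have h1 := htp k
          have h2 := htl4 k
          have h3 := hQr k q hk
          exact hmono q hqZ _ ⟨by positivity, by linarith⟩ _
            ⟨by have := htp (k+1); positivity, by linarith [htl4 (k+1)]⟩
            (by rw [sc_succ]; linarith)) (by
          have h1 := htp 0
          have h2 := htl4 0
          refine hmono q hqZ _ ⟨by positivity, by linarith⟩ _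
            ⟨by positivity, by linarith⟩ ?_
          rw [sc_zero, ht0d]; linarith) N
      have e : ∀ k, 320 * sc t0 (k + 1) = 20 * sc t0 k := fun k => by rw [sc_succ]; ring
      simp only [e] at this
      refine this.trans ?_
      have h1 := htp 0
      have h2 := htl4 0
      have h3 := hmono q hqZ (320 * sc t0 0) ⟨by positivity, by linarith⟩ 256
        ⟨by norm_num, by norm_num⟩ (by linarith)
      have h4 := hA.pin q hq
      linarith
    have hK' : 0 ≤ K' ∨ P = ∅ := by
      rcases P.eq_empty_or_nonempty with h | ⟨o, ho⟩
      · exact Or.inr h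
      · left
        have h1 := hball o ho (rad o) le_rfl
        have h2 : 0 ≤ ∑ q ∈ P with ‖q - o‖ < rad o, rad q ^ 2 :=
          Finset.sum_nonneg fun _ _ => by positivity
        have h3 := hA.pos o ho
        by_contra hc
        push Not at hc
        have : K' * rad o ^ 2 < 0 := mul_neg_of_neg_of_pos hc (by positivity)
        linarith
    rcases hK' with hK' | hPe
    swap
    · rw [hPe]; simp
    calc ∑ a ∈ P, rad a ^ 2 * ∑ k ∈ Finset.range N, eps2 k a
        = ∑ k ∈ Finset.range N, ∑ a ∈ P, rad a ^ 2 * eps2 k a := by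
          simp only [Finset.mul_sum]; rw [Finset.sum_comm]
      _ ≤ ∑ k ∈ Finset.range N, (40000 * C * K' * ∑ q ∈ P, rad q ^ 2 * (if q ∈ Q k then W k q else 0)
          + η * ∑ a ∈ P, rad a ^ 2) := Finset.sum_le_sum fun k _ => hk k
      _ = 40000 * C * K' * ∑ q ∈ P, rad q ^ 2 * ∑ k ∈ Finset.range N, (if q ∈ Q k then W k q else 0)
          + τ * ∑ a ∈ P, rad a ^ 2 := by
          rw [Finset.sum_add_distrib, ← Finset.mul_sum, Finset.sum_comm, Finset.sum_const,
            Finset.card_range, nsmul_eq_mul, ← mul_assoc (N:ℝ), hη, mul_div_cancel₀ _ hNp.ne']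
          simp only [Finset.mul_sum]
      _ ≤ 40000 * C * K' * ∑ q ∈ P, rad q ^ 2 * τ + τ * ∑ a ∈ P, rad a ^ 2 := by
          gcongr with q hq
          exact hT q hq
      _ = (40000 * C * K' + 1) * τ * ∑ a ∈ P, rad a ^ 2 := by
          rw [← Finset.sum_mul]; ring

end stepD


section stepD2
variable {Z : Set E4} {I : E4 → ℝ → ℝ}

lemma packing_step (hZm : MeasurableSet Z) {Λ : ℝ} {epsFn : ℝ → ℝ → ℝ → ℝ} {C : ℝ}
    (hI : IsTamingFunctionWith 2 Z I Λ epsFn C) (hZ : Z ⊆ ball (0:E4) 2) (τ K K' ρ κ s : ℝ)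
    (hτ : 0 < τ) (hK : K = 20000000) (hK' : K' = 20480 * K) (hρ : ρ = 1 / 10 ^ 19)
    (hκ : κ = 1 / 10 ^ 62) (hs : s = 1 / 10 ^ 218)
    (hτ1 : C * τ * (4 * K' + 1) ≤ 10 ^ 6 * ρ ^ 4)
    (hτ2 : (40000 * C * K' + 1) * τ * K' ≤ s) (n : ℕ) (hn : PK Z I τ K n) :
    PK Z I τ K (n + 1) := by
  classical
  intro x0 r0 P rad hr0 hr hA hP
  have hK1 : 1 ≤ K := by rw [hK]; norm_num
  have hKp : 0 ≤ K' := by rw [hK', hK]; norm_num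
  have hρ0 : 0 < ρ := by rw [hρ]; norm_num
  have hρ1 : ρ ≤ 1 := by rw [hρ]; norm_num
  have hs0 : 0 < s := by rw [hs]; norm_num
  have hκ0 : 0 < κ := by rw [hκ]; norm_num
  have hC := hI.2.2.2.2.1
  have hmono : ∀ x ∈ Z, ∀ r₁ ∈ Set.Ioc (0:ℝ) 256, ∀ r₂ ∈ Set.Ioc (0:ℝ) 256,
      r₁ ≤ r₂ → I x r₁ ≤ I x r₂ := by
    have := hI.2.2.1
    norm_num at this ⊢
    exact this
  have ht0 : 0 < 100 * r0 := by positivity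
  have hmass : ∑ p ∈ P, rad p ^ 2 ≤ K' * r0 ^ 2 := by
    refine (apriori hn hK1 hr0 hr hA hP).trans ?_
    rw [hK']
    gcongr
    norm_num
  have hball : ∀ a ∈ P, ∀ u, rad a ≤ u → ∑ q ∈ P with ‖q - a‖ < u, rad q ^ 2 ≤ K' * u ^ 2 := by
    intro a ha u hu
    rw [hK']
    exact apriori_ball hn hK1 hr0 hr hA hP a ha u hu
  obtain ⟨L, eps2, T, he0, hep, hJ, hT, hCh⟩ := exists_eps hZm hI hZ hr0 hr hA
    (fun p hp => (hP p hp).2.2) ρ K' hρ0 hρ1 hτ hball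
  set lt : E4 → Prop := fun p => ∃ k, p ∈ actv P rad (100 * r0) ρ k ∧
      ∑ q ∈ actv P rad (100 * r0) ρ k with ‖q - p‖ < sc (100 * r0) k, rad q ^ 2 ≤
        1 / 40000 * sc (100 * r0) k ^ 2 with hlt
  set A0 := actv P rad (100 * r0) ρ 0 with hA0
  have hAP : A0 ⊆ P := actv_subset _ _ _ _ _
  set B := P.filter (fun p => ¬ p ∈ A0) with hB
  have hPA : P.filter (fun p => p ∈ A0) = A0 := by
    ext p; simp only [Finset.mem_filter]; exact ⟨fun h => h.2, fun h => ⟨hAP h, h⟩⟩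
  set Lt := A0.filter lt with hLt
  set H := A0.filter (fun p => ¬ lt p) with hH
  set G := H.filter (fun p => T p ≤ s) with hG
  set Bd := H.filter (fun p => ¬ T p ≤ s) with hBd
  have hHA : H ⊆ A0 := Finset.filter_subset _ _
  have hGH : G ⊆ H := Finset.filter_subset _ _
  have hBdH : Bd ⊆ H := Finset.filter_subset _ _
  have hBP : B ⊆ P := Finset.filter_subset _ _
  have split : ∑ p ∈ P, rad p ^ 2 = (∑ p ∈ Lt, rad p ^ 2 + (∑ p ∈ G, rad p ^ 2 + ∑ p ∈ Bd, rad p ^ 2))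
      + ∑ p ∈ B, rad p ^ 2 := by
    rw [Finset.sum_filter_add_sum_filter_not, Finset.sum_filter_add_sum_filter_not]
    have h := Finset.sum_filter_add_sum_filter_not P (fun p => p ∈ A0) (fun p => rad p ^ 2)
    rw [hPA] at h
    exact h.symm
  have b1 : ∑ p ∈ B, rad p ^ 2 ≤ 64 * r0 ^ 2 := by
    refine big_bound hZm hI hZ hr0 hr (hA.subset hBP) (x0 := x0)
      (fun p hp => ⟨(hP p (hBP hp)).1, (hP p (hBP hp)).2.2⟩) K' ?_ hτ ρ hρ0 ?_ hτ1
    · exact (Finset.sum_le_sum_of_subset_of_nonneg hBP (fun _ _ _ => by positivity)).trans hmass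
    · intro p hp
      have h1 := (Finset.mem_filter.1 hp).2
      rw [hA0, mem_actv, sc_zero] at h1
      by_contra hc
      push Not at hc
      exact h1 ⟨hBP hp, by linarith⟩
  have b2 : ∑ p ∈ Lt, rad p ^ 2 ≤ K / 4 * r0 ^ 2 :=
    light_bound hn hK1 hr0 hr hmono hA hP ρ hρ0 hρ1 Lt ((Finset.filter_subset _ _).trans hAP)
      (fun p hp => (Finset.mem_filter.1 hp).2)
  have hT0 : ∀ a, 0 ≤ T a := fun a => by simpa using hT a 0
  have b3 : ∑ p ∈ Bd, rad p ^ 2 ≤ r0 ^ 2 := by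
    have c1 : s * ∑ p ∈ Bd, rad p ^ 2 ≤ ∑ a ∈ P, rad a ^ 2 * T a := by
      rw [Finset.mul_sum]
      calc _ ≤ ∑ a ∈ Bd, rad a ^ 2 * T a := by
            apply Finset.sum_le_sum
            intro a ha
            have := (Finset.mem_filter.1 ha).2
            push Not at this
            have h2 : 0 ≤ rad a ^ 2 := by positivity
            nlinarith
        _ ≤ _ := Finset.sum_le_sum_of_subset_of_nonneg (hBdH.trans (hHA.trans hAP))
            (fun a _ _ => mul_nonneg (by positivity) (hT0 a))
    have c2 : (40000 * C * K' + 1) * τ * ∑ a ∈ P, rad a ^ 2 ≤ s * r0 ^ 2 := by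
      calc _ ≤ (40000 * C * K' + 1) * τ * (K' * r0 ^ 2) := by gcongr
        _ = (40000 * C * K' + 1) * τ * K' * r0 ^ 2 := by ring
        _ ≤ _ := by gcongr
    exact le_of_mul_le_mul_left (c1.trans (hCh.trans c2)) hs0
  have b4 : ∑ p ∈ G, rad p ^ 2 ≤ 1024 * (100 * r0) ^ 2 := by
    have HF := flat_of_planes P G rad (100 * r0) ρ (1 / 40000) K' κ s 1000 L eps2 ht0 hρ0 hρ1
      (by norm_num) hKp hκ0 (by norm_num) (by norm_num)
      (by rw [hK', hK, hρ]; norm_num) (by rw [hK', hK, hρ, hκ]; norm_num)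
      (by rw [hρ, hs, hκ]; norm_num) hA.pos hA.sep (hGH.trans hHA) hball
      (fun a _ k => he0 k a) (fun a _ k h => hep k a h)
      (fun a ha n => (hT a n).trans (Finset.mem_filter.1 ha).2)
      (by
        intro a ha k hk
        have h1 := (Finset.mem_filter.1 (hGH ha)).2
        by_contra hc
        push Not at hc
        exact h1 ⟨k, hk, hc.le⟩)
      (fun a _ k hk q hq h => hJ a k hk q hq h)
    refine HF.bound x0 ?_
    intro a ha
    have := (hP a (hAP (hHA (hGH ha)))).1
    linarith
  rw [split]
  have : 0 < r0 ^ 2 := by positivity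
  have hh : K * r0 ^ 2 = 20000000 * r0 ^ 2 := by rw [hK]
  have hh2 : K / 4 * r0 ^ 2 = 5000000 * r0 ^ 2 := by rw [hK]; ring
  rw [hh2] at b2
  rw [hh]
  nlinarith

lemma packing_base {τ : ℝ} : PK Z I τ 20000000 0 := by
  intro x0 r0 P rad hr0 hr hA hP
  have hrad : ∀ p ∈ P, rad p = r0 := fun p hp => by
    have := hP p hp
    apply le_antisymm this.2.2
    simpa using this.2.1
  have h := card_sep P x0 r0 r0 hr0 hr0 (fun p hp => (hP p hp).1.le)
    (fun p hp q hq hpq => (hrad p hp) ▸ hA.sep p hp q hq hpq)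
  have e : (2 * r0 + r0) ^ 4 = 81 * r0 ^ 4 := by ring
  rw [e] at h
  have h2 := le_of_mul_le_mul_right h (by positivity)
  rw [Finset.sum_congr rfl (fun p hp => by rw [hrad p hp]), Finset.sum_const, nsmul_eq_mul]
  have : 0 < r0 ^ 2 := by positivity
  nlinarith

lemma packing_all (hZm : MeasurableSet Z) {Λ : ℝ} {epsFn : ℝ → ℝ → ℝ → ℝ} {C : ℝ}
    (hI : IsTamingFunctionWith 2 Z I Λ epsFn C) (hZ : Z ⊆ ball (0:E4) 2) :
    ∃ τ > 0, ∀ n, PK Z I τ 20000000 n := by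
  have hC := hI.2.2.2.2.1
  obtain ⟨K, hK⟩ : ∃ K : ℝ, K = 20000000 := ⟨_, rfl⟩
  obtain ⟨K', hK'⟩ : ∃ K' : ℝ, K' = 20480 * K := ⟨_, rfl⟩
  obtain ⟨ρ, hρ⟩ : ∃ ρ : ℝ, ρ = 1 / 10 ^ 19 := ⟨_, rfl⟩
  obtain ⟨κ, hκ⟩ : ∃ κ : ℝ, κ = 1 / 10 ^ 62 := ⟨_, rfl⟩
  obtain ⟨s, hs⟩ : ∃ s : ℝ, s = 1 / 10 ^ 218 := ⟨_, rfl⟩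
  have hKp : 0 < K' := by rw [hK', hK]; norm_num
  have hρ0 : 0 < ρ := by rw [hρ]; norm_num
  have hs0 : 0 < s := by rw [hs]; norm_num
  set τ := min (10 ^ 6 * ρ ^ 4 / (C * (4 * K' + 1))) (s / ((40000 * C * K' + 1) * K')) with hτd
  have hτ : 0 < τ := lt_min (by positivity) (by positivity)
  have h1 : τ ≤ 10 ^ 6 * ρ ^ 4 / (C * (4 * K' + 1)) := min_le_left _ _
  have h2 : τ ≤ s / ((40000 * C * K' + 1) * K') := min_le_right _ _
  rw [le_div_iff₀ (by positivity)] at h1 h2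
  refine ⟨τ, hτ, fun n => ?_⟩
  rw [← hK]
  induction n with
  | zero => rw [hK]; exact packing_base
  | succ m ih =>
    exact packing_step hZm hI hZ τ K K' ρ κ s hτ hK hK' hρ hκ hs (by linarith) (by linarith) m ih

end stepD2


/-- the line through `a` with direction `e` -/
def lin (a e : E4) : AffineSubspace ℝ E4 := AffineSubspace.mk' a (Submodule.span ℝ {e})

lemma lin_mem (a e : E4) : a ∈ lin a e := AffineSubspace.self_mem_mk' _ _

lemma lin_ne (a e : E4) : ((lin a e : AffineSubspace ℝ E4) : Set E4).Nonempty := ⟨a, lin_mem a e⟩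

lemma lin_rank (a e : E4) (he : e ≠ 0) : Module.finrank ℝ (lin a e).direction = 1 := by
  unfold lin
  rw [AffineSubspace.direction_mk']
  exact finrank_span_singleton he

lemma lin_infDist (a e z : E4) (t : ℝ) :
    Metric.infDist z ((lin a e : AffineSubspace ℝ E4) : Set E4) ≤ ‖z - (a + t • e)‖ := by
  rw [← dist_eq_norm]
  apply Metric.infDist_le_dist_of_mem
  show a + t • e ∈ lin a e
  unfold lin
  rw [AffineSubspace.mem_mk', vsub_eq_sub, add_sub_cancel_left]
  exact Submodule.smul_mem _ _ (Submodule.mem_span_singleton_self e)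

lemma exists_e : ∃ e : E4, e ≠ 0 := exists_ne 0

lemma three_pts (S : Set E4) (ε : ℝ) (hε : 0 < ε)
    (h : ¬ ∃ V : AffineSubspace ℝ E4, (V : Set E4).Nonempty ∧ Module.finrank ℝ V.direction = 1 ∧
      ∀ z ∈ S, Metric.infDist z (V : Set E4) ≤ ε) :
    ∃ a ∈ S, ∃ b ∈ S, ∃ c ∈ S, ε ≤ ‖b - a‖ ∧ ∀ t : ℝ, ε ≤ ‖c - (a + t • (b - a))‖ := by
  obtain ⟨e, he⟩ := exists_e
  have hL : ∀ a e' : E4, e' ≠ 0 → ∃ z ∈ S, ∀ t : ℝ, ε ≤ ‖z - (a + t • e')‖ := by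
    intro a e' he'
    by_contra hc
    push Not at hc
    apply h
    refine ⟨lin a e', lin_ne _ _, lin_rank _ _ he', fun z hz => ?_⟩
    obtain ⟨t, ht⟩ := hc z hz
    exact (lin_infDist a e' z t).trans ht.le
  obtain ⟨a, ha, _⟩ := hL 0 e he
  obtain ⟨b, hb, hb2⟩ := hL a e he
  have hab : ε ≤ ‖b - a‖ := by simpa using hb2 0
  have hne : b - a ≠ 0 := by
    intro h0
    rw [h0, norm_zero] at hab
    linarith
  obtain ⟨c, hc, hc2⟩ := hL a (b - a) hne
  exact ⟨a, ha, b, hb, c, hc, hab, hc2⟩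

lemma indep_aux (u v : E4) (R : ℝ) (hR : 0 < R) (hu : R / 50 ≤ ‖u‖) (hv : ‖v‖ ≤ 2 * R)
    (h : ∀ t : ℝ, R / 50 ≤ ‖v - t • u‖) (t : ℝ) : R / 10000 ≤ ‖u - t • v‖ := by
  by_cases ht : |t| ≤ 1 / 200
  · have h1 : ‖u‖ - ‖t • v‖ ≤ ‖u - t • v‖ := norm_sub_norm_le _ _
    rw [norm_smul, Real.norm_eq_abs] at h1
    have h2 : |t| * ‖v‖ ≤ 1 / 200 * (2 * R) := by gcongr
    linarith
  · push Not at ht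
    have ht0 : t ≠ 0 := by rintro rfl; simp at ht; linarith
    have e : u - t • v = (-t) • (v - t⁻¹ • u) := by
      rw [smul_sub, smul_smul]
      have : -t * t⁻¹ = -1 := by field_simp
      rw [this]; module
    rw [e, norm_smul, norm_neg, Real.norm_eq_abs]
    have := h t⁻¹
    nlinarith [mul_le_mul ht.le this (by positivity) (abs_nonneg t)]

lemma le_infDist_line (a b c : E4) (d : ℝ) (h : ∀ t : ℝ, d ≤ ‖c - (a + t • (b - a))‖) :
    d ≤ Metric.infDist c ((affineSpan ℝ {a, b} : AffineSubspace ℝ E4) : Set E4) := by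
  rw [Metric.le_infDist ⟨a, left_mem_affineSpan_pair ℝ a b⟩]
  intro y hy
  have hle : (affineSpan ℝ {a, b} : AffineSubspace ℝ E4) ≤ lin a (b - a) := by
    apply affineSpan_pair_le_of_mem_of_mem (lin_mem _ _)
    unfold lin
    rw [AffineSubspace.mem_mk', vsub_eq_sub]
    exact Submodule.mem_span_singleton_self _
  have hy2 : y ∈ lin a (b - a) := hle hy
  unfold lin at hy2
  rw [AffineSubspace.mem_mk', vsub_eq_sub] at hy2
  obtain ⟨t, ht⟩ := Submodule.mem_span_singleton.1 hy2
  have := h t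
  rw [ht, add_sub_cancel] at this
  rw [dist_eq_norm]
  exact this

lemma indep3 (a b c x : E4) (R : ℝ) (hR : 0 < R) (ha : ‖a - x‖ ≤ R) (hb : ‖b - x‖ ≤ R)
    (hc : ‖c - x‖ ≤ R) (hab : R / 50 ≤ ‖b - a‖)
    (h : ∀ t : ℝ, R / 50 ≤ ‖c - (a + t • (b - a))‖) (j : Fin 3) :
    1 / 10000 * R ≤ Metric.infDist ((![a, b, c] : Fin 3 → E4) j)
      ((affineSpan ℝ ((![a, b, c] : Fin 3 → E4) '' ({j}ᶜ)) : AffineSubspace ℝ E4) : Set E4) := by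
  have tri : ∀ y z : E4, ‖y - x‖ ≤ R → ‖z - x‖ ≤ R → ‖y - z‖ ≤ 2 * R := by
    intro y z hy hz
    have := norm_sub_le_norm_sub_add_norm_sub y x z
    rw [norm_sub_rev x z] at this
    linarith
  have e0 : (![a, b, c] : Fin 3 → E4) '' ({0}ᶜ) = {b, c} := by
    ext y; simp [Fin.exists_fin_succ, eq_comm]
  have e1 : (![a, b, c] : Fin 3 → E4) '' ({1}ᶜ) = {a, c} := by
    ext y; simp [Fin.exists_fin_succ, eq_comm]
  have e2 : (![a, b, c] : Fin 3 → E4) '' ({2}ᶜ) = {a, b} := by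
    ext y; simp [Fin.exists_fin_succ, eq_comm]
  fin_cases j
  · show 1 / 10000 * R ≤ Metric.infDist a
      ((affineSpan ℝ ((![a, b, c] : Fin 3 → E4) '' ({0}ᶜ)) : AffineSubspace ℝ E4) : Set E4)
    rw [e0]
    apply le_infDist_line
    intro t
    have := indep_aux (a - b) (c - b) R hR (by rw [norm_sub_rev]; exact hab) (tri c b hc hb) (by
      intro t
      have := h (1 - t)
      convert this using 2
      module) t
    convert this using 1
    · ring
    · congr 1; module
  · show 1 / 10000 * R ≤ Metric.infDist b
      ((affineSpan ℝ ((![a, b, c] : Fin 3 → E4) '' ({1}ᶜ)) : AffineSubspace ℝ E4) : Set E4)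
    rw [e1]
    apply le_infDist_line
    intro t
    have := indep_aux (b - a) (c - a) R hR hab (tri c a hc ha) (by
      intro t
      have := h t
      convert this using 2
      module) t
    convert this using 1
    · ring
    · congr 1; module
  · show 1 / 10000 * R ≤ Metric.infDist c
      ((affineSpan ℝ ((![a, b, c] : Fin 3 → E4) '' ({2}ᶜ)) : AffineSubspace ℝ E4) : Set E4)
    rw [e2]
    apply le_infDist_line
    intro t
    have := h t
    linarith

/-- the alternative (2) in the covering -/
def BadB (Z : Set E4) (I : E4 → ℝ → ℝ) (Λ δ : ℝ) (p : E4) (t : ℝ) : Prop :=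
  ∃ V : AffineSubspace ℝ E4, (V : Set E4).Nonempty ∧
    Module.finrank ℝ V.direction = 1 ∧
    ∀ z ∈ (ball (0:E4) 1 ∩ {z | z ∈ Z ∧ Λ - δ ≤ I z ((1/10) * t / 2)}) ∩ ball p t,
      Metric.infDist z (V : Set E4) ≤ 2 * (1/100) * t

lemma pin_of_not_bad {Z : Set E4} (hZ : Z ⊆ ball (0:E4) 2) {I : E4 → ℝ → ℝ} {Λ : ℝ}
    {epsFn : ℝ → ℝ → ℝ → ℝ} {C : ℝ} (hI : IsTamingFunctionWith 2 Z I Λ epsFn C) (τ δ : ℝ)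
    (hτ : 0 < τ) (hδ : δ < epsFn (1/10) (1/10000) (τ / 2)) (hδ2 : δ ≤ τ / 2)
    (p : E4) (hp : p ∈ Z) (R : ℝ) (hR : 0 < R) (hR2 : R ≤ 2) (hb : ¬ BadB Z I Λ δ p R) :
    I p 256 - I p (R / 10 / 2) ≤ τ := by
  obtain ⟨a, ha, b, hb, c, hc, hab, h⟩ := three_pts _ (2 * (1/100) * R) (by positivity) hb
  obtain ⟨hΛ, -, -, hpin, -⟩ := hI
  have hpr := (hpin (1/10) ⟨by norm_num, by norm_num⟩ (1/10000) ⟨by norm_num, by norm_num⟩ (τ / 2)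
    (by positivity)).2 p (hZ hp) R ⟨hR, hR2⟩ ![a, b, c]
  have eR : 2 * (1/100) * R = R / 50 := by ring
  rw [eR] at hab h
  have hcl : ∀ z ∈ (ball (0:E4) 1 ∩ {z | z ∈ Z ∧ Λ - δ ≤ I z ((1/10) * R / 2)}) ∩ ball p R,
      z ∈ Z ∩ closedBall p R := fun z hz => ⟨hz.1.2.1, ball_subset_closedBall hz.2⟩
  have hno : ∀ z ∈ (ball (0:E4) 1 ∩ {z | z ∈ Z ∧ Λ - δ ≤ I z ((1/10) * R / 2)}) ∩ ball p R,
      ‖z - p‖ ≤ R := fun z hz => by rw [← dist_eq_norm]; exact (hcl z hz).2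
  have hep : ∀ z ∈ (ball (0:E4) 1 ∩ {z | z ∈ Z ∧ Λ - δ ≤ I z ((1/10) * R / 2)}) ∩ ball p R,
      I z (2 * R) - I z ((1/10) * R / 2) < epsFn (1/10) (1/10000) (τ / 2) := fun z hz => by
    have h1 := (hΛ z hz.1.2.1 (2 * R) ⟨by positivity, by linarith⟩).2
    have h2 := hz.1.2.2
    linarith
  have := hpr (by intro i; fin_cases i; exacts [hcl a ha, hcl b hb, hcl c hc])
    (indep3 a b c p R hR (hno a ha) (hno b hb) (hno c hc) hab h)
    (by intro i; fin_cases i; exacts [hep a ha, hep b hb, hep c hc])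
    p ⟨hp, mem_closedBall_self hR.le⟩ a (hcl a ha)
  have h1 := (abs_lt.1 this).1
  have h2 := ha.1.2.2
  have h3 := (hΛ p hp 256 ⟨by norm_num, by norm_num⟩).2
  have e : R / 10 / 2 = (1/10) * R / 2 := by ring
  rw [e]
  linarith

lemma cover_small {Z : Set E4} (hZ : Z ⊆ ball (0:E4) 2) {I : E4 → ℝ → ℝ} {Λ : ℝ}
    {epsFn : ℝ → ℝ → ℝ → ℝ} {C : ℝ} (hI : IsTamingFunctionWith 2 Z I Λ epsFn C) (τ δ K : ℝ)
    (hτ : 0 < τ) (hδ : δ < epsFn (1/10) (1/10000) (τ / 2)) (hδ2 : δ ≤ τ / 2)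
    (hPK : ∀ n, PK Z I τ K n) (x : E4) (r : ℝ) (hr : 0 < r) (hr1 : r ≤ 1 / 250) (s : ℝ)
    (hs : 0 < s) (hsr : s < r) :
    ∃ (S : Finset E4) (u : E4 → ℝ), (Z ∩ ball x r ⊆ ⋃ p ∈ S, ball p (u p)) ∧
      (∀ p ∈ S, (1/10) * s ≤ u p) ∧ (∀ p ∈ S, u p ≤ s ∨ BadB Z I Λ δ p (u p)) ∧
      ∑ p ∈ S, u p ^ 2 ≤ (K + 81) * r ^ 2 := by
  classical
  set R : ℕ → ℝ := fun k => r / 10 ^ k with hRd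
  have hRp : ∀ k, 0 < R k := fun k => by simp only [hRd]; positivity
  have hR0 : R 0 = r := by simp [hRd]
  have hRs : ∀ k, R (k + 1) = R k / 10 := fun k => by simp only [hRd]; rw [pow_succ]; field_simp
  have hRanti : Antitone R := antitone_nat_of_succ_le fun k => by
    rw [hRs]; linarith [hRp k]
  have hex : ∃ k, R k ≤ s := by
    obtain ⟨k, hk⟩ := pow_unbounded_of_one_lt (r / s) (by norm_num : (1:ℝ) < 10)
    refine ⟨k, ?_⟩
    simp only [hRd]
    rw [div_le_iff₀ (by positivity)]
    rw [div_lt_iff₀ hs] at hk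
    linarith
  obtain ⟨N, hN1, hN2⟩ : ∃ N, R N ≤ s ∧ s ≤ 10 * R N := by
    refine ⟨Nat.find hex, Nat.find_spec hex, ?_⟩
    have hne : Nat.find hex ≠ 0 := by
      intro h0
      have := Nat.find_spec hex
      rw [h0, hR0] at this
      linarith
    obtain ⟨m, hm⟩ := Nat.exists_eq_succ_of_ne_zero hne
    have := Nat.find_min hex (m := m) (by omega)
    push Not at this
    rw [hm, Nat.succ_eq_add_one, hRs]
    linarith
  have hexk : ∀ p, ∃ k, k = N ∨ BadB Z I Λ δ p (R k) := fun p => ⟨N, Or.inl rfl⟩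
  set kk : E4 → ℕ := fun p => Nat.find (hexk p) with hkk
  have hkN : ∀ p, kk p ≤ N := fun p => Nat.find_le (Or.inl rfl)
  have hks : ∀ p, kk p = N ∨ BadB Z I Λ δ p (R (kk p)) := fun p => Nat.find_spec (hexk p)
  have hkm : ∀ p k, k < kk p → ¬ BadB Z I Λ δ p (R k) := fun p k hk h =>
    Nat.find_min (hexk p) hk (Or.inr h)
  set u : E4 → ℝ := fun p => R (kk p) with hu
  have hup : ∀ p, 0 < u p := fun p => hRp _
  have hur : ∀ p, u p ≤ r := fun p => by rw [← hR0]; exact hRanti (Nat.zero_le _)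
  have huN : ∀ p, R N ≤ u p := fun p => hRanti (hkN p)
  obtain ⟨S', h1, h2, h3⟩ := greedy ⌈(2 * r + R N) ^ 4 / R N ^ 4⌉₊ (Z ∩ ball x r) u (R N) (hRp N)
    (fun p _ => huN p)
    ((Set.finite_Iic N).image R |>.subset (by
      rintro _ ⟨p, _, rfl⟩
      exact ⟨kk p, hkN p, rfl⟩))
    (by
      intro F hF hd
      have := card_sep F x (R N) r (hRp N) hr (fun p hp => by
        rw [← dist_eq_norm]; exact (mem_ball.1 (hF hp).2).le)
        (fun p hp q hq hpq => by rw [← dist_eq_norm]; exact hd p hp q hq hpq)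
      have hp4 : 0 < R N ^ 4 := by have := hRp N; positivity
      rw [← le_div_iff₀ hp4] at this
      exact_mod_cast this.trans (Nat.le_ceil _))
  refine ⟨S', u, ?_, ?_, ?_, ?_⟩
  · intro p hp
    obtain ⟨q, hq, _, hd⟩ := h3 p hp
    simp only [Set.mem_iUnion]
    exact ⟨q, hq, hd⟩
  · intro p _
    have := huN p
    linarith
  · intro p _
    rcases hks p with h | h
    · left
      simp only [hu]; rw [h]; exact hN1
    · right; exact h
  · have hS'x : ∀ p ∈ S', ‖p - x‖ < r := fun p hp => by
      rw [← dist_eq_norm]; exact mem_ball.1 (h1 hp).2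
    have hsep : ∀ p ∈ S', ∀ q ∈ S', p ≠ q → u p ≤ ‖p - q‖ := fun p hp q hq hpq => by
      rw [← dist_eq_norm]; exact h2 p hp q hq hpq
    rw [← Finset.sum_filter_add_sum_filter_not S' (fun p => kk p = 0)]
    have b1 : ∑ p ∈ S' with kk p = 0, u p ^ 2 ≤ 81 * r ^ 2 := by
      have hur : ∀ p ∈ S'.filter (fun p => kk p = 0), u p = r := by
        intro p hp
        simp only [hu]
        rw [(Finset.mem_filter.1 hp).2, hR0]
      have h := card_sep (S'.filter (fun p => kk p = 0)) x r r hr hr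
        (fun p hp => (hS'x p (Finset.mem_filter.1 hp).1).le)
        (fun p hp q hq hpq => (hur p hp) ▸ hsep p (Finset.mem_filter.1 hp).1 q
          (Finset.mem_filter.1 hq).1 hpq)
      have e : (2 * r + r) ^ 4 = 81 * r ^ 4 := by ring
      rw [e] at h
      have h2 := le_of_mul_le_mul_right h (by positivity)
      rw [Finset.sum_congr rfl (fun p hp => by rw [hur p hp]), Finset.sum_const, nsmul_eq_mul]
      gcongr
    have b2 : ∑ p ∈ S' with ¬ kk p = 0, u p ^ 2 ≤ K * r ^ 2 := by
      refine hPK (4 * N) x r _ u hr hr1 ⟨?_, ?_, ?_, ?_⟩ ?_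
      · exact fun p hp => (h1 (Finset.mem_filter.1 hp).1).1
      · exact fun p _ => hup p
      · intro p hp
        rw [Finset.mem_filter] at hp
        obtain ⟨m, hm⟩ := Nat.exists_eq_succ_of_ne_zero hp.2
        have := pin_of_not_bad hZ hI τ δ hτ hδ hδ2 p (h1 hp.1).1 (R m) (hRp m) (by
          have : R m ≤ R 0 := hRanti (Nat.zero_le _)
          rw [hR0] at this; linarith) (hkm p m (by omega))
        simp only [hu]
        rw [hm, Nat.succ_eq_add_one, hRs]
        exact this
      · exact fun p hp q hq => hsep p (Finset.mem_filter.1 hp).1 q (Finset.mem_filter.1 hq).1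
      · intro p hp
        rw [Finset.mem_filter] at hp
        refine ⟨hS'x p hp.1, ?_, hur p⟩
        refine le_trans ?_ (huN p)
        simp only [hRd]
        have e : r / 10 ^ N = ((1:ℝ) / 10) ^ N * r := by rw [one_div, inv_pow]; field_simp
        rw [e, pow_mul]
        gcongr
        norm_num
    linarith

/-- Covering lemma (Lemma 9.5 of the paper): `s`-admissible coverings exist. -/
theorem stmt_5 (Z : Set E4) (hZm : MeasurableSet Z) (hZ : Z ⊆ ball (0:E4) 2)
    (I : E4 → ℝ → ℝ) (Λ : ℝ) (epsFn : ℝ → ℝ → ℝ → ℝ) (C : ℝ)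
    (hI : IsTamingFunctionWith 2 Z I Λ epsFn C) :
    ∃ K₁ > (1:ℝ), ∃ β' ∈ Set.Ioc (0:ℝ) (1/100), ∃ δ > (0:ℝ),
      ∀ (x : E4) (r : ℝ), 0 < r → ball x r ⊆ ball (0:E4) 2 →
      ∀ s ∈ Set.Ioo (0:ℝ) r,
      ∃ (n : ℕ) (c : Fin n → E4) (ρ : Fin n → ℝ),
        -- the balls cover Z ∩ B_x(r)
        (Z ∩ ball x r ⊆ ⋃ i, ball (c i) (ρ i)) ∧
        -- (1) each radius is at least βs, with β = 1/10
        (∀ i, (1/10) * s ≤ ρ i) ∧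
        -- (2) either r_i ≤ s, or B_{x_i}(r_i) ∩ D_δ(r_i) lies in the 2β̄r_i-neighborhood
        -- of a 1-dimensional affine subspace, where
        -- D_δ(t) = B(1) ∩ {z ∈ Z : I(z, βt/2) ≥ Λ − δ}
        (∀ i, ρ i ≤ s ∨
          ∃ V : AffineSubspace ℝ E4, (V : Set E4).Nonempty ∧
            Module.finrank ℝ V.direction = 1 ∧
            ∀ z ∈ (ball (0:E4) 1 ∩ {z | z ∈ Z ∧ Λ - δ ≤ I z ((1/10) * ρ i / 2)})
                ∩ ball (c i) (ρ i),
              Metric.infDist z (V : Set E4) ≤ 2 * β' * ρ i) ∧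
        -- (3) bounded 2-dimensional volume
        (∑ i, (ρ i) ^ 2 ≤ K₁ * r ^ 2) := by
  obtain ⟨τ, hτ, hPK⟩ := packing_all hZm hI hZ
  have hε := (hI.2.2.2.1 (1/10) ⟨by norm_num, by norm_num⟩ (1/10000) ⟨by norm_num, by norm_num⟩
    (τ / 2) (by positivity)).1
  set ε := epsFn (1/10) (1/10000) (τ / 2) with hεd
  have hδ : min (ε / 2) (τ / 2) < ε := lt_of_le_of_lt (min_le_left _ _) (by linarith)
  refine ⟨625050001, by norm_num, 1/100, ⟨by norm_num, le_refl _⟩, min (ε / 2) (τ / 2),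
    lt_min (by positivity) (by positivity), ?_⟩
  intro x r hr _ s hs
  by_cases hr1 : r ≤ 1 / 250
  · obtain ⟨S, u, h1, h2, h3, h4⟩ := cover_small hZ hI τ (min (ε / 2) (τ / 2)) 20000000 hτ hδ
      (min_le_right _ _) hPK x r hr hr1 s hs.1 hs.2
    refine ⟨S.card, fun i => (S.equivFin.symm i : E4), fun i => u (S.equivFin.symm i), ?_, ?_, ?_, ?_⟩
    · intro p hp
      obtain ⟨q, hq, hd⟩ := Set.mem_iUnion₂.1 (h1 hp)
      refine Set.mem_iUnion.2 ⟨S.equivFin ⟨q, hq⟩, ?_⟩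
      simpa using hd
    · intro i
      exact h2 _ (S.equivFin.symm i).2
    · intro i
      exact h3 _ (S.equivFin.symm i).2
    · have e : ∑ i, u (S.equivFin.symm i : E4) ^ 2 = ∑ p ∈ S, u p ^ 2 := by
        rw [← Finset.sum_coe_sort S (fun p => u p ^ 2)]
        exact Equiv.sum_comp S.equivFin.symm (fun p : S => u p ^ 2)
      rw [e]
      refine h4.trans ?_
      gcongr
      norm_num
  · push Not at hr1
    obtain ⟨e, he⟩ := exists_e
    refine ⟨1, fun _ => 0, fun _ => 100 + r, ?_, ?_, ?_, ?_⟩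
    · intro p hp
      refine Set.mem_iUnion.2 ⟨0, ?_⟩
      exact ball_subset_ball (by linarith) (hZ hp.1)
    · intro _
      have := hs.1
      have := hs.2
      linarith
    · intro _
      right
      refine ⟨lin 0 e, lin_ne _ _, lin_rank _ _ he, ?_⟩
      intro z hz
      have h1 : dist z 0 < 1 := hz.1.1
      have h2 := Metric.infDist_le_dist_of_mem (x := z) (lin_mem 0 e)
      have h3 : Metric.infDist z ((lin 0 e : AffineSubspace ℝ E4) : Set E4) ≤ dist z 0 := h2
      linarith
    · simp only [Finset.univ_unique, Finset.sum_singleton]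
      nlinarith
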